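/- arXiv:2307.03350 — 2 statements merged into one kernel-verified Lean document; each statement's English description precedes it below -/
import Mathlib

section
/- Let p > 0, let λ be a Koshliakov sequence for p, let x > 0, and let s ∈ ℂ with Re(s) > 1/2. Then (2^{1−2s}·x^{s−1/2}·π^{−s}/Γ(s))·∑_{m=1}^∞ ∫₀^∞ ∫₀^1 y^{2s−1}·e^{−xy}·(1 − u²)^{s−1}·cos(myu + 2m·arctan(yu/(2πp))) du dy = ∑_{n=1}^∞ w_n·λ_n^{s−1/2}·K_{s−1/2}(2πλ_n x) + ((πx)^{1/2−s}/4)·Γ(s − 1/2)/(1 + 1/(πp)) − π^{−s}·x^{−s−1/2}·Γ(s)/4. -/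
/-!
Put `F(v) = ∫₀^∞ r^{-s-1/2} e^{-x²/(4r) - v² r} dr` (`gaussMix`). The subordination identity
`√π e^{-xy} / y = ∫₀^∞ r^{-1/2} e^{-x²/(4r) - y² r} dr` and Fubini give
`∫_v^∞ e^{-xy} (y² - v²)^{s-1} dy = Γ(s) / (2√π) · F(v)` (`bessel_as_gaussMix`). Both sides of the
formula are therefore expressed through `F`:

* substituting `v = yu`, the `m`-th double integral is `Γ(s) / (2√π) · ∫₀^∞ F(v) cos(m φ(v)) dv` with
  the phase `φ(v) = v + 2 arctan(v / (2πp))` (`double_integral`);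
* `λ_n^{s-1/2} K_{s-1/2}(2πλ_n x)` is an explicit multiple of `F(2πλ_n)` (`besselK_eq_gaussMix`).

The phase is an odd increasing bijection of `ℝ`. The equation `tan(πλ_n) = -λ_n / p` together with
`n - 1/2 < λ_n < n` says that `φ(2πλ_n) = 2πn`, and `1 / φ'(2πλ_n) = w_n`. So the identity is Poisson
summation for `f(t) = 2π F(g t) / φ'(g t)`, where `g t = φ⁻¹(2πt)` (`poisson_phase`). The zeroth value
`f(0)` produces the term with `Γ(s - 1/2)`, and the zeroth Fourier coefficient `∫ F` the term with
`Γ(s)`.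

Poisson summation needs the Fourier coefficients `∫ F(v) e^{-imφ(v)} dv` to be summable
(`fourier_decay`). For a single Gaussian `e^{-r v²}` there is the trivial bound `O(r^{-1/2})` and,
after two integrations by parts, the bound `O((1 + r) r^{-1/2} / m²)` (`osc_bound`). Interpolating
with exponent `θ = 1/2 + ε`, where `0 < ε < Re s - 1/2`, keeps the `r`-integral convergent and gives
`O(|m|^{-1-2ε})`.
-/

/-- The modified Bessel function of the second kind `K_ν(z)` for real `z > 0` and
complex order `ν` with `Re ν > -1/2`, defined by its standard integral representation. -/
noncomputable def besselK (ν : ℂ) (z : ℝ) : ℂ :=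
  (Real.sqrt Real.pi : ℂ) * ((z / 2 : ℝ) : ℂ) ^ ν / Complex.Gamma (ν + 1 / 2) *
    ∫ t in Set.Ioi (1 : ℝ), Complex.exp (-(z * t)) * ((t ^ 2 - 1 : ℝ) : ℂ) ^ (ν - 1 / 2)

open MeasureTheory Set Filter Topology

/-! ### Inverse-gamma integrals and subordination -/

theorem integrableOn_invGamma {b k : ℝ} (hb : 0 < b) (hk : 0 < k) :
    IntegrableOn (fun r : ℝ => r ^ (-b - 1) * Real.exp (-(k * r⁻¹))) (Ioi 0) := by
  have h := (integrableOn_Ioi_comp_rpow_iff (fun t : ℝ => t ^ (b - 1) * Real.exp (-(k * t)))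
    (p := -1) (by norm_num)).2 (by
      have := integrableOn_rpow_mul_exp_neg_mul_rpow (s := b - 1) (p := 1) (b := k)
        (by linarith) one_pos hk
      simpa using this)
  refine h.congr_fun (fun r hr => ?_) measurableSet_Ioi
  have hr : 0 < r := hr
  simp only [abs_neg, abs_one, one_mul, smul_eq_mul, Real.rpow_neg_one]
  rw [← mul_assoc, Real.inv_rpow hr.le, ← Real.rpow_neg hr.le, ← Real.rpow_add hr]
  congr 2; ring

theorem integral_invGamma {b : ℂ} {k : ℝ} (hb : 0 < b.re) (hk : 0 < k) :
    ∫ r in Ioi (0 : ℝ), (r : ℂ) ^ (-b - 1) * (Real.exp (-(k * r⁻¹)) : ℂ) =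
      (1 / (k : ℂ)) ^ b * Complex.Gamma b := by
  rw [← Complex.integral_cpow_mul_exp_neg_mul_Ioi hb hk,
    ← integral_comp_rpow_Ioi _ (p := -1) (by norm_num)]
  refine setIntegral_congr_fun measurableSet_Ioi (fun r hr => ?_)
  have hr : 0 < r := hr
  have hr0 : (r : ℂ) ≠ 0 := by exact_mod_cast hr.ne'
  simp only [abs_neg, abs_one, one_mul, Real.rpow_neg_one, Complex.real_smul]
  rw [← mul_assoc]
  congr 1
  · rw [Complex.ofReal_cpow hr.le, Complex.ofReal_inv, Complex.inv_cpow, ← Complex.cpow_neg,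
      ← Complex.cpow_add _ _ hr0]
    · congr 1; push_cast; ring
    · rw [Complex.arg_ofReal_of_nonneg hr.le]; exact Real.pi_pos.ne
  · push_cast; rw [inv_inv]

/-- Cauchy–Schlömilch: `u = A w - B / w` maps `(0, ∞)` bijectively onto `ℝ`, and averaging the
resulting integral with its image under the involution `w ↦ B / (A w)` removes the Jacobian. -/
theorem integral_exp_neg_sq_sub {A B : ℝ} (hA : 0 < A) (hB : 0 < B) :
    IntegrableOn (fun w : ℝ => Real.exp (-(A * w - B / w) ^ 2)) (Ioi 0) ∧
    ∫ w in Ioi (0 : ℝ), Real.exp (-(A * w - B / w) ^ 2) = √Real.pi / (2 * A) := by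
  have hder : ∀ w ∈ Ioi (0 : ℝ), HasDerivWithinAt (fun w : ℝ => A * w - B / w)
      (A + B / w ^ 2) (Ioi 0) w := by
    intro w hw
    have hw0 : w ≠ 0 := (ne_of_gt hw)
    have := ((hasDerivAt_id w).const_mul A).sub ((hasDerivAt_inv hw0).const_mul B)
    refine (this.congr_deriv ?_).hasDerivWithinAt
    field_simp; ring
  have hinj : InjOn (fun w : ℝ => A * w - B / w) (Ioi 0) := by
    intro a ha b hb hab
    have ha : 0 < a := ha
    have hb : 0 < b := hb
    simp only at hab
    have h1 : (a - b) * (A * (a * b) + B) = 0 := by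
      field_simp at hab
      linarith
    rcases mul_eq_zero.1 h1 with h | h
    · linarith
    · have : 0 < A * (a * b) + B := by positivity
      linarith
  have himg : image (fun w : ℝ => A * w - B / w) (Ioi 0) = univ := by
    refine eq_univ_of_forall (fun u => ?_)
    -- positive root of `A w² - u w - B = 0`
    have hq : 0 ≤ u ^ 2 + 4 * A * B := by positivity
    have hs := Real.sq_sqrt hq
    have hlt : |u| < √(u ^ 2 + 4 * A * B) := by
      apply Real.lt_sqrt_of_sq_lt
      rw [sq_abs]; nlinarith [mul_pos hA hB]
    have hpos : 0 < u + √(u ^ 2 + 4 * A * B) := by linarith [neg_abs_le u]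
    refine ⟨(u + √(u ^ 2 + 4 * A * B)) / (2 * A), by simp only [mem_Ioi]; positivity, ?_⟩
    generalize √(u ^ 2 + 4 * A * B) = S at hs hpos
    have hne := hpos.ne'
    simp only
    rw [sub_eq_iff_eq_add]
    field_simp
    nlinarith
  have hg : Integrable (fun u : ℝ => Real.exp (-u ^ 2)) := by
    simpa using integrable_exp_neg_mul_sq (b := 1) one_pos
  have hgi : ∫ u : ℝ, Real.exp (-u ^ 2) = √Real.pi := by
    simpa using integral_gaussian 1
  have hInt := (integrableOn_image_iff_integrableOn_abs_deriv_smul measurableSet_Ioi hder hinj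
    (fun u : ℝ => Real.exp (-u ^ 2))).1 (by rw [himg]; exact hg.integrableOn)
  have hval := integral_image_eq_integral_abs_deriv_smul measurableSet_Ioi hder hinj
    (fun u : ℝ => Real.exp (-u ^ 2))
  rw [himg, setIntegral_univ, hgi] at hval
  have hmeas : Measurable (fun w : ℝ => Real.exp (-(A * w - B / w) ^ 2)) := by fun_prop
  have hI : IntegrableOn (fun w : ℝ => Real.exp (-(A * w - B / w) ^ 2)) (Ioi 0) := by
    refine (hInt.const_mul (1 / A)).mono' hmeas.aestronglyMeasurable ?_
    refine (ae_restrict_mem measurableSet_Ioi).mono (fun w hw => ?_)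
    have hw : 0 < w := hw
    rw [Real.norm_eq_abs, abs_of_pos (Real.exp_pos _), smul_eq_mul, abs_of_pos (by positivity),
      ← mul_assoc]
    refine le_mul_of_one_le_left (Real.exp_pos _).le ?_
    rw [mul_add, one_div_mul_cancel hA.ne']
    have : 0 ≤ 1 / A * (B / w ^ 2) := by positivity
    linarith
  refine ⟨hI, ?_⟩
  -- the involution `w ↦ B / (A w)`
  have hder2 : ∀ w ∈ Ioi (0 : ℝ), HasDerivWithinAt (fun w : ℝ => B / A / w)
      (-(B / A / w ^ 2)) (Ioi 0) w := by
    intro w hw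
    have hw0 : w ≠ 0 := (ne_of_gt hw)
    have := (hasDerivAt_inv hw0).const_mul (B / A)
    refine (this.congr_deriv ?_).hasDerivWithinAt
    field_simp
  have hinj2 : InjOn (fun w : ℝ => B / A / w) (Ioi 0) := by
    intro a ha b hb hab
    have ha : 0 < a := ha
    have hb : 0 < b := hb
    simp only at hab
    field_simp at hab
    linarith
  have himg2 : image (fun w : ℝ => B / A / w) (Ioi 0) = Ioi 0 := by
    ext u
    constructor
    · rintro ⟨w, hw, rfl⟩
      have hw : 0 < w := hw
      simp only [mem_Ioi]; positivity
    · intro hu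
      have hu : 0 < u := hu
      refine ⟨B / A / u, by simp only [mem_Ioi]; positivity, ?_⟩
      simp only; field_simp
  have hval2 := integral_image_eq_integral_abs_deriv_smul measurableSet_Ioi hder2 hinj2
    (fun w : ℝ => Real.exp (-(A * w - B / w) ^ 2))
  have hInt2 := (integrableOn_image_iff_integrableOn_abs_deriv_smul measurableSet_Ioi hder2 hinj2
    (fun w : ℝ => Real.exp (-(A * w - B / w) ^ 2))).1 (by rw [himg2]; exact hI)
  rw [himg2] at hval2
  have key : ∫ w in Ioi (0 : ℝ), |A + B / w ^ 2| • Real.exp (-(A * w - B / w) ^ 2) =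
      A * (∫ w in Ioi (0 : ℝ), Real.exp (-(A * w - B / w) ^ 2)) +
      A * (∫ w in Ioi (0 : ℝ), Real.exp (-(A * w - B / w) ^ 2)) := by
    nth_rewrite 2 [hval2]
    rw [← integral_const_mul, ← integral_const_mul, ← integral_add (hI.const_mul A) (hInt2.const_mul A)]
    refine setIntegral_congr_fun measurableSet_Ioi (fun w hw => ?_)
    have hw : 0 < w := hw
    have e : -(A * (B / A / w) - B / (B / A / w)) ^ 2 = -(A * w - B / w) ^ 2 := by
      field_simp; ring
    simp only [smul_eq_mul, e]
    rw [abs_of_pos (by positivity), abs_neg, abs_of_pos (by positivity)]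
    field_simp
  rw [key] at hval
  rw [eq_div_iff (by positivity)]
  linarith

/-- The exponential `e^{-xy} / y` as a mixture of the Gaussians `e^{-y² r}`, obtained from
`integral_exp_neg_sq_sub` by `r = w²`. -/
theorem subordination {x y : ℝ} (hx : 0 < x) (hy : 0 < y) :
    ∫ r in Ioi (0 : ℝ), r ^ (-1 / 2 : ℝ) * Real.exp (-(x ^ 2 / 4 * r⁻¹)) * Real.exp (-(y ^ 2 * r)) =
      √Real.pi * Real.exp (-(x * y)) / y := by
  rw [← integral_comp_rpow_Ioi _ (p := 2) (by norm_num)]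
  have h := (integral_exp_neg_sq_sub hy (half_pos hx)).2
  have : ∫ w in Ioi (0 : ℝ), (2 * Real.exp (-(x * y))) * Real.exp (-(y * w - x / 2 / w) ^ 2) =
      √Real.pi * Real.exp (-(x * y)) / y := by
    rw [integral_const_mul, h]; field_simp
  rw [← this]
  refine setIntegral_congr_fun measurableSet_Ioi (fun w hw => ?_)
  have hw : 0 < w := hw
  simp only [smul_eq_mul]
  rw [← Real.rpow_mul hw.le]
  norm_num
  rw [Real.rpow_neg_one]
  rw [show 2 * w * (w⁻¹ * Real.exp (-(x ^ 2 / 4 * (w ^ 2)⁻¹)) * Real.exp (-(y ^ 2 * w ^ 2))) =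
    2 * (Real.exp (-(x ^ 2 / 4 * (w ^ 2)⁻¹)) * Real.exp (-(y ^ 2 * w ^ 2))) by field_simp,
    ← Real.exp_add, mul_assoc, ← Real.exp_add]
  congr 2
  field_simp; ring

/-! ### The Gaussian mixture and the Bessel integral -/

/-- The Gaussian mixture `F(v) = ∫₀^∞ r^{-s-1/2} e^{-x²/(4r)} e^{-v² r} dr`. Up to a constant it is
`v^{s-1/2} K_{s-1/2}(v x)`, but unlike that expression it is also regular at `v = 0`. -/
noncomputable def gaussMix (s : ℂ) (x v : ℝ) : ℂ :=
  ∫ r in Ioi (0 : ℝ), (r : ℂ) ^ (-(s - 1 / 2) - 1) * (Real.exp (-(x ^ 2 / 4 * r⁻¹)) : ℂ) *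
    (Real.exp (-(v ^ 2 * r)) : ℂ)

theorem sq_sub_sq_subst {E : Type*} [NormedAddCommGroup E] [NormedSpace ℝ E] {v : ℝ} (hv : 0 ≤ v)
    (g : ℝ → E) :
    (IntegrableOn g (Ioi 0) ↔ IntegrableOn (fun y => (2 * y) • g (y ^ 2 - v ^ 2)) (Ioi v)) ∧
    ∫ t in Ioi 0, g t = ∫ y in Ioi v, (2 * y) • g (y ^ 2 - v ^ 2) := by
  have hder : ∀ y ∈ Ioi v, HasDerivWithinAt (fun y : ℝ => y ^ 2 - v ^ 2) (2 * y) (Ioi v) y := by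
    intro y _
    have := ((hasDerivAt_id y).pow 2).sub_const (v ^ 2)
    refine (this.congr_deriv ?_).hasDerivWithinAt
    simp
  have hinj : InjOn (fun y : ℝ => y ^ 2 - v ^ 2) (Ioi v) := by
    intro a ha b hb hab
    have ha : v < a := ha
    have hb : v < b := hb
    simp only at hab
    nlinarith
  have himg : image (fun y : ℝ => y ^ 2 - v ^ 2) (Ioi v) = Ioi 0 := by
    ext t
    constructor
    · rintro ⟨y, hy, rfl⟩
      have hy : v < y := hy
      simp only [mem_Ioi]; nlinarith
    · intro ht
      have ht : 0 < t := ht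
      refine ⟨√(t + v ^ 2), ?_, ?_⟩
      · exact Real.lt_sqrt_of_sq_lt (by linarith)
      · simp only; rw [Real.sq_sqrt (by positivity)]; ring
  have habs : ∀ y ∈ Ioi v, |2 * y| • g (y ^ 2 - v ^ 2) = (2 * y) • g (y ^ 2 - v ^ 2) := by
    intro y hy
    have hy : v < y := hy
    rw [abs_of_pos (by linarith)]
  constructor
  · have := integrableOn_image_iff_integrableOn_abs_deriv_smul measurableSet_Ioi hder hinj g
    rw [himg] at this
    rw [this]
    exact integrableOn_congr_fun habs measurableSet_Ioi
  · have := integral_image_eq_integral_abs_deriv_smul measurableSet_Ioi hder hinj g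
    rw [himg] at this
    rw [this]
    exact setIntegral_congr_fun measurableSet_Ioi habs

theorem shifted_gamma {v r : ℝ} (hv : 0 ≤ v) (hr : 0 < r) {s : ℂ} (hs : 0 < s.re) :
    ∫ y in Ioi v, (y : ℂ) * ((y ^ 2 - v ^ 2 : ℝ) : ℂ) ^ (s - 1) * (Real.exp (-(y ^ 2 * r)) : ℂ) =
      Complex.Gamma s / 2 * (r : ℂ) ^ (-s) * (Real.exp (-(v ^ 2 * r)) : ℂ) := by
  have h := (sq_sub_sq_subst hv (fun t : ℝ => (t : ℂ) ^ (s - 1) * Complex.exp (-(r * t)))).2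
  rw [Complex.integral_cpow_mul_exp_neg_mul_Ioi hs hr] at h
  have e : ∀ y : ℝ, (y : ℂ) * ((y ^ 2 - v ^ 2 : ℝ) : ℂ) ^ (s - 1) * (Real.exp (-(y ^ 2 * r)) : ℂ) =
      ((Real.exp (-(v ^ 2 * r)) : ℂ) / 2) * ((2 * y : ℝ) • (((y ^ 2 - v ^ 2 : ℝ) : ℂ) ^ (s - 1) *
        Complex.exp (-(r * (y ^ 2 - v ^ 2 : ℝ))))) := by
    intro y
    have : (Real.exp (-(y ^ 2 * r)) : ℂ) = (Real.exp (-(v ^ 2 * r)) : ℂ) *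
        Complex.exp (-(r * (y ^ 2 - v ^ 2 : ℝ))) := by
      push_cast
      rw [← Complex.exp_add]; congr 1; ring
    rw [this, Complex.real_smul]
    push_cast; ring
  simp_rw [e]
  rw [integral_const_mul, ← h, one_div, Complex.inv_cpow, Complex.cpow_neg]
  · ring
  · rw [Complex.arg_ofReal_of_nonneg hr.le]; exact Real.pi_pos.ne

theorem shifted_gamma_real {v r a : ℝ} (hv : 0 ≤ v) (hr : 0 < r) (ha : 0 < a) :
    IntegrableOn (fun y => y * (y ^ 2 - v ^ 2) ^ (a - 1) * Real.exp (-(y ^ 2 * r))) (Ioi v) ∧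
    ∫ y in Ioi v, y * (y ^ 2 - v ^ 2) ^ (a - 1) * Real.exp (-(y ^ 2 * r)) =
      Real.Gamma a / 2 * r ^ (-a) * Real.exp (-(v ^ 2 * r)) := by
  have h := sq_sub_sq_subst hv (fun t : ℝ => t ^ (a - 1) * Real.exp (-(r * t)))
  have e : ∀ y : ℝ, y * (y ^ 2 - v ^ 2) ^ (a - 1) * Real.exp (-(y ^ 2 * r)) =
      (Real.exp (-(v ^ 2 * r)) / 2) * ((2 * y : ℝ) • ((y ^ 2 - v ^ 2) ^ (a - 1) *
        Real.exp (-(r * (y ^ 2 - v ^ 2))))) := by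
    intro y
    have : Real.exp (-(y ^ 2 * r)) = Real.exp (-(v ^ 2 * r)) *
        Real.exp (-(r * (y ^ 2 - v ^ 2))) := by
      rw [← Real.exp_add]; congr 1; ring
    rw [this, smul_eq_mul]
    ring
  simp_rw [e]
  constructor
  · refine (h.1.1 ?_).const_mul _
    have := integrableOn_rpow_mul_exp_neg_mul_rpow (s := a - 1) (p := 1) (b := r)
        (by linarith) one_pos hr
    simpa using this
  · rw [integral_const_mul, ← h.2, Real.integral_rpow_mul_exp_neg_mul_Ioi ha hr, one_div,
      Real.inv_rpow hr.le, Real.rpow_neg hr.le]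
    ring

/-- The Bessel-type integral as a Gaussian mixture: insert `subordination` for `e^{-xy}`, exchange
the integrals, and evaluate the `y`-integral by `shifted_gamma`. -/
theorem bessel_as_gaussMix {s : ℂ} (hs : 1 / 2 < s.re) {x v : ℝ} (hx : 0 < x) (hv : 0 ≤ v) :
    ∫ y in Ioi v, (Real.exp (-(x * y)) : ℂ) * ((y ^ 2 - v ^ 2 : ℝ) : ℂ) ^ (s - 1) =
      Complex.Gamma s / (2 * (√Real.pi : ℂ)) * gaussMix s x v := by
  have hpi : (√Real.pi : ℂ) ≠ 0 := by
    exact_mod_cast (Real.sqrt_pos.2 Real.pi_pos).ne'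
  let H : ℝ → ℝ → ℂ := fun y r => (y : ℂ) * ((y ^ 2 - v ^ 2 : ℝ) : ℂ) ^ (s - 1) *
    (Real.exp (-(y ^ 2 * r)) : ℂ) * ((r ^ (-1 / 2 : ℝ) * Real.exp (-(x ^ 2 / 4 * r⁻¹)) : ℝ) : ℂ)
  have hnorm : ∀ y ∈ Ioi v, ∀ r ∈ Ioi (0 : ℝ), ‖H y r‖ =
      (y * (y ^ 2 - v ^ 2) ^ (s.re - 1) * Real.exp (-(y ^ 2 * r))) *
        (r ^ (-1 / 2 : ℝ) * Real.exp (-(x ^ 2 / 4 * r⁻¹))) := by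
    intro y hy r hr
    have hy : v < y := hy
    have hr : 0 < r := hr
    simp only [H, norm_mul, Complex.norm_real, Real.norm_eq_abs]
    rw [Complex.norm_cpow_eq_rpow_re_of_pos (by nlinarith), abs_of_pos (by linarith : 0 < y),
      abs_of_pos (Real.exp_pos _), abs_of_pos (Real.exp_pos _), abs_of_pos (by positivity)]
    simp
  have hmeas : Measurable (Function.uncurry H) := by
    simp only [H, Function.uncurry_def]
    fun_prop
  have hInt : Integrable (Function.uncurry H)
      ((volume.restrict (Ioi v)).prod (volume.restrict (Ioi 0))) := by
    rw [integrable_prod_iff' hmeas.aestronglyMeasurable]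
    constructor
    · refine (ae_restrict_mem measurableSet_Ioi).mono (fun r hr => ?_)
      have h := ((shifted_gamma_real (a := s.re) hv hr (by linarith)).1).mul_const
        (r ^ (-1 / 2 : ℝ) * Real.exp (-(x ^ 2 / 4 * r⁻¹)))
      refine h.mono' (hmeas.comp measurable_prodMk_right).aestronglyMeasurable ?_
      refine (ae_restrict_mem measurableSet_Ioi).mono (fun y hy => ?_)
      exact (hnorm y hy r hr).le
    · have hb := (integrableOn_invGamma (b := s.re - 1 / 2) (k := x ^ 2 / 4) (by linarith)
        (by positivity)).const_mul (Real.Gamma s.re / 2)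
      refine hb.mono' (hmeas.norm.stronglyMeasurable.integral_prod_left').aestronglyMeasurable ?_
      refine (ae_restrict_mem measurableSet_Ioi).mono (fun r hr => ?_)
      have hr' : 0 < r := hr
      rw [Real.norm_of_nonneg (integral_nonneg (fun _ => norm_nonneg _))]
      have e : ∫ y in Ioi v, ‖Function.uncurry H (y, r)‖ =
          (∫ y in Ioi v, y * (y ^ 2 - v ^ 2) ^ (s.re - 1) * Real.exp (-(y ^ 2 * r))) *
            (r ^ (-1 / 2 : ℝ) * Real.exp (-(x ^ 2 / 4 * r⁻¹))) := by
        rw [← integral_mul_const]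
        exact setIntegral_congr_fun measurableSet_Ioi (fun y hy => hnorm y hy r hr)
      rw [e, (shifted_gamma_real hv hr (by linarith)).2]
      have e2 : r ^ (-(s.re - 1 / 2) - 1) = r ^ (-s.re) * r ^ (-1 / 2 : ℝ) := by
        rw [← Real.rpow_add hr']; congr 1; ring
      have e3 : Real.exp (-(v ^ 2 * r)) ≤ 1 := Real.exp_le_one_iff.2 (by
        have : 0 ≤ v ^ 2 * r := by positivity
        linarith)
      have hG : 0 < Real.Gamma s.re := Real.Gamma_pos_of_pos (by linarith)
      rw [e2]
      calc _ = (Real.Gamma s.re / 2 * (r ^ (-s.re) * r ^ (-1 / 2 : ℝ) *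
            Real.exp (-(x ^ 2 / 4 * r⁻¹)))) * Real.exp (-(v ^ 2 * r)) := by ring
        _ ≤ _ := mul_le_of_le_one_right (by positivity) e3
  have hswap := integral_integral_swap hInt
  have hl : ∫ y in Ioi v, ∫ r in Ioi (0 : ℝ), H y r =
      (√Real.pi : ℂ) * ∫ y in Ioi v, (Real.exp (-(x * y)) : ℂ) *
        ((y ^ 2 - v ^ 2 : ℝ) : ℂ) ^ (s - 1) := by
    rw [← integral_const_mul]
    refine setIntegral_congr_fun measurableSet_Ioi (fun y hy => ?_)
    have hy : v < y := hy
    have hy0 : 0 < y := by linarith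
    have hsub := subordination hx hy0
    have : ∫ r in Ioi (0 : ℝ), H y r = (y : ℂ) * ((y ^ 2 - v ^ 2 : ℝ) : ℂ) ^ (s - 1) *
        ((∫ r in Ioi (0 : ℝ), r ^ (-1 / 2 : ℝ) * Real.exp (-(x ^ 2 / 4 * r⁻¹)) *
          Real.exp (-(y ^ 2 * r)) : ℝ) : ℂ) := by
      rw [← integral_complex_ofReal, ← integral_const_mul]
      congr 1; funext r
      simp only [H]; push_cast; ring
    rw [this, hsub]
    have : (y : ℂ) ≠ 0 := by exact_mod_cast hy0.ne'
    push_cast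
    field_simp
  have hrr : ∫ r in Ioi (0 : ℝ), ∫ y in Ioi v, H y r = Complex.Gamma s / 2 * gaussMix s x v := by
    rw [gaussMix, ← integral_const_mul]
    refine setIntegral_congr_fun measurableSet_Ioi (fun r hr => ?_)
    have hr : 0 < r := hr
    simp only [H]
    rw [integral_mul_const, shifted_gamma hv hr (by linarith)]
    have hr0 : (r : ℂ) ≠ 0 := by exact_mod_cast hr.ne'
    rw [show -(s - 1 / 2) - 1 = -s + ((-1 / 2 : ℝ) : ℂ) by push_cast; ring,
      Complex.cpow_add _ _ hr0, Complex.ofReal_mul, Complex.ofReal_cpow hr.le]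
    ring
  rw [hl, hrr] at hswap
  rw [mul_comm, ← eq_div_iff hpi] at hswap
  rw [hswap]
  field_simp

/-! ### Reduction of the double integral -/

/-- The integrand `e^{-xy} (y² - v²)^{s-1}` on the wedge `v < y`, extended by zero; it arises from
the double integral by the substitution `v = y u`. -/
noncomputable def wedgeKernel (s : ℂ) (x y v : ℝ) : ℂ :=
  if v < y then (Real.exp (-(x * y)) : ℂ) * ((y ^ 2 - v ^ 2 : ℝ) : ℂ) ^ (s - 1) else 0

theorem measurable_wedgeKernel (s : ℂ) (x : ℝ) :
    Measurable (Function.uncurry (wedgeKernel s x)) := by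
  simp only [Function.uncurry_def, wedgeKernel]
  refine Measurable.ite (measurableSet_lt measurable_snd measurable_fst) ?_ measurable_const
  fun_prop

theorem scale_inner (s : ℂ) (x : ℝ) {y : ℝ} (hy : 0 < y) (C : ℝ → ℂ) :
    ∫ u in (0 : ℝ)..1, (y : ℂ) ^ (2 * s - 1) * (Real.exp (-(x * y)) : ℂ) *
        ((1 - u ^ 2 : ℝ) : ℂ) ^ (s - 1) * C (y * u) =
      ∫ v in Ioi (0 : ℝ), wedgeKernel s x y v * C v := by
  have hy0 : (y : ℂ) ≠ 0 := by exact_mod_cast hy.ne'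
  have h1 : ∫ v in Ioi (0 : ℝ), wedgeKernel s x y v * C v =
      ∫ v in (0 : ℝ)..y, (Real.exp (-(x * y)) : ℂ) * ((y ^ 2 - v ^ 2 : ℝ) : ℂ) ^ (s - 1) * C v := by
    rw [intervalIntegral.integral_of_le hy.le, integral_Ioc_eq_integral_Ioo,
      ← Ioi_inter_Iio, ← setIntegral_indicator measurableSet_Iio]
    congr 1; funext v
    simp only [wedgeKernel, indicator, mem_Iio]
    split_ifs <;> simp
  rw [h1]
  have h2 := intervalIntegral.integral_comp_mul_left (a := 0) (b := 1) (c := y)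
    (fun v : ℝ => (Real.exp (-(x * y)) : ℂ) * ((y ^ 2 - v ^ 2 : ℝ) : ℂ) ^ (s - 1) * C v) hy.ne'
  rw [mul_zero, mul_one, Complex.real_smul] at h2
  rw [← mul_right_inj' (inv_ne_zero hy0), ← Complex.ofReal_inv, ← h2,
    ← intervalIntegral.integral_const_mul]
  refine intervalIntegral.integral_congr (fun u hu => ?_)
  rw [uIcc_of_le zero_le_one] at hu
  have hu2 : 0 ≤ 1 - u ^ 2 := by nlinarith [hu.1, hu.2]
  have e : ((y ^ 2 - (y * u) ^ 2 : ℝ) : ℂ) = (y : ℂ) * ((y : ℂ) * ((1 - u ^ 2 : ℝ) : ℂ)) := by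
    push_cast; ring
  rw [e, ← Complex.ofReal_mul, Complex.mul_cpow_ofReal_nonneg hy.le (by positivity),
    Complex.ofReal_mul, Complex.mul_cpow_ofReal_nonneg hy.le hu2,
    show 2 * s - 1 = 1 + ((s - 1) + (s - 1)) by ring, Complex.cpow_add _ _ hy0,
    Complex.cpow_add _ _ hy0, Complex.cpow_one, Complex.ofReal_inv]
  field_simp

/-- Since `y² - v² = (y - v)(y + v)` and `y + v` lies between `y` and `2y`, the kernel is dominated by
a constant times `e^{-xy} y^{a-1} (y - v)^{a-1}` with `a = Re s`. Its `v`-integral is of order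
`e^{-xy} y^{2a-1}`, which is integrable. -/
theorem integrable_wedgeKernel {s : ℂ} (hs : 1 / 2 < s.re) {x : ℝ} (hx : 0 < x) :
    Integrable (Function.uncurry (wedgeKernel s x))
      ((volume.restrict (Ioi 0)).prod (volume.restrict (Ioi 0))) := by
  have hm := measurable_wedgeKernel s x
  set a := s.re with ha
  have ha0 : 0 < a := by linarith
  -- dominating function in `v`
  let D : ℝ → ℝ → ℝ := fun y v =>
    (Real.exp (-(x * y)) * (y ^ (a - 1) * (1 + 2 ^ (a - 1)))) *
      (Iio y).indicator (fun v => (y - v) ^ (a - 1)) v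
  have hD : ∀ y ∈ Ioi (0 : ℝ), ∀ v ∈ Ioi (0 : ℝ), ‖wedgeKernel s x y v‖ ≤ D y v := by
    intro y hy v hv
    have hy : 0 < y := hy
    have hv : 0 < v := hv
    simp only [wedgeKernel, D, indicator, mem_Iio]
    split_ifs with h
    · have hpos : 0 < y - v := by linarith
      rw [norm_mul, Complex.norm_real, Real.norm_of_nonneg (Real.exp_pos _).le,
        Complex.norm_cpow_eq_rpow_re_of_pos (by nlinarith),
        show y ^ 2 - v ^ 2 = (y - v) * (y + v) by ring,
        Real.mul_rpow hpos.le (by linarith), Complex.sub_re, Complex.one_re, ← ha]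
      have : (y + v) ^ (a - 1) ≤ y ^ (a - 1) * (1 + 2 ^ (a - 1)) := by
        have h2 : (0 : ℝ) < 2 ^ (a - 1) := by positivity
        have h3 : (0 : ℝ) < y ^ (a - 1) := by positivity
        rcases le_total 1 a with h1 | h1
        · calc (y + v) ^ (a - 1) ≤ (y * 2) ^ (a - 1) :=
                Real.rpow_le_rpow (by linarith) (by linarith) (by linarith)
            _ = y ^ (a - 1) * 2 ^ (a - 1) := Real.mul_rpow hy.le (by norm_num)
            _ ≤ _ := by nlinarith
        · calc (y + v) ^ (a - 1) ≤ y ^ (a - 1) :=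
                Real.rpow_le_rpow_of_nonpos hy (by linarith) (by linarith)
            _ ≤ _ := by nlinarith
      calc _ ≤ Real.exp (-(x * y)) * ((y - v) ^ (a - 1) * (y ^ (a - 1) * (1 + 2 ^ (a - 1)))) := by
            gcongr
        _ = _ := by ring
    · simp
  have hDint : ∀ y ∈ Ioi (0 : ℝ), IntegrableOn (D y) (Ioi 0) ∧
      ∫ v in Ioi (0 : ℝ), D y v = (Real.exp (-(x * y)) * (y ^ (a - 1) * (1 + 2 ^ (a - 1)))) *
        (y ^ a / a) := by
    intro y hy
    have hy : 0 < y := hy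
    have hI : IntervalIntegrable (fun v : ℝ => (y - v) ^ (a - 1)) volume 0 y := by
      have := (intervalIntegral.intervalIntegrable_rpow' (a := 0) (b := y) (r := a - 1)
        (by linarith)).comp_sub_left y
      simpa using this.symm
    constructor
    · refine Integrable.const_mul ?_ _
      rw [integrable_indicator_iff measurableSet_Iio]
      rw [IntegrableOn, Measure.restrict_restrict measurableSet_Iio, inter_comm, Ioi_inter_Iio]
      exact ((intervalIntegrable_iff_integrableOn_Ioo_of_le hy.le).1 hI)
    · simp only [D]
      rw [integral_const_mul, setIntegral_indicator measurableSet_Iio, Ioi_inter_Iio,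
        ← integral_Ioc_eq_integral_Ioo, ← intervalIntegral.integral_of_le hy.le,
        intervalIntegral.integral_comp_sub_left (fun t => t ^ (a - 1)) y,
        integral_rpow (Or.inl (by linarith))]
      rw [sub_add_cancel, sub_self, sub_zero, Real.zero_rpow ha0.ne', sub_zero]
  rw [integrable_prod_iff hm.aestronglyMeasurable]
  constructor
  · refine (ae_restrict_mem measurableSet_Ioi).mono (fun y hy => ?_)
    refine (hDint y hy).1.mono' (hm.comp measurable_prodMk_left).aestronglyMeasurable ?_
    exact (ae_restrict_mem measurableSet_Ioi).mono (fun v hv => hD y hy v hv)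
  · have hb := (integrableOn_rpow_mul_exp_neg_mul_rpow (s := 2 * a - 1) (p := 1) (b := x)
        (by linarith) one_pos hx).const_mul ((1 + 2 ^ (a - 1)) / a)
    refine Integrable.mono' hb
      (hm.norm.stronglyMeasurable.integral_prod_right').aestronglyMeasurable ?_
    refine (ae_restrict_mem measurableSet_Ioi).mono (fun y hy => ?_)
    have hy' : 0 < y := hy
    rw [Real.norm_of_nonneg (integral_nonneg (fun _ => norm_nonneg _))]
    calc ∫ v in Ioi (0 : ℝ), ‖wedgeKernel s x y v‖ ≤ ∫ v in Ioi (0 : ℝ), D y v := by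
          refine integral_mono_of_nonneg (Eventually.of_forall fun _ => norm_nonneg _)
            (hDint y hy).1 ?_
          exact (ae_restrict_mem measurableSet_Ioi).mono (fun v hv => hD y hy v hv)
      _ = _ := by
          rw [(hDint y hy).2, Real.rpow_one,
            show 2 * a - 1 = (a - 1) + a by ring, Real.rpow_add hy', neg_mul]
          ring

/-- The double integral of the Watson formula, with any continuous factor `C(yu)` of norm at most
`1` in place of the cosine, is a single integral against `gaussMix`. -/
theorem double_integral {s : ℂ} (hs : 1 / 2 < s.re) {x : ℝ} (hx : 0 < x) {C : ℝ → ℂ}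
    (hC : Continuous C) (hC1 : ∀ v, ‖C v‖ ≤ 1) :
    ∫ y in Ioi (0 : ℝ), ∫ u in (0 : ℝ)..1, (y : ℂ) ^ (2 * s - 1) * (Real.exp (-(x * y)) : ℂ) *
        ((1 - u ^ 2 : ℝ) : ℂ) ^ (s - 1) * C (y * u) =
      Complex.Gamma s / (2 * (√Real.pi : ℂ)) * ∫ v in Ioi (0 : ℝ), gaussMix s x v * C v := by
  have hInt : Integrable (Function.uncurry fun y v => wedgeKernel s x y v * C v)
      ((volume.restrict (Ioi 0)).prod (volume.restrict (Ioi 0))) :=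
    (integrable_wedgeKernel hs hx).mul_bdd (c := 1)
      (hC.comp continuous_snd).aestronglyMeasurable (Eventually.of_forall fun z => hC1 z.2)
  rw [setIntegral_congr_fun measurableSet_Ioi (fun y hy => scale_inner s x hy C),
    integral_integral_swap hInt, ← integral_const_mul]
  refine setIntegral_congr_fun measurableSet_Ioi (fun v hv => ?_)
  have hv : 0 < v := hv
  rw [integral_mul_const, ← mul_assoc, ← bessel_as_gaussMix hs hx hv.le]
  congr 1
  have : Ioi (0 : ℝ) ∩ Ioi v = Ioi v := inter_eq_right.2 (Ioi_subset_Ioi hv.le)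
  rw [← this, ← setIntegral_indicator measurableSet_Ioi]
  congr 1

/-! ### Regularity and integrals of the Gaussian mixture -/

/-- The mixing density `r^{-s-1/2} e^{-x²/(4r)}` of `gaussMix`. -/
noncomputable def mixDensity (s : ℂ) (x r : ℝ) : ℂ :=
  (r : ℂ) ^ (-(s - 1 / 2) - 1) * (Real.exp (-(x ^ 2 / 4 * r⁻¹)) : ℂ)

theorem measurable_mixDensity (s : ℂ) (x : ℝ) : Measurable (mixDensity s x) := by
  unfold mixDensity; fun_prop

theorem norm_mixDensity (s : ℂ) (x : ℝ) {r : ℝ} (hr : 0 < r) :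
    ‖mixDensity s x r‖ = r ^ (-(s.re - 1 / 2) - 1) * Real.exp (-(x ^ 2 / 4 * r⁻¹)) := by
  rw [mixDensity, norm_mul, Complex.norm_real, Real.norm_of_nonneg (Real.exp_pos _).le,
    Complex.norm_cpow_eq_rpow_re_of_pos hr]
  simp

theorem integrableOn_mixDensity_mul_rpow {s : ℂ} {x : ℝ} (hx : 0 < x) {e : ℝ}
    (he : e < s.re - 1 / 2) :
    IntegrableOn (fun r => ‖mixDensity s x r‖ * r ^ e) (Ioi 0) := by
  refine (integrableOn_invGamma (b := s.re - 1 / 2 - e) (k := x ^ 2 / 4) (by linarith)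
    (by positivity)).congr_fun (fun r hr => ?_) measurableSet_Ioi
  have hr : 0 < r := hr
  simp only
  rw [norm_mixDensity s x hr,
    show -(s.re - 1 / 2 - e) - 1 = (-(s.re - 1 / 2) - 1) + e by ring, Real.rpow_add hr]
  ring

theorem exp_sq_le_one (v : ℝ) {r : ℝ} (hr : 0 < r) : Real.exp (-(v ^ 2 * r)) ≤ 1 :=
  Real.exp_le_one_iff.2 (by
    have : 0 ≤ v ^ 2 * r := by positivity
    linarith)

theorem gaussMix_eq (s : ℂ) (x v : ℝ) :
    gaussMix s x v = ∫ r in Ioi (0 : ℝ), mixDensity s x r * (Real.exp (-(v ^ 2 * r)) : ℂ) := rfl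

theorem continuous_gaussMix {s : ℂ} (hs : 1 / 2 < s.re) {x : ℝ} (hx : 0 < x) :
    Continuous (gaussMix s x) := by
  have hb := integrableOn_mixDensity_mul_rpow (s := s) hx (e := 0) (by linarith)
  refine continuous_of_dominated (bound := fun r => ‖mixDensity s x r‖ * r ^ (0 : ℝ)) ?_ ?_ hb ?_
  · intro v
    exact ((measurable_mixDensity s x).mul (by fun_prop)).aestronglyMeasurable
  · intro v
    refine (ae_restrict_mem measurableSet_Ioi).mono (fun r hr => ?_)
    change ‖mixDensity s x r * (Real.exp (-(v ^ 2 * r)) : ℂ)‖ ≤ _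
    rw [norm_mul, Complex.norm_real, Real.norm_of_nonneg (Real.exp_pos _).le, Real.rpow_zero]
    gcongr
    exact exp_sq_le_one v hr
  · exact Eventually.of_forall fun r => by fun_prop

theorem gaussMix_neg (s : ℂ) (x v : ℝ) : gaussMix s x (-v) = gaussMix s x v := by
  simp [gaussMix]

/-- Quadratic decay, from `e^{-v² r} ≤ 1 / (v² r)`. -/
theorem gaussMix_decay {s : ℂ} (hs : 1 / 2 < s.re) {x : ℝ} (hx : 0 < x) :
    ∃ C : ℝ, 0 ≤ C ∧ ∀ v, v ≠ 0 → ‖gaussMix s x v‖ ≤ C / v ^ 2 := by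
  have hb := integrableOn_mixDensity_mul_rpow (s := s) hx (e := -1) (by linarith)
  refine ⟨∫ r in Ioi (0 : ℝ), ‖mixDensity s x r‖ * r ^ (-1 : ℝ),
    setIntegral_nonneg measurableSet_Ioi (fun r (hr : 0 < r) => by positivity), fun v hv => ?_⟩
  rw [← integral_div, gaussMix_eq]
  refine norm_integral_le_of_norm_le (hb.div_const _) ?_
  refine (ae_restrict_mem measurableSet_Ioi).mono (fun r hr => ?_)
  have hr : 0 < r := hr
  rw [norm_mul, Complex.norm_real, Real.norm_of_nonneg (Real.exp_pos _).le, mul_div_assoc]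
  gcongr
  have hv2 : 0 < v ^ 2 * r := by positivity
  rw [Real.exp_neg, Real.rpow_neg_one, inv_eq_one_div, inv_eq_one_div, div_div, mul_comm r]
  exact one_div_le_one_div_of_le hv2 (by linarith [Real.add_one_le_exp (v ^ 2 * r)])

theorem integrable_mix {s : ℂ} (hs : 1 / 2 < s.re) {x : ℝ} (hx : 0 < x) :
    Integrable (Function.uncurry fun (v r : ℝ) =>
      mixDensity s x r * (Real.exp (-(v ^ 2 * r)) : ℂ)) (volume.prod (volume.restrict (Ioi 0))) := by
  have hm : Measurable (Function.uncurry fun (v r : ℝ) =>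
      mixDensity s x r * (Real.exp (-(v ^ 2 * r)) : ℂ)) := by
    simp only [Function.uncurry_def]
    exact ((measurable_mixDensity s x).comp measurable_snd).mul (by fun_prop)
  have hg : ∀ v r : ℝ, Real.exp (-(v ^ 2 * r)) = Real.exp (-r * v ^ 2) := fun v r => by
    congr 1; ring
  rw [integrable_prod_iff' hm.aestronglyMeasurable]
  constructor
  · refine (ae_restrict_mem measurableSet_Ioi).mono (fun r hr => ?_)
    simp only [Function.uncurry_apply_pair, hg]
    exact (integrable_exp_neg_mul_sq hr).ofReal.const_mul _
  · refine IntegrableOn.congr_fun ((integrableOn_mixDensity_mul_rpow (s := s) hx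
      (e := -(1 / 2)) (by linarith)).const_mul √Real.pi) (fun r hr => ?_) measurableSet_Ioi
    have hr : 0 < r := hr
    simp only [Function.uncurry_apply_pair, hg, norm_mul, Complex.norm_real, Real.norm_eq_abs,
      abs_of_pos (Real.exp_pos _)]
    rw [integral_const_mul, integral_gaussian, Real.sqrt_div Real.pi_pos.le, Real.rpow_neg hr.le,
      ← Real.sqrt_eq_rpow]
    ring

theorem integrable_gaussMix {s : ℂ} (hs : 1 / 2 < s.re) {x : ℝ} (hx : 0 < x) :
    Integrable (gaussMix s x) :=
  (integrable_mix hs hx).integral_prod_left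

theorem integral_gaussMix_mul {s : ℂ} (hs : 1 / 2 < s.re) {x : ℝ} (hx : 0 < x) {C : ℝ → ℂ}
    (hC : Continuous C) (hC1 : ∀ v, ‖C v‖ ≤ 1) :
    ∫ v, gaussMix s x v * C v =
      ∫ r in Ioi (0 : ℝ), mixDensity s x r * ∫ v : ℝ, (Real.exp (-(r * v ^ 2)) : ℂ) * C v := by
  have hInt : Integrable (Function.uncurry fun (v r : ℝ) =>
      mixDensity s x r * (Real.exp (-(v ^ 2 * r)) : ℂ) * C v)
      (volume.prod (volume.restrict (Ioi 0))) :=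
    (integrable_mix hs hx).mul_bdd (c := 1)
      (hC.comp continuous_fst).aestronglyMeasurable (Eventually.of_forall fun z => hC1 z.1)
  have h := integral_integral_swap hInt
  simp only [mul_assoc, integral_const_mul] at h
  simp only [← mul_assoc] at h
  rw [show (fun v => gaussMix s x v * C v) = fun v => (∫ r in Ioi (0 : ℝ), mixDensity s x r *
    (Real.exp (-(v ^ 2 * r)) : ℂ)) * C v from rfl]
  simp only [← integral_mul_const]
  rw [h]
  simp only [mul_comm (_ ^ 2)]

theorem gaussMix_zero {s : ℂ} (hs : 1 / 2 < s.re) {x : ℝ} (hx : 0 < x) :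
    gaussMix s x 0 = (1 / ((x ^ 2 / 4 : ℝ) : ℂ)) ^ (s - 1 / 2) * Complex.Gamma (s - 1 / 2) := by
  rw [← integral_invGamma (by simpa using hs) (by positivity)]
  simp [gaussMix]

theorem integral_gaussMix {s : ℂ} (hs : 1 / 2 < s.re) {x : ℝ} (hx : 0 < x) :
    ∫ v, gaussMix s x v =
      (√Real.pi : ℂ) * ((1 / ((x ^ 2 / 4 : ℝ) : ℂ)) ^ s * Complex.Gamma s) := by
  have h := integral_gaussMix_mul hs hx (C := fun _ => 1) continuous_const (by simp)
  simp only [mul_one] at h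
  rw [h, ← integral_invGamma (by linarith) (by positivity), ← integral_const_mul]
  refine setIntegral_congr_fun measurableSet_Ioi (fun r hr => ?_)
  have hr : 0 < r := hr
  have hr0 : (r : ℂ) ≠ 0 := by exact_mod_cast hr.ne'
  rw [integral_complex_ofReal]
  simp only [← neg_mul]
  rw [integral_gaussian, Real.sqrt_div Real.pi_pos.le, mixDensity,
    show -(s - 1 / 2) - 1 = (-s - 1) + ((1 / 2 : ℝ) : ℂ) by push_cast; ring,
    Complex.cpow_add _ _ hr0, ← Complex.ofReal_cpow hr.le, ← Real.sqrt_eq_rpow]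
  have : (√r : ℂ) ≠ 0 := by exact_mod_cast (Real.sqrt_pos.2 hr).ne'
  push_cast
  field_simp

/-! ### The phase and oscillatory Gaussian integrals -/

/-- The phase `φ(v) = v + 2 arctan (v / P)`, used with `P = 2πp`. The numbers `2πλ_n` are exactly
the solutions of `φ(v) = 2πn`. -/
noncomputable def phase (P v : ℝ) : ℝ := v + 2 * Real.arctan (v / P)

/-- The reciprocal `1 / φ'` of the derivative of `phase`. At `v = 2πλ_n`, `P = 2πp` it is the
weight `w_n`. -/
noncomputable def jac (P v : ℝ) : ℝ := (P ^ 2 + v ^ 2) / (P ^ 2 + 2 * P + v ^ 2)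

/-- The derivative of `jac`. -/
noncomputable def jac₁ (P v : ℝ) : ℝ := 4 * P * v / (P ^ 2 + 2 * P + v ^ 2) ^ 2

/-- The second derivative of `jac`. -/
noncomputable def jac₂ (P v : ℝ) : ℝ :=
  4 * P / (P ^ 2 + 2 * P + v ^ 2) ^ 2 - 16 * P * v ^ 2 / (P ^ 2 + 2 * P + v ^ 2) ^ 3

/-- The oscillating factor `e^{-i m φ(v)}`. -/
noncomputable def osc (P m v : ℝ) : ℂ := Complex.exp (((-(m * phase P v) : ℝ) : ℂ) * Complex.I)

theorem norm_osc (P m v : ℝ) : ‖osc P m v‖ = 1 := Complex.norm_exp_ofReal_mul_I _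

theorem jac_pos {P : ℝ} (hP : 0 < P) (v : ℝ) : 0 < jac P v := by
  unfold jac; positivity

theorem jac_le_one {P : ℝ} (hP : 0 < P) (v : ℝ) : jac P v ≤ 1 := by
  unfold jac
  rw [div_le_one (by positivity)]
  linarith

theorem hasDerivAt_phase {P : ℝ} (hP : 0 < P) (v : ℝ) :
    HasDerivAt (phase P) (jac P v)⁻¹ v := by
  have h := (hasDerivAt_id v).add ((((hasDerivAt_id v).div_const P).arctan).const_mul 2)
  refine h.congr_deriv ?_
  have : 0 < P ^ 2 + v ^ 2 := by positivity
  simp only [id, jac]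
  field_simp
  ring

theorem hasDerivAt_jac {P : ℝ} (hP : 0 < P) (v : ℝ) :
    HasDerivAt (jac P) (jac₁ P v) v := by
  have hne : P ^ 2 + 2 * P + v ^ 2 ≠ 0 := by positivity
  have hsq := (hasDerivAt_id v).pow 2
  have h := (hsq.const_add (P ^ 2)).div (hsq.const_add (P ^ 2 + 2 * P)) hne
  refine h.congr_deriv ?_
  simp only [id, jac₁, Pi.pow_apply]
  field_simp
  push_cast
  ring

theorem hasDerivAt_jac₁ {P : ℝ} (hP : 0 < P) (v : ℝ) :
    HasDerivAt (jac₁ P) (jac₂ P v) v := by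
  have hne : P ^ 2 + 2 * P + v ^ 2 ≠ 0 := by positivity
  have hsq := (hasDerivAt_id v).pow 2
  have h := ((hasDerivAt_id v).const_mul (4 * P)).div
    ((hsq.const_add (P ^ 2 + 2 * P)).pow 2) (pow_ne_zero 2 hne)
  refine h.congr_deriv ?_
  simp only [id, jac₂, Pi.pow_apply]
  field_simp
  push_cast
  ring

theorem continuous_phase {P : ℝ} (hP : 0 < P) : Continuous (phase P) :=
  continuous_iff_continuousAt.2 fun v => (hasDerivAt_phase hP v).continuousAt

theorem continuous_jac {P : ℝ} (hP : 0 < P) : Continuous (jac P) :=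
  continuous_iff_continuousAt.2 fun v => (hasDerivAt_jac hP v).continuousAt

theorem continuous_osc {P : ℝ} (hP : 0 < P) (m : ℝ) : Continuous (osc P m) := by
  have := continuous_phase hP
  unfold osc; fun_prop

theorem jac_bounds {P : ℝ} (hP : 0 < P) : ∃ K : ℝ, 0 < K ∧ ∀ v,
    |jac₁ P v| ≤ K ∧ |jac₂ P v| ≤ K ∧ |v * jac₁ P v| ≤ K := by
  set Q := P ^ 2 + 2 * P with hQ
  have hQ0 : 0 < Q := by positivity
  refine ⟨4 * P / Q + 20 * P / Q ^ 2, by positivity, fun v => ?_⟩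
  have hD : 0 < Q + v ^ 2 := by positivity
  have h1 : 1 / (Q + v ^ 2) ≤ 1 / Q := one_div_le_one_div_of_le hQ0 (by nlinarith)
  have h2 : v ^ 2 / (Q + v ^ 2) ≤ 1 := by rw [div_le_one hD]; linarith
  have h10 : 0 < 1 / (Q + v ^ 2) := by positivity
  have h20 : 0 ≤ v ^ 2 / (Q + v ^ 2) := by positivity
  set A := 1 / (Q + v ^ 2) with hA
  set B := v ^ 2 / (Q + v ^ 2) with hB
  have hA2 : A ^ 2 ≤ (1 / Q) ^ 2 := by gcongr
  have h3 : |v * jac₁ P v| ≤ 4 * P * (1 / Q) := by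
    have : v * jac₁ P v = 4 * P * (B * A) := by
      simp only [jac₁, hA, hB, ← hQ]; field_simp
    rw [this, abs_of_nonneg (by positivity)]
    have : B * A ≤ 1 * (1 / Q) := by gcongr
    nlinarith
  refine ⟨?_, ?_, ?_⟩
  · -- `2|v| ≤ 1 + v²`
    have e : jac₁ P v = v * (4 * P * A ^ 2) := by
      simp only [jac₁, hA, ← hQ]; field_simp
    have hv : |v| ≤ 1 + v ^ 2 := by
      rw [← sq_abs]; nlinarith [sq_nonneg (|v| - 1), abs_nonneg v]
    have e2 : v ^ 2 * A ^ 2 = B * A := by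
      simp only [hA, hB]; field_simp
    rw [e, abs_mul, abs_of_nonneg (by positivity : 0 ≤ 4 * P * A ^ 2)]
    calc |v| * (4 * P * A ^ 2) ≤ (1 + v ^ 2) * (4 * P * A ^ 2) := by gcongr
      _ = 4 * P * (B * A) + 4 * P * A ^ 2 := by rw [← e2]; ring
      _ ≤ 4 * P * (1 * (1 / Q)) + 4 * P * (1 / Q) ^ 2 := by gcongr
      _ ≤ _ := by
        have : 0 ≤ P / Q ^ 2 := by positivity
        have e3 : 4 * P * (1 * (1 / Q)) + 4 * P * (1 / Q) ^ 2 = 4 * P / Q + 4 * (P / Q ^ 2) := by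
          field_simp
        rw [e3, mul_div_assoc 20]; linarith
  · have e : jac₂ P v = 4 * P * A ^ 2 - 16 * P * (B * A ^ 2) := by
      simp only [jac₂, hA, hB, ← hQ]; field_simp
    have hBA : B * A ^ 2 ≤ 1 * (1 / Q) ^ 2 := by gcongr
    have e3 : 20 * P / Q ^ 2 = 20 * P * (1 / Q) ^ 2 := by field_simp
    have e4 : 0 ≤ 4 * P / Q := by positivity
    have t1 : 4 * P * A ^ 2 ≤ 4 * P * (1 / Q) ^ 2 := by gcongr
    have t2 : 16 * P * (B * A ^ 2) ≤ 16 * P * (1 * (1 / Q) ^ 2) := by gcongr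
    have t3 : 0 ≤ 4 * P * A ^ 2 := by positivity
    have t4 : 0 ≤ 16 * P * (B * A ^ 2) := by positivity
    have t5 : 0 ≤ P * (1 / Q) ^ 2 := by positivity
    rw [e, e3, abs_le]
    constructor <;> nlinarith
  · have : 0 ≤ 20 * P / Q ^ 2 := by positivity
    have e : 4 * P * (1 / Q) = 4 * P / Q := by ring
    linarith

/-- One integration by parts against `e^{-i m φ}`: it gains a factor `1 / m` and replaces the amplitude
`H` by the derivative of `H / φ'`. -/
theorem osc_by_parts {P m : ℝ} (hP : 0 < P) {H D : ℝ → ℝ} (hH : Integrable H)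
    (hD : Integrable D) (hder : ∀ v, HasDerivAt (fun v => H v * jac P v) (D v) v) :
    |m| * ‖∫ v, (H v : ℂ) * osc P m v‖ = ‖∫ v, (D v : ℂ) * osc P m v‖ := by
  have hosc := continuous_osc hP m
  have hmul : ∀ {G : ℝ → ℝ}, Integrable G → Integrable (fun v => (G v : ℂ) * osc P m v) :=
    fun hG => hG.ofReal.mul_bdd (c := 1) hosc.aestronglyMeasurable
      (Eventually.of_forall fun v => (norm_osc P m v).le)
  have hHj : Integrable (fun v => H v * jac P v) :=
    hH.mul_bdd (c := 1) (continuous_jac hP).aestronglyMeasurable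
      (Eventually.of_forall fun v => by
        rw [Real.norm_of_nonneg (jac_pos hP v).le]; exact jac_le_one hP v)
  have hv : ∀ v, HasDerivAt (osc P m)
      (osc P m v * (((-(m * (jac P v)⁻¹) : ℝ) : ℂ) * Complex.I)) v := fun v =>
    ((((hasDerivAt_phase hP v).const_mul m).neg.ofReal_comp).mul_const Complex.I).cexp
  have e : ∀ v, ((H v * jac P v : ℝ) : ℂ) *
      (osc P m v * (((-(m * (jac P v)⁻¹) : ℝ) : ℂ) * Complex.I)) =
      (-m * Complex.I) * ((H v : ℂ) * osc P m v) := fun v => by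
    have : (jac P v : ℂ) ≠ 0 := by exact_mod_cast (jac_pos hP v).ne'
    push_cast; field_simp
  have h := integral_mul_deriv_eq_deriv_mul_of_integrable
    (u := fun v => ((H v * jac P v : ℝ) : ℂ)) (u' := fun v => (D v : ℂ))
    (v := osc P m) (v' := fun v => osc P m v * (((-(m * (jac P v)⁻¹) : ℝ) : ℂ) * Complex.I))
    (fun v _ => (hder v).ofReal_comp) (fun v _ => hv v)
    (((hmul hH).const_mul (-m * Complex.I)).congr (Eventually.of_forall fun v => (e v).symm))
    (hmul hD) (hmul hHj)
  simp only [e] at h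
  rw [integral_const_mul] at h
  have hnorm := congrArg norm h
  rw [norm_neg, norm_mul, norm_mul, norm_neg, Complex.norm_I, Complex.norm_real,
    Real.norm_eq_abs, mul_one] at hnorm
  exact hnorm

/-- A factor `r v²` in front of a Gaussian is absorbed by halving the rate of decay. -/
theorem absorb {r : ℝ} (v : ℝ) :
    r * v ^ 2 * Real.exp (-(r * v ^ 2)) ≤ 2 * Real.exp (-(r / 2) * v ^ 2) := by
  have h := Real.add_one_le_exp (r / 2 * v ^ 2)
  have e : Real.exp (-(r / 2) * v ^ 2) =
      Real.exp (r / 2 * v ^ 2) * Real.exp (-(r * v ^ 2)) := by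
    rw [← Real.exp_add]; congr 1; ring
  rw [e, ← mul_assoc]
  refine mul_le_mul_of_nonneg_right ?_ (Real.exp_pos _).le
  linarith

/-- Two integrations by parts bound the oscillatory integral of the Gaussian `e^{-r v²}`. -/
theorem osc_bound {P : ℝ} (hP : 0 < P) : ∃ C : ℝ, 0 < C ∧ ∀ r m : ℝ, 0 < r →
    m ^ 2 * ‖∫ v : ℝ, (Real.exp (-(r * v ^ 2)) : ℂ) * osc P m v‖ ≤
      C * (1 + r) * √(2 * Real.pi / r) := by
  obtain ⟨K, hK, hb⟩ := jac_bounds hP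
  refine ⟨K ^ 2 + 7 * K + 10, by positivity, fun r m hr => ?_⟩
  set h : ℝ → ℝ := fun v => Real.exp (-(r * v ^ 2)) with hh
  set k : ℝ → ℝ := fun v => Real.exp (-(r / 2) * v ^ 2) with hk
  have hkint : Integrable k := integrable_exp_neg_mul_sq (half_pos hr)
  have hhInt : Integrable h := by
    simpa only [hh, ← neg_mul] using integrable_exp_neg_mul_sq hr
  have hhk : ∀ v, h v ≤ k v := fun v => Real.exp_le_exp.2 (by nlinarith [sq_nonneg v])
  have hh0 : ∀ v, 0 < h v := fun v => Real.exp_pos _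
  have hk0 : ∀ v, 0 < k v := fun v => Real.exp_pos _
  have habs : ∀ v, r * v ^ 2 * h v ≤ 2 * k v := fun v => absorb v
  have hder_h : ∀ v, HasDerivAt h (h v * (-(2 * r * v))) v := fun v => by
    have := (((hasDerivAt_id v).pow 2).const_mul r).neg.exp
    refine this.congr_deriv ?_
    simp [hh]; ring
  -- `D₀` and `D₁` are the amplitudes after one and two integrations by parts
  let D₀ : ℝ → ℝ := fun v => h v * (jac₁ P v - 2 * r * (v * jac P v))
  let p₁ : ℝ → ℝ := fun v => jac₁ P v ^ 2 + jac P v * jac₂ P v - 2 * r * jac P v ^ 2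
    - 6 * r * (jac P v * (v * jac₁ P v)) + 4 * r * (r * v ^ 2) * jac P v ^ 2
  let D₁ : ℝ → ℝ := fun v => h v * p₁ v
  have hd0 : ∀ v, HasDerivAt (fun v => h v * jac P v) (D₀ v) v := fun v => by
    refine ((hder_h v).mul (hasDerivAt_jac hP v)).congr_deriv ?_
    simp only [D₀]; ring
  have hd1 : ∀ v, HasDerivAt (fun v => D₀ v * jac P v) (D₁ v) v := fun v => by
    have hj := hasDerivAt_jac hP v
    have h1 := (hder_h v).mul ((hasDerivAt_jac₁ hP v).sub
      (((hasDerivAt_id v).mul hj).const_mul (2 * r)))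
    refine (h1.mul hj).congr_deriv ?_
    simp only [D₁, p₁, id, Pi.mul_apply, Pi.sub_apply]; ring
  have hcj := continuous_jac hP
  have hcj1 : Continuous (jac₁ P) :=
    continuous_iff_continuousAt.2 fun v => (hasDerivAt_jac₁ hP v).continuousAt
  have hmj2 : Measurable (jac₂ P) := by unfold jac₂; fun_prop
  have hch : Continuous h := by simp only [hh]; fun_prop
  have hm0 : Measurable D₀ := by
    have := hcj.measurable; have := hcj1.measurable; have := hch.measurable
    simp only [D₀]; fun_prop
  have hm1 : Measurable D₁ := by
    have := hcj.measurable; have := hcj1.measurable; have := hch.measurable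
    simp only [D₁, p₁]; fun_prop
  have hB0 : ∀ v, |D₀ v| ≤ (K + r + 2) * k v := fun v => by
    have j0 := (jac_pos hP v).le
    have j1 := jac_le_one hP v
    have b1 := (hb v).1
    have hv : 2 * |v| ≤ 1 + v ^ 2 := by
      rw [← sq_abs]; nlinarith [sq_nonneg (|v| - 1)]
    have : |jac₁ P v - 2 * r * (v * jac P v)| ≤ K + r + r * v ^ 2 := by
      calc _ ≤ |jac₁ P v| + |2 * r * (v * jac P v)| := abs_sub _ _
        _ = |jac₁ P v| + r * (2 * |v|) * jac P v := by
          rw [abs_mul, abs_mul v, abs_of_pos (by positivity : 0 < 2 * r), abs_of_nonneg j0]; ring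
        _ ≤ K + r * (1 + v ^ 2) * 1 := by gcongr
        _ = _ := by ring
    simp only [D₀]
    rw [abs_mul, abs_of_pos (hh0 v)]
    calc _ ≤ h v * (K + r + r * v ^ 2) := by gcongr
      _ = (K + r) * h v + r * v ^ 2 * h v := by ring
      _ ≤ (K + r) * k v + 2 * k v :=
        add_le_add (mul_le_mul_of_nonneg_left (hhk v) (by positivity)) (habs v)
      _ = _ := by ring
  have hB1 : ∀ v, |D₁ v| ≤ ((K ^ 2 + 7 * K + 10) * (1 + r)) * k v := fun v => by
    have j0 := (jac_pos hP v).le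
    have j1 := jac_le_one hP v
    obtain ⟨b1, b2, b3⟩ := hb v
    have jsq : jac P v ^ 2 ≤ 1 := pow_le_one₀ j0 j1
    have : |p₁ v| ≤ K ^ 2 + K + 2 * r + 6 * r * K + 4 * r * (r * v ^ 2) := by
      have a1 : |jac₁ P v ^ 2| ≤ K ^ 2 := by rw [abs_pow]; gcongr
      have a2 : |jac P v * jac₂ P v| ≤ K := by
        rw [abs_mul, abs_of_nonneg j0]
        calc _ ≤ 1 * K := by gcongr
          _ = K := one_mul K
      have a3 : |2 * r * jac P v ^ 2| ≤ 2 * r := by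
        rw [abs_of_nonneg (by positivity)]
        exact mul_le_of_le_one_right (by positivity) jsq
      have a4 : |6 * r * (jac P v * (v * jac₁ P v))| ≤ 6 * r * K := by
        rw [abs_mul, abs_of_pos (by positivity : 0 < 6 * r), abs_mul, abs_of_nonneg j0]
        calc _ ≤ 6 * r * (1 * K) := by gcongr
          _ = _ := by ring
      have a5 : |4 * r * (r * v ^ 2) * jac P v ^ 2| ≤ 4 * r * (r * v ^ 2) := by
        rw [abs_of_nonneg (by positivity)]
        exact mul_le_of_le_one_right (by positivity) jsq
      simp only [p₁]
      rw [abs_le] at *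
      constructor <;> linarith [a1.1, a1.2, a2.1, a2.2, a3.1, a3.2, a4.1, a4.2, a5.1, a5.2]
    simp only [D₁]
    rw [abs_mul, abs_of_pos (hh0 v)]
    calc _ ≤ h v * (K ^ 2 + K + 2 * r + 6 * r * K + 4 * r * (r * v ^ 2)) := by
          gcongr
      _ = (K ^ 2 + K + 2 * r + 6 * r * K) * h v + 4 * r * (r * v ^ 2 * h v) := by ring
      _ ≤ (K ^ 2 + K + 2 * r + 6 * r * K) * k v + 4 * r * (2 * k v) :=
          add_le_add (mul_le_mul_of_nonneg_left (hhk v) (by positivity))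
            (mul_le_mul_of_nonneg_left (habs v) (by positivity))
      _ = (K ^ 2 + K + 10 * r + 6 * r * K) * k v := by ring
      _ ≤ _ := by
          refine mul_le_mul_of_nonneg_right ?_ (hk0 v).le
          have : 0 < K ^ 2 * r := by positivity
          have : 0 < K * r := by positivity
          nlinarith
  have hI0 : Integrable D₀ := (hkint.const_mul _).mono' hm0.aestronglyMeasurable
    (Eventually.of_forall hB0)
  have hI1 : Integrable D₁ := (hkint.const_mul _).mono' hm1.aestronglyMeasurable
    (Eventually.of_forall hB1)
  have e0 := osc_by_parts (m := m) hP hhInt hI0 hd0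
  have e1 := osc_by_parts (m := m) hP hI0 hI1 hd1
  rw [← sq_abs, pow_two, mul_assoc, e0, e1]
  have hg : ∫ v, k v = √(2 * Real.pi / r) := by
    simp only [hk]
    rw [integral_gaussian]; congr 1; field_simp
  rw [← hg, ← integral_const_mul]
  refine norm_integral_le_of_norm_le (hkint.const_mul _) (Eventually.of_forall fun v => ?_)
  rw [norm_mul, norm_osc, mul_one, Complex.norm_real]
  exact hB1 v

/-! ### Poisson summation in the phase variable -/

/-- Decay of the Fourier coefficients with an exponent `b > 1`. For each Gaussian the trivial bound
and `osc_bound` are interpolated as `N ≤ N₀^{1-θ} N₁^θ` with `θ = 1/2 + ε`, which gives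
`|m|^{-1-2ε}`; the resulting growth `r^ε` is integrable against the mixing density as long as
`ε < Re s - 1/2`. -/
theorem fourier_decay {s : ℂ} (hs : 1 / 2 < s.re) {x : ℝ} (hx : 0 < x) {P : ℝ} (hP : 0 < P) :
    ∃ b : ℝ, 1 < b ∧ ∃ C : ℝ, ∀ m : ℝ, m ≠ 0 →
      ‖∫ v, gaussMix s x v * osc P m v‖ ≤ C * |m| ^ (-b) := by
  obtain ⟨C₀, hC₀, hosc⟩ := osc_bound hP
  set ε := min ((s.re - 1 / 2) / 2) (1 / 2) with hε
  have hε0 : 0 < ε := lt_min (by linarith) (by norm_num)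
  have hε1 : ε < s.re - 1 / 2 := (min_le_left _ _).trans_lt (by linarith)
  have hε2 : ε ≤ 1 / 2 := min_le_right _ _
  set θ := 1 / 2 + ε with hθ
  have i1 := integrableOn_mixDensity_mul_rpow (s := s) hx (e := -(1 / 2)) (by linarith)
  have i2 := integrableOn_mixDensity_mul_rpow (s := s) hx hε1
  refine ⟨2 * θ, by linarith, √(2 * Real.pi) * C₀ ^ θ * ∫ r in Ioi (0 : ℝ),
    (‖mixDensity s x r‖ * r ^ (-(1 / 2) : ℝ) + ‖mixDensity s x r‖ * r ^ ε), fun m hm => ?_⟩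
  rw [integral_gaussMix_mul hs hx (continuous_osc hP m) (fun v => (norm_osc P m v).le),
    mul_right_comm, ← integral_const_mul]
  refine norm_integral_le_of_norm_le ((i1.add i2).const_mul _) ?_
  refine (ae_restrict_mem measurableSet_Ioi).mono (fun r hr => ?_)
  have hr : 0 < r := hr
  rw [norm_mul]
  have h2 := hosc r m hr
  set N := ‖∫ v : ℝ, (Real.exp (-(r * v ^ 2)) : ℂ) * osc P m v‖ with hN
  set G := √(2 * Real.pi / r) with hG
  have hG0 : 0 < G := Real.sqrt_pos.2 (by positivity)
  have hN0 : 0 ≤ N := norm_nonneg _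
  have h1 : N ≤ G := by
    have hle : N ≤ ∫ v : ℝ, Real.exp (-r * v ^ 2) := by
      refine norm_integral_le_of_norm_le (integrable_exp_neg_mul_sq hr)
        (Eventually.of_forall fun v => ?_)
      rw [norm_mul, norm_osc, mul_one, Complex.norm_real, Real.norm_of_nonneg (Real.exp_pos _).le,
        neg_mul]
    rw [integral_gaussian] at hle
    refine hle.trans (Real.sqrt_le_sqrt ?_)
    gcongr
    linarith [Real.pi_pos]
  have hm2 : 0 < m ^ 2 := by positivity
  have h2' : N ≤ C₀ * (1 + r) * G / m ^ 2 := by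
    rw [le_div_iff₀ hm2]; linarith
  -- interpolate between the two bounds for `N`
  have key : N ≤ √(2 * Real.pi) * C₀ ^ θ * |m| ^ (-(2 * θ)) * (r ^ (-(1 / 2) : ℝ) + r ^ ε) := by
    calc N = N ^ (1 - θ) * N ^ θ := by
          rw [← Real.rpow_add_of_nonneg hN0 (by linarith) (by linarith), sub_add_cancel,
            Real.rpow_one]
      _ ≤ G ^ (1 - θ) * (C₀ * (1 + r) * G / m ^ 2) ^ θ := by
          gcongr; linarith
      _ = G * C₀ ^ θ * |m| ^ (-(2 * θ)) * (1 + r) ^ θ := by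
          rw [Real.div_rpow (by positivity) hm2.le, Real.mul_rpow (by positivity) hG0.le,
            Real.mul_rpow hC₀.le (by positivity), ← sq_abs m, ← Real.rpow_natCast |m| 2,
            ← Real.rpow_mul (abs_nonneg m), Real.rpow_neg (abs_nonneg m)]
          have : G ^ (1 - θ) * G ^ θ = G := by
            rw [← Real.rpow_add hG0, sub_add_cancel, Real.rpow_one]
          push_cast
          rw [div_eq_mul_inv]
          linear_combination (C₀ ^ θ * (|m| ^ (2 * θ))⁻¹ * (1 + r) ^ θ) * this
      _ ≤ G * C₀ ^ θ * |m| ^ (-(2 * θ)) * (1 + r ^ θ) := by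
          gcongr
          have := Real.rpow_add_le_add_rpow zero_le_one hr.le (by linarith : 0 ≤ θ)
            (by linarith : θ ≤ 1)
          rwa [Real.one_rpow] at this
      _ = _ := by
          have hrε : r ^ ε = r ^ (-(1 / 2) : ℝ) * r ^ θ := by
            rw [← Real.rpow_add hr]; congr 1; rw [hθ]; ring
          rw [hG, Real.sqrt_div (by positivity), Real.sqrt_eq_rpow r, div_eq_mul_inv,
            ← Real.rpow_neg hr.le, hrε]
          ring
  calc ‖mixDensity s x r‖ * N ≤ ‖mixDensity s x r‖ * _ :=
        mul_le_mul_of_nonneg_left key (norm_nonneg _)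
    _ = _ := by ring

theorem phase_strictMono {P : ℝ} (hP : 0 < P) : StrictMono (phase P) := by
  refine strictMono_of_deriv_pos (fun v => ?_)
  rw [(hasDerivAt_phase hP v).deriv]
  exact inv_pos.2 (jac_pos hP v)

theorem phase_neg (P v : ℝ) : phase P (-v) = -phase P v := by
  unfold phase; rw [neg_div, Real.arctan_neg]; ring

theorem abs_phase_sub (P v : ℝ) : |phase P v - v| < Real.pi := by
  unfold phase
  rw [add_sub_cancel_left, abs_lt]
  constructor <;> linarith [Real.arctan_lt_pi_div_two (v / P), Real.neg_pi_div_two_lt_arctan (v / P)]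

theorem phase_surjective {P : ℝ} (hP : 0 < P) : Function.Surjective (phase P) := by
  refine (continuous_phase hP).surjective ?_ ?_
  · refine tendsto_atTop_mono (fun v => ?_) (tendsto_atTop_add_const_right atTop (-Real.pi) tendsto_id)
    have := (abs_lt.1 (abs_phase_sub P v)).1
    simp only [id]; linarith
  · refine tendsto_atBot_mono (fun v => ?_) (tendsto_atBot_add_const_right atBot Real.pi tendsto_id)
    have := (abs_lt.1 (abs_phase_sub P v)).2
    simp only [id]; linarith

/-- The amplitude is even and the phase odd, so only the cosine survives. -/
theorem integral_osc_eq_cos {s : ℂ} (hs : 1 / 2 < s.re) {x : ℝ} (hx : 0 < x) {P : ℝ} (hP : 0 < P)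
    (m : ℝ) :
    ∫ v, gaussMix s x v * osc P m v =
      2 * ∫ v in Ioi (0 : ℝ), gaussMix s x v * (Real.cos (m * phase P v) : ℂ) := by
  have hi : ∀ m, Integrable (fun v => gaussMix s x v * osc P m v) := fun m =>
    (integrable_gaussMix hs hx).mul_bdd (c := 1) (continuous_osc hP m).aestronglyMeasurable
      (Eventually.of_forall fun v => (norm_osc P m v).le)
  have hneg : ∫ v in Iic (0 : ℝ), gaussMix s x v * osc P m v =
      ∫ v in Ioi (0 : ℝ), gaussMix s x v * osc P (-m) v := by
    have := integral_comp_neg_Ioi (0 : ℝ) (fun v => gaussMix s x v * osc P m v)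
    rw [neg_zero] at this
    rw [← this]
    congr 1; funext v
    simp only [gaussMix_neg, osc, phase_neg, neg_mul, mul_neg]
  rw [← intervalIntegral.integral_Iic_add_Ioi (hi m).integrableOn (hi m).integrableOn (b := 0), hneg,
    ← integral_add (hi (-m)).integrableOn (hi m).integrableOn, ← integral_const_mul]
  congr 1; funext v
  rw [Complex.ofReal_cos, Complex.cos, osc, osc]
  push_cast
  simp only [neg_mul, neg_neg]
  ring

/-- Poisson summation for `f(t) = 2π F(g t) / φ'(g t)`, where `g t` solves `φ(g t) = 2πt`. The
change of variables `v = g t` turns the Fourier coefficients of `f` into `∫ F(v) e^{-i m φ(v)} dv`,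
and `f` is even, so both bilateral sums fold onto the positive integers. -/
theorem poisson_phase {s : ℂ} (hs : 1 / 2 < s.re) {x : ℝ} (hx : 0 < x) {P : ℝ} (hP : 0 < P)
    {l : ℕ → ℝ} (hl : ∀ n, phase P (l n) = 2 * Real.pi * (n + 1)) :
    ∑' m : ℕ, ∫ v in Ioi (0 : ℝ), gaussMix s x v * (Real.cos ((m + 1 : ℝ) * phase P v) : ℂ) =
      Real.pi * ∑' n : ℕ, gaussMix s x (l n) * (jac P (l n) : ℂ)
      + Real.pi / 2 * (gaussMix s x 0 * (jac P 0 : ℂ)) - 1 / 4 * ∫ v, gaussMix s x v := by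
  have hpi := Real.pi_pos
  let e : ℝ ≃o ℝ := (phase_strictMono hP).orderIsoOfSurjective _ (phase_surjective hP)
  have he : ∀ v, e v = phase P v := fun v => rfl
  have hes : ∀ v, e.symm (phase P v) = v := fun v => e.symm_apply_apply v
  have hes' : ∀ t, phase P (e.symm t) = t := fun t => e.apply_symm_apply t
  let g : ℝ → ℝ := fun t => e.symm (2 * Real.pi * t)
  have hgc : Continuous g := e.symm.continuous.comp (continuous_const.mul continuous_id)
  have hgp : ∀ t, phase P (g t) = 2 * Real.pi * t := fun t => hes' _
  have hginv : ∀ v, g (phase P v / (2 * Real.pi)) = v := fun v => by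
    simp only [g]; rw [mul_div_cancel₀ _ (by positivity), hes]
  have hgneg : ∀ t, g (-t) = -g t := fun t => (phase_strictMono hP).injective (by
    rw [phase_neg, hgp, hgp]; ring)
  let f : ℝ → ℂ := fun t => 2 * Real.pi * (gaussMix s x (g t) * (jac P (g t) : ℂ))
  have hfc : Continuous f := by
    have h1 := (continuous_gaussMix hs hx).comp hgc
    have h2 := (continuous_jac hP).comp hgc
    exact continuous_const.mul (h1.mul (Complex.continuous_ofReal.comp h2))
  have hfeven : ∀ t, f (-t) = f t := fun t => by
    simp only [f, hgneg, gaussMix_neg]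
    simp only [jac, neg_sq]
  -- decay of `f`
  obtain ⟨C, hC, hdec⟩ := gaussMix_decay hs hx
  have hfdec : ∀ t, 1 ≤ |t| → ‖f t‖ ≤ 2 * C / Real.pi * |t| ^ (-2 : ℝ) := by
    intro t ht
    have hg : Real.pi * |t| ≤ |g t| := by
      have h1 := abs_phase_sub P (g t)
      rw [hgp] at h1
      have h2 := abs_sub_abs_le_abs_sub (2 * Real.pi * t) (g t)
      rw [abs_mul, abs_of_pos (by positivity : 0 < 2 * Real.pi)] at h2
      nlinarith
    have hgpos : 0 < |g t| := lt_of_lt_of_le (by nlinarith) hg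
    have hg0 : g t ≠ 0 := abs_pos.1 hgpos
    have hb := hdec (g t) hg0
    have ht0 : 0 < |t| := by linarith
    simp only [f]
    rw [norm_mul, norm_mul, norm_mul, Complex.norm_real, Complex.norm_real,
      Real.norm_of_nonneg hpi.le, Real.norm_of_nonneg (jac_pos hP _).le, Complex.norm_ofNat]
    rw [show (-2 : ℝ) = -((2 : ℕ) : ℝ) by norm_num, Real.rpow_neg (abs_nonneg t),
      Real.rpow_natCast]
    calc 2 * Real.pi * (‖gaussMix s x (g t)‖ * jac P (g t))
        ≤ 2 * Real.pi * (C / (g t) ^ 2 * 1) := by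
          gcongr
          · exact (jac_pos hP _).le
          · exact jac_le_one hP _
      _ = 2 * Real.pi * (C / |g t| ^ 2) := by rw [sq_abs, mul_one]
      _ ≤ 2 * Real.pi * (C / (Real.pi * |t|) ^ 2) := by gcongr
      _ = _ := by field_simp
  have hfO : f =O[cocompact ℝ] fun t => |t| ^ (-2 : ℝ) := by
    refine Asymptotics.IsBigO.of_bound (2 * C / Real.pi) ?_
    have h1 : ∀ᶠ t : ℝ in cocompact ℝ, 1 ≤ |t| := by
      have := (tendsto_norm_cocompact_atTop (E := ℝ)).eventually_ge_atTop 1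
      simpa only [Real.norm_eq_abs] using this
    filter_upwards [h1] with t ht
    rw [Real.norm_of_nonneg (by positivity : 0 ≤ |t| ^ (-2 : ℝ))]
    exact hfdec t ht
  -- the Fourier transform of `f`
  have hF : ∀ n : ℤ, FourierTransform.fourier f (n : ℝ) = ∫ v, gaussMix s x v * osc P n v := by
    intro n
    rw [Real.fourier_real_eq_integral_exp_smul]
    have hcv := integral_image_eq_integral_abs_deriv_smul (s := univ)
      (f := fun v => phase P v / (2 * Real.pi)) (f' := fun v => (jac P v)⁻¹ / (2 * Real.pi))
      MeasurableSet.univ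
      (fun v _ => ((hasDerivAt_phase hP v).div_const _).hasDerivWithinAt)
      (fun a _ b _ hab => by
        have := congrArg g hab
        simpa only [hginv] using this)
      (fun t : ℝ => Complex.exp (↑(-2 * Real.pi * t * n) * Complex.I) • f t)
    rw [image_univ, Function.Surjective.range_eq (fun t => ⟨g t, by
      simp only [hgp]; field_simp⟩), setIntegral_univ, setIntegral_univ] at hcv
    rw [hcv]
    congr 1; funext v
    have hj := jac_pos hP v
    have hj0 : (jac P v : ℂ) ≠ 0 := by exact_mod_cast hj.ne'
    have hpi0 : (Real.pi : ℂ) ≠ 0 := by exact_mod_cast hpi.ne'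
    simp only [f, hginv]
    rw [abs_of_pos (by positivity), osc,
      show -2 * Real.pi * (phase P v / (2 * Real.pi)) * n = -(n * phase P v) by field_simp,
      Complex.real_smul, smul_eq_mul]
    push_cast
    field_simp
  have hsumF : Summable fun n : ℤ => FourierTransform.fourier f (n : ℝ) := by
    obtain ⟨b, hb, C', hC'⟩ := fourier_decay hs hx hP
    refine Summable.of_norm_bounded_eventually ((Real.summable_abs_int_rpow hb).mul_left C') ?_
    filter_upwards [(Set.finite_singleton (0 : ℤ)).compl_mem_cofinite] with n hn
    rw [hF]
    exact hC' n (by exact_mod_cast hn)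
  have hsumf : Summable fun n : ℤ => f n := by
    refine Summable.of_norm_bounded_eventually
      ((Real.summable_abs_int_rpow one_lt_two).mul_left (2 * C / Real.pi)) ?_
    filter_upwards [(Set.finite_singleton (0 : ℤ)).compl_mem_cofinite] with n hn
    refine hfdec n ?_
    have : 1 ≤ |n| := Int.one_le_abs hn
    exact_mod_cast this
  have hpoisson := Real.tsum_eq_tsum_fourier_of_rpow_decay_of_summable hfc one_lt_two hfO hsumF 0
  simp only [zero_add, QuotientAddGroup.mk_zero, fourier_eval_zero, mul_one] at hpoisson
  rw [tsum_int_eq_zero_add_two_mul_tsum_pnat (fun n => by push_cast; exact hfeven n) hsumf,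
    tsum_int_eq_zero_add_two_mul_tsum_pnat (fun n => by
      simp only [hF, integral_osc_eq_cos hs hx hP]
      push_cast
      simp only [neg_mul, Complex.cos_neg]) hsumF] at hpoisson
  simp only [hF] at hpoisson
  have c1 : ∑' n : ℕ+, f ((n : ℕ) : ℤ) =
      2 * Real.pi * ∑' n : ℕ, gaussMix s x (l n) * (jac P (l n) : ℂ) := by
    rw [tsum_pnat_eq_tsum_succ (f := fun n : ℕ => f ((n : ℤ) : ℝ)), ← tsum_mul_left]
    congr 1; funext n
    have : g (((n + 1 : ℕ) : ℤ) : ℝ) = l n := (phase_strictMono hP).injective (by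
      rw [hgp, hl]; push_cast; ring)
    simp only [f, this]
  have c2 : ∑' n : ℕ+, ∫ v, gaussMix s x v * osc P (((n : ℕ) : ℤ) : ℝ) v =
      2 * ∑' m : ℕ, ∫ v in Ioi (0 : ℝ), gaussMix s x v *
        (Real.cos ((m + 1 : ℝ) * phase P v) : ℂ) := by
    rw [tsum_pnat_eq_tsum_succ (f := fun n : ℕ => ∫ v, gaussMix s x v * osc P ((n : ℤ) : ℝ) v),
      ← tsum_mul_left]
    congr 1; funext n
    rw [integral_osc_eq_cos hs hx hP]
    push_cast; rfl
  have c3 : f ((0 : ℤ) : ℝ) = 2 * Real.pi * (gaussMix s x 0 * (jac P 0 : ℂ)) := by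
    have : g ((0 : ℤ) : ℝ) = 0 := (phase_strictMono hP).injective (by
      rw [hgp]; simp [phase])
    simp only [f, this]
  have c4 : ∫ v, gaussMix s x v * osc P ((0 : ℤ) : ℝ) v = ∫ v, gaussMix s x v := by
    simp [osc]
  rw [c1, c2, c3, c4] at hpoisson
  simp only [nsmul_eq_mul, Nat.cast_ofNat] at hpoisson
  linear_combination (-1 / 4) * hpoisson

/-! ### Bessel terms and the final identity -/

/-- The substitution `y = v t` in the integral defining `besselK`. -/
theorem bessel_integral_scale (s : ℂ) (x : ℝ) {v : ℝ} (hv : 0 < v) :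
    (v : ℂ) ^ (s - 1 / 2) * (v : ℂ) ^ (s - 1 / 2) *
      ∫ t in Ioi (1 : ℝ), Complex.exp (-(((v * x : ℝ) : ℂ) * t)) *
        ((t ^ 2 - 1 : ℝ) : ℂ) ^ (s - 1) =
    ∫ y in Ioi v, (Real.exp (-(x * y)) : ℂ) * ((y ^ 2 - v ^ 2 : ℝ) : ℂ) ^ (s - 1) := by
  have hv0 : (v : ℂ) ≠ 0 := by exact_mod_cast hv.ne'
  have h := integral_comp_mul_left_Ioi (fun y : ℝ => (Real.exp (-(x * y)) : ℂ) *
    ((y ^ 2 - v ^ 2 : ℝ) : ℂ) ^ (s - 1)) 1 hv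
  rw [mul_one, Complex.real_smul] at h
  have e : ∀ t ∈ Ioi (1 : ℝ), (Real.exp (-(x * (v * t))) : ℂ) *
      (((v * t) ^ 2 - v ^ 2 : ℝ) : ℂ) ^ (s - 1) = ((v : ℂ) ^ (s - 1) * (v : ℂ) ^ (s - 1)) *
      (Complex.exp (-(((v * x : ℝ) : ℂ) * t)) * ((t ^ 2 - 1 : ℝ) : ℂ) ^ (s - 1)) := by
    intro t ht
    have ht : 1 < t := ht
    have ht2 : 0 ≤ t ^ 2 - 1 := by nlinarith
    rw [show (((v * t) ^ 2 - v ^ 2 : ℝ) : ℂ) = (v : ℂ) * ((v * (t ^ 2 - 1) : ℝ) : ℂ) by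
      push_cast; ring, Complex.mul_cpow_ofReal_nonneg hv.le (by positivity), Complex.ofReal_mul v,
      Complex.mul_cpow_ofReal_nonneg hv.le ht2,
      show (Real.exp (-(x * (v * t))) : ℂ) = Complex.exp (-(((v * x : ℝ) : ℂ) * t)) by
        push_cast; congr 1; ring]
    ring
  rw [setIntegral_congr_fun measurableSet_Ioi e, integral_const_mul] at h
  have hp : (v : ℂ) ^ (s - 1 / 2) * (v : ℂ) ^ (s - 1 / 2) =
      v * ((v : ℂ) ^ (s - 1) * (v : ℂ) ^ (s - 1)) := by
    rw [← Complex.cpow_add _ _ hv0, ← Complex.cpow_add _ _ hv0]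
    nth_rewrite 2 [← Complex.cpow_one (v : ℂ)]
    rw [← Complex.cpow_add _ _ hv0]
    congr 1; ring
  rw [hp, mul_assoc, h]
  push_cast
  field_simp

theorem besselK_eq_gaussMix {s : ℂ} (hs : 1 / 2 < s.re) {x : ℝ} (hx : 0 < x) {l : ℝ}
    (hl : 0 < l) :
    (l : ℂ) ^ (s - 1 / 2) * besselK (s - 1 / 2) (2 * Real.pi * l * x) =
      (x : ℂ) ^ (s - 1 / 2) / (2 * ((2 : ℂ) ^ (s - 1 / 2)) ^ 2 * (Real.pi : ℂ) ^ (s - 1 / 2)) *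
        gaussMix s x (2 * Real.pi * l) := by
  have hpi := Real.pi_pos
  have hv : 0 < 2 * Real.pi * l := by positivity
  have h1 := bessel_integral_scale s x hv
  rw [bessel_as_gaussMix hs hx hv.le] at h1
  have hG : Complex.Gamma s ≠ 0 := Complex.Gamma_ne_zero_of_re_pos (by linarith)
  have hsq : (√Real.pi : ℂ) ≠ 0 := by exact_mod_cast (Real.sqrt_pos.2 hpi).ne'
  have hT : (2 : ℂ) ^ (s - 1 / 2) ≠ 0 := by simp [Complex.cpow_eq_zero_iff]
  have hPi : (Real.pi : ℂ) ^ (s - 1 / 2) ≠ 0 := by simp [Complex.cpow_eq_zero_iff, hpi.ne']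
  have hL : (l : ℂ) ^ (s - 1 / 2) ≠ 0 := by simp [Complex.cpow_eq_zero_iff, hl.ne']
  have e1 : ((2 * Real.pi * l : ℝ) : ℂ) ^ (s - 1 / 2) =
      (2 : ℂ) ^ (s - 1 / 2) * (Real.pi : ℂ) ^ (s - 1 / 2) * (l : ℂ) ^ (s - 1 / 2) := by
    rw [Complex.ofReal_mul, Complex.mul_cpow_ofReal_nonneg (by positivity) hl.le,
      Complex.ofReal_mul, Complex.mul_cpow_ofReal_nonneg (by positivity) hpi.le]
    norm_num
  have e2 : ((2 * Real.pi * l * x / 2 : ℝ) : ℂ) ^ (s - 1 / 2) =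
      (Real.pi : ℂ) ^ (s - 1 / 2) * (l : ℂ) ^ (s - 1 / 2) * (x : ℂ) ^ (s - 1 / 2) := by
    rw [show 2 * Real.pi * l * x / 2 = Real.pi * l * x by ring, Complex.ofReal_mul,
      Complex.mul_cpow_ofReal_nonneg (by positivity) hx.le,
      Complex.ofReal_mul, Complex.mul_cpow_ofReal_nonneg hpi.le hl.le]
  rw [besselK, e2, sub_add_cancel, show s - 1 / 2 - 1 / 2 = s - 1 by ring]
  rw [e1] at h1
  generalize (∫ t in Ioi (1 : ℝ), Complex.exp (-(((2 * Real.pi * l * x : ℝ) : ℂ) * t)) *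
        ((t ^ 2 - 1 : ℝ) : ℂ) ^ (s - 1)) = J at h1 ⊢
  generalize (2 : ℂ) ^ (s - 1 / 2) = T at *
  generalize (Real.pi : ℂ) ^ (s - 1 / 2) = Q at *
  generalize (l : ℂ) ^ (s - 1 / 2) = L at *
  have h2 : J = Complex.Gamma s / (2 * (√Real.pi : ℂ)) * gaussMix s x (2 * Real.pi * l) /
      (T * Q * L * (T * Q * L)) := by
    rw [eq_div_iff (by positivity), ← h1]; ring
  rw [h2]
  field_simp

/-- The transcendental equation for `λ`, read on the branch `k - 1/2 < λ < k`, says `φ(2πλ) = 2πk`. -/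
theorem phase_lam {p l k : ℝ} (h1 : k - 1 / 2 < l) (h2 : l < k)
    (h3 : Real.tan (Real.pi * k - Real.pi * l) = l / p) :
    phase (2 * Real.pi * p) (2 * Real.pi * l) = 2 * Real.pi * k := by
  have hpi := Real.pi_pos
  have : Real.arctan (l / p) = Real.pi * k - Real.pi * l := by
    rw [← h3, Real.arctan_tan] <;> nlinarith
  rw [phase, mul_div_mul_left _ _ (by positivity), this]
  ring

/-- The summed double integrals in terms of `gaussMix`: `poisson_phase` at `P = 2πp`, with the weights
`w_n` and `1 / (1 + 1/(πp))` recognised as values of `jac`. -/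
theorem watson_sum {p : ℝ} (hp : 0 < p) {lam : ℕ → ℝ}
    (hlam : ∀ n : ℕ, 1 ≤ n → (n : ℝ) - 1 / 2 < lam n ∧ lam n < n ∧
      Real.tan (Real.pi * lam n) = -(lam n) / p)
    {x : ℝ} (hx : 0 < x) {s : ℂ} (hs : 1 / 2 < s.re) :
    ∑' m : ℕ, ∫ y in Ioi (0 : ℝ), ∫ u in (0 : ℝ)..1,
          (y : ℂ) ^ (2 * s - 1) * (Real.exp (-(x * y)) : ℂ) * ((1 - u ^ 2 : ℝ) : ℂ) ^ (s - 1) *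
            (Real.cos ((m + 1) * y * u +
              2 * (m + 1) * Real.arctan (y * u / (2 * Real.pi * p))) : ℂ) =
      Complex.Gamma s / (2 * (√Real.pi : ℂ)) * (Real.pi * ∑' n : ℕ,
        gaussMix s x (2 * Real.pi * lam (n + 1)) * (((p ^ 2 + lam (n + 1) ^ 2) /
          (p * (p + 1 / Real.pi) + lam (n + 1) ^ 2) : ℝ) : ℂ)
      + Real.pi / 2 * (gaussMix s x 0 / ((1 + 1 / (Real.pi * p) : ℝ) : ℂ))
      - 1 / 4 * ∫ v, gaussMix s x v) := by
  have hpi := Real.pi_pos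
  have hP : 0 < 2 * Real.pi * p := by positivity
  have hl : ∀ n : ℕ, phase (2 * Real.pi * p) (2 * Real.pi * lam (n + 1)) =
      2 * Real.pi * (n + 1) := by
    intro n
    obtain ⟨h1, h2, h3⟩ := hlam (n + 1) (by omega)
    push_cast at h1 h2
    refine phase_lam h1 h2 ?_
    have := Real.tan_nat_mul_pi_sub (Real.pi * lam (n + 1)) (n + 1)
    push_cast at this
    rw [mul_comm Real.pi, this, h3]; ring
  have hps := poisson_phase hs hx hP hl
  have hj : ∀ v : ℝ, jac (2 * Real.pi * p) (2 * Real.pi * v) =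
      (p ^ 2 + v ^ 2) / (p * (p + 1 / Real.pi) + v ^ 2) := by
    intro v
    have h1 : 0 < p * (p + 1 / Real.pi) + v ^ 2 := by positivity
    rw [jac, div_eq_div_iff (by positivity) h1.ne']
    field_simp
  have hj0 : (jac (2 * Real.pi * p) 0 : ℂ) = 1 / ((1 + 1 / (Real.pi * p) : ℝ) : ℂ) := by
    rw [← Complex.ofReal_one, ← Complex.ofReal_div]
    congr 1
    rw [jac]
    field_simp
    ring
  simp only [hj] at hps
  rw [hj0, mul_one_div] at hps
  rw [← hps, ← tsum_mul_left]
  congr 1; funext m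
  rw [← double_integral hs hx (C := fun v => (Real.cos ((m + 1 : ℝ) * phase (2 * Real.pi * p) v) : ℂ))
    (by have := continuous_phase hP; fun_prop)
    (fun v => by rw [Complex.norm_real]; exact Real.abs_cos_le_one _)]
  congr 1; funext y
  congr 1; funext u
  congr 3
  rw [phase]; ring

theorem watson_formula_koshliakov_third_analogue
    (p : ℝ) (hp : 0 < p) (lam : ℕ → ℝ)
    (hlam : ∀ n : ℕ, 1 ≤ n → (n : ℝ) - 1 / 2 < lam n ∧ lam n < n ∧
      Real.tan (Real.pi * lam n) = -(lam n) / p)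
    (x : ℝ) (hx : 0 < x) (s : ℂ) (hs : 1 / 2 < s.re) :
    (2 : ℂ) ^ (1 - 2 * s) * (x : ℂ) ^ (s - 1 / 2) * (Real.pi : ℂ) ^ (-s) / Complex.Gamma s *
        ∑' m : ℕ, ∫ y in Set.Ioi (0 : ℝ), ∫ u in (0 : ℝ)..1,
          (y : ℂ) ^ (2 * s - 1) * (Real.exp (-(x * y)) : ℂ) * ((1 - u ^ 2 : ℝ) : ℂ) ^ (s - 1) *
            (Real.cos ((m + 1) * y * u +
              2 * (m + 1) * Real.arctan (y * u / (2 * Real.pi * p))) : ℂ) =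
      (∑' n : ℕ, (((p ^ 2 + lam (n + 1) ^ 2) / (p * (p + 1 / Real.pi) + lam (n + 1) ^ 2) : ℝ) : ℂ) *
          ((lam (n + 1) : ℝ) : ℂ) ^ (s - 1 / 2) *
            besselK (s - 1 / 2) (2 * Real.pi * lam (n + 1) * x))
      + ((Real.pi * x : ℝ) : ℂ) ^ ((1 : ℂ) / 2 - s) / 4 *
          (Complex.Gamma (s - 1 / 2) / ((1 + 1 / (Real.pi * p) : ℝ) : ℂ))
      - (Real.pi : ℂ) ^ (-s) * (x : ℂ) ^ (-s - 1 / 2) * Complex.Gamma s / 4 := by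
  have hpi := Real.pi_pos
  have hG : Complex.Gamma s ≠ 0 := Complex.Gamma_ne_zero_of_re_pos (by linarith)
  have hsq : (√Real.pi : ℂ) ≠ 0 := by exact_mod_cast (Real.sqrt_pos.2 hpi).ne'
  have hsq2 : (Real.pi : ℂ) = (√Real.pi : ℂ) ^ 2 := by
    exact_mod_cast (Real.sq_sqrt hpi.le).symm
  have hpi0 : (Real.pi : ℂ) ≠ 0 := by exact_mod_cast hpi.ne'
  have hx0 : (x : ℂ) ≠ 0 := by exact_mod_cast hx.ne'
  have hT : (2 : ℂ) ^ (s - 1 / 2) ≠ 0 := by simp [Complex.cpow_eq_zero_iff]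
  have hPi : (Real.pi : ℂ) ^ (s - 1 / 2) ≠ 0 := by simp [Complex.cpow_eq_zero_iff, hpi.ne']
  have hX : (x : ℂ) ^ (s - 1 / 2) ≠ 0 := by
    simp [Complex.cpow_eq_zero_iff, ne_of_gt hx]
  -- every power is expressed through `2 ^ (s - 1/2)`, `π ^ (s - 1/2)` and `x ^ (s - 1/2)`
  have e1 : (2 : ℂ) ^ (1 - 2 * s) = (((2 : ℂ) ^ (s - 1 / 2)) ^ 2)⁻¹ := by
    rw [← Complex.cpow_nat_mul, ← Complex.cpow_neg]; congr 1; push_cast; ring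
  have e2 : (Real.pi : ℂ) ^ (-s) = ((Real.pi : ℂ) ^ (s - 1 / 2) * (√Real.pi : ℂ))⁻¹ := by
    rw [Real.sqrt_eq_rpow, Complex.ofReal_cpow hpi.le, ← Complex.cpow_add _ _ hpi0,
      ← Complex.cpow_neg]
    congr 1; push_cast; ring
  have e3 : ((Real.pi * x : ℝ) : ℂ) ^ ((1 : ℂ) / 2 - s) =
      ((Real.pi : ℂ) ^ (s - 1 / 2) * (x : ℂ) ^ (s - 1 / 2))⁻¹ := by
    rw [← Complex.mul_cpow_ofReal_nonneg hpi.le hx.le, ← Complex.ofReal_mul, ← Complex.cpow_neg]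
    congr 1; ring
  have e4 : (x : ℂ) ^ (-s - 1 / 2) = ((x : ℂ) ^ (s - 1 / 2) * x)⁻¹ := by
    nth_rewrite 3 [← Complex.cpow_one (x : ℂ)]
    rw [← Complex.cpow_add _ _ hx0, ← Complex.cpow_neg]
    congr 1; ring
  have e5 : (1 / ((x ^ 2 / 4 : ℝ) : ℂ)) ^ (s - 1 / 2) =
      ((2 : ℂ) ^ (s - 1 / 2)) ^ 2 / ((x : ℂ) ^ (s - 1 / 2)) ^ 2 := by
    have h2x : 0 ≤ 2 * x⁻¹ := by positivity
    rw [show (1 / ((x ^ 2 / 4 : ℝ) : ℂ)) = ((2 * x⁻¹ : ℝ) : ℂ) * ((2 * x⁻¹ : ℝ) : ℂ) by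
        push_cast; field_simp; norm_num,
      Complex.mul_cpow_ofReal_nonneg h2x h2x, Complex.ofReal_mul,
      Complex.mul_cpow_ofReal_nonneg zero_le_two (by positivity), Complex.ofReal_inv,
      Complex.inv_cpow _ _ (by
        rw [Complex.arg_ofReal_of_nonneg hx.le]; exact Real.pi_pos.ne)]
    push_cast
    field_simp
  have e6 : (1 / ((x ^ 2 / 4 : ℝ) : ℂ)) ^ s =
      ((2 : ℂ) ^ (s - 1 / 2)) ^ 2 / ((x : ℂ) ^ (s - 1 / 2)) ^ 2 * (2 / x) := by
    have hne : (1 / ((x ^ 2 / 4 : ℝ) : ℂ)) ≠ 0 := by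
      have : ((x ^ 2 / 4 : ℝ) : ℂ) ≠ 0 := by exact_mod_cast (by positivity : x ^ 2 / 4 ≠ 0)
      exact one_div_ne_zero this
    have hroot : (1 / ((x ^ 2 / 4 : ℝ) : ℂ)) ^ (1 / 2 : ℂ) = 2 / x := by
      have : (1 / (x ^ 2 / 4)) ^ (1 / 2 : ℝ) = 2 / x := by
        rw [← Real.sqrt_eq_rpow, show 1 / (x ^ 2 / 4) = (2 / x) ^ 2 by field_simp; norm_num,
          Real.sqrt_sq (by positivity)]
      have h' := congrArg (fun t : ℝ => (t : ℂ)) this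
      simp only [Complex.ofReal_cpow (by positivity : (0 : ℝ) ≤ 1 / (x ^ 2 / 4))] at h'
      push_cast at h' ⊢
      exact h'
    rw [← e5, ← hroot, ← Complex.cpow_add _ _ hne, sub_add_cancel]
  have hK : ∀ n : ℕ, (((p ^ 2 + lam (n + 1) ^ 2) /
      (p * (p + 1 / Real.pi) + lam (n + 1) ^ 2) : ℝ) : ℂ) * ((lam (n + 1) : ℝ) : ℂ) ^ (s - 1 / 2) *
        besselK (s - 1 / 2) (2 * Real.pi * lam (n + 1) * x) =
      (x : ℂ) ^ (s - 1 / 2) / (2 * ((2 : ℂ) ^ (s - 1 / 2)) ^ 2 * (Real.pi : ℂ) ^ (s - 1 / 2)) *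
        (gaussMix s x (2 * Real.pi * lam (n + 1)) * (((p ^ 2 + lam (n + 1) ^ 2) /
          (p * (p + 1 / Real.pi) + lam (n + 1) ^ 2) : ℝ) : ℂ)) := by
    intro n
    have hpos : 0 < lam (n + 1) := by
      have := (hlam (n + 1) (by omega)).1
      push_cast at this
      have : (0 : ℝ) ≤ n := n.cast_nonneg
      linarith
    rw [mul_assoc, besselK_eq_gaussMix hs hx hpos]
    ring
  rw [watson_sum hp hlam hx hs, tsum_congr hK, tsum_mul_left, gaussMix_zero hs hx,
    integral_gaussMix hs hx, e1, e2, e3, e4, e5, e6]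
  have hd : ((1 + 1 / (Real.pi * p) : ℝ) : ℂ) ≠ 0 := by
    exact_mod_cast (by positivity : 1 + 1 / (Real.pi * p) ≠ 0)
  generalize ((1 + 1 / (Real.pi * p) : ℝ) : ℂ) = d at *
  generalize (∑' n : ℕ, gaussMix s x (2 * Real.pi * lam (n + 1)) * (((p ^ 2 + lam (n + 1) ^ 2) /
          (p * (p + 1 / Real.pi) + lam (n + 1) ^ 2) : ℝ) : ℂ)) = S
  generalize (2 : ℂ) ^ (s - 1 / 2) = T at *
  generalize (Real.pi : ℂ) ^ (s - 1 / 2) = Q at *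
  generalize (x : ℂ) ^ (s - 1 / 2) = X at *
  generalize (√Real.pi : ℂ) = R at *
  rw [hsq2]
  field_simp
  ring
end

section
/- Let p > 0 and let λ be a Koshliakov sequence for p such that λ_n ≠ p for all n ≥ 1. Then ∑_{n=1}^∞ w_n·(e^{2πλ_n}/(σ(λ_n)·e^{2πλ_n} − 1)²)·(π·σ(λ_n) + p/(p − λ_n)²) = (π/24)·(1 + (3/(πp))(1 + 1/(πp)))/(1 + 1/(πp))³ − 1/8. -/
/-!
Put `h(t) = (p cosh πt + t sinh πt) / (p sinh πt + t cosh πt)`, so that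
`h(t) = 1 + 2 / (σ(t) e^{2πt} - 1)`. The `n`-th summand equals `-(1/4) w_n h'(λ_n)`
(`kosh_term_eq`, `hasDerivAt_kH`).

The poles of `h` are simple, lie at `0` and `± i λ_k`, and have residues `w_0 / π` and `w_k / π`, where
`w_0` is the weight at `λ = 0`. As `h` is bounded on the circles `|z| = N`, it has the expansion
`π h(t) = w_0 / t + ∑_k w_k · 2t / (t² + λ_k²)` (`IsKoshliakov.partial_fraction`): the difference of
`h` and finitely many principal parts is `O(log N)` on `|z| = N` and odd, so the Schwarz lemma makes it
tend to `0` at a fixed `t`. All zeros of `p sinh πz + z cosh πz` are imaginary because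
`|p - z| < |p + z|` for `Re z > 0`.

Comparing the coefficients of `t` at the origin gives `∑ w_k / λ_k²` (`IsKoshliakov.tsum_kW_div_sq`).
Differentiating the expansion and putting `t = λ_n` gives the sum of the theorem as
`(w_0 / 4π) ∑ w_n / λ_n² - (1 / 2π) ∑_n ∑_k w_n w_k (λ_k² - λ_n²) / (λ_n² + λ_k²)²`.
The summand of the iterated series is antisymmetric, so the square partial sums vanish; the tails
`k > N ≥ n` are Riemann sums and tend to `∫₀¹ dx / (1 + x²) = π / 4`
(`IsKoshliakov.double_sum`), which contributes `-1/8`.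
-/

open Filter Topology Complex

/-! ### Partial fractions with a Schwarz lemma estimate -/

/-- A quotient of entire functions extends holomorphically over a simple zero of the denominator at
which the numerator vanishes. -/
lemma differentiableAt_quotient {A D : ℂ → ℂ} (hA : Differentiable ℂ A) (hD : Differentiable ℂ D)
    {z : ℂ} (h : D z = 0 → A z = 0 ∧ deriv D z ≠ 0) :
    DifferentiableAt ℂ (fun w => if D w = 0 then deriv A w / deriv D w else A w / D w) z := by
  by_cases hz : D z = 0
  · obtain ⟨hAz, hDz⟩ := h hz
    have dA : DifferentiableAt ℂ (dslope A z) z :=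
      ((differentiableOn_dslope (s := Set.univ) (by simp)).2 hA.differentiableOn).differentiableAt
        (by simp)
    have dD : DifferentiableAt ℂ (dslope D z) z :=
      ((differentiableOn_dslope (s := Set.univ) (by simp)).2 hD.differentiableOn).differentiableAt
        (by simp)
    have hne : ∀ᶠ w in 𝓝 z, dslope D z w ≠ 0 :=
      dD.continuousAt.eventually_ne (by simpa [dslope_same] using hDz)
    refine (dA.div dD (by simpa [dslope_same] using hDz)).congr_of_eventuallyEq ?_
    filter_upwards [hne] with w hw
    have e1 := sub_smul_dslope A z w
    have e2 := sub_smul_dslope D z w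
    rw [hAz, sub_zero, smul_eq_mul] at e1
    rw [hz, sub_zero, smul_eq_mul] at e2
    by_cases hwz : w = z
    · subst hwz
      simp [hz, dslope_same]
    · have h1 : w - z ≠ 0 := sub_ne_zero.2 hwz
      have : D w ≠ 0 := by rw [← e2]; exact mul_ne_zero h1 hw
      simp only [this, if_false, Pi.div_apply]
      rw [← e1, ← e2]
      field_simp
  · refine ((hA z).div (hD z) hz).congr_of_eventuallyEq ?_
    filter_upwards [(hD z).continuousAt.eventually_ne hz] with w hw
    simp [hw]

/-- Quantitative Mittag-Leffler estimate. If `s` contains all zeros of `D` in the disc of radius `R` and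
these are simple, then `C / D` minus its principal parts over `s` extends to a holomorphic function on
the disc. A bound `M` on the circle then controls its variation near the centre by the maximum
principle and the Schwarz lemma. -/
lemma partial_fraction_bound {C D : ℂ → ℂ} (hC : Differentiable ℂ C) (hD : Differentiable ℂ D)
    (s : Finset ℂ) {R M : ℝ} (hR : 0 < R) 
    (hs : ∀ a ∈ s, D a = 0 ∧ deriv D a ≠ 0)
    (hz : ∀ z, ‖z‖ ≤ R → D z = 0 → z ∈ s)
    (hDR : ∀ z, ‖z‖ = R → D z ≠ 0)
    (hM : ∀ z, ‖z‖ = R → ‖C z / D z - ∑ a ∈ s, C a / deriv D a / (z - a)‖ ≤ M)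
    {t : ℂ} (ht : ‖t‖ < R) (h1 : D t ≠ 0) (h2 : D (-t) ≠ 0) :
    ‖(C t / D t - ∑ a ∈ s, C a / deriv D a / (t - a)) -
      (C (-t) / D (-t) - ∑ a ∈ s, C a / deriv D a / (-t - a))‖ ≤ 4 * M / R * ‖t‖ := by
  set A : ℂ → ℂ := fun z => C z - ∑ a ∈ s, C a / deriv D a * dslope D a z with hAdef
  have hA : Differentiable ℂ A := by
    refine hC.sub (Differentiable.fun_sum fun a _ => Differentiable.const_mul ?_ _)
    exact fun z => ((differentiableOn_dslope (s := Set.univ) (by simp)).2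
      hD.differentiableOn).differentiableAt (by simp)
  have hAD : ∀ z, D z ≠ 0 → A z / D z = C z / D z - ∑ a ∈ s, C a / deriv D a / (z - a) := by
    intro z hz0
    simp only [hAdef, sub_div, Finset.sum_div]
    congr 1
    refine Finset.sum_congr rfl fun a ha => ?_
    have hza : z ≠ a := by rintro rfl; exact hz0 (hs z ha).1
    have e := sub_smul_dslope D a z
    rw [(hs a ha).1, sub_zero, smul_eq_mul] at e
    have h1 : z - a ≠ 0 := sub_ne_zero.2 hza
    have h3 : dslope D a z ≠ 0 := by
      intro h; rw [h, mul_zero] at e; exact hz0 e.symm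
    rw [← e]
    have := (hs a ha).2
    field_simp
  have hA0 : ∀ a ∈ s, A a = 0 := by
    intro a ha
    simp only [hAdef]
    rw [Finset.sum_eq_single a]
    · have := (hs a ha).2
      rw [dslope_same]; field_simp; ring
    · intro b hb hba
      have e := sub_smul_dslope D b a
      rw [(hs a ha).1, (hs b hb).1, sub_zero, smul_eq_mul] at e
      have h1 : a - b ≠ 0 := sub_ne_zero.2 hba.symm
      rw [(mul_eq_zero.1 e).resolve_left h1, mul_zero]
    · exact fun h => absurd ha h
  set g : ℂ → ℂ := fun w => if D w = 0 then deriv A w / deriv D w else A w / D w with hg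
  have hgd : ∀ z, ‖z‖ ≤ R → DifferentiableAt ℂ g z := fun z hzR =>
    differentiableAt_quotient hA hD fun h => ⟨hA0 z (hz z hzR h), (hs z (hz z hzR h)).2⟩
  have hgv : ∀ z, D z ≠ 0 → g z = C z / D z - ∑ a ∈ s, C a / deriv D a / (z - a) := by
    intro z h
    rw [← hAD z h]
    simp [hg, h]
  have hgM : ∀ z, ‖z‖ ≤ R → ‖g z‖ ≤ M := by
    intro z hzR
    refine Complex.norm_le_of_forall_mem_frontier_norm_le (U := Metric.ball 0 R)
      Metric.isBounded_ball ?_ ?_ ?_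
    · refine DifferentiableOn.diffContOnCl fun w hw => (hgd w ?_).differentiableWithinAt
      rw [closure_ball _ hR.ne'] at hw
      simpa using hw
    · intro w hw
      rw [frontier_ball _ hR.ne'] at hw
      have hw : ‖w‖ = R := by simpa using hw
      rw [hgv w (hDR w hw)]
      exact hM w hw
    · rw [closure_ball _ hR.ne']; simpa using hzR
  have key : ∀ z, ‖z‖ < R → ‖g z - g 0‖ ≤ 2 * M / R * ‖z‖ := by
    intro z hzR
    have := Complex.dist_le_div_mul_dist_of_mapsTo_ball (f := g) (c := 0) (z := z) (R₁ := R)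
      (R₂ := 2 * M) (fun w hw => (hgd w (by simpa using (Metric.mem_ball.1 hw).le)).differentiableWithinAt)
      (fun w hw => ?_) (by simpa using hzR)
    · simpa [dist_eq_norm] using this
    · have hw' : ‖w‖ ≤ R := by simpa using (Metric.mem_ball.1 hw).le
      rw [Metric.mem_closedBall, dist_eq_norm]
      calc ‖g w - g 0‖ ≤ ‖g w‖ + ‖g 0‖ := norm_sub_le _ _
        _ ≤ M + M := add_le_add (hgM w hw') (hgM 0 (by simpa using hR.le))
        _ = _ := by ring
  rw [← hgv t h1, ← hgv (-t) h2]
  calc ‖g t - g (-t)‖ = ‖(g t - g 0) - (g (-t) - g 0)‖ := by congr 1; ring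
    _ ≤ ‖g t - g 0‖ + ‖g (-t) - g 0‖ := norm_sub_le _ _
    _ ≤ 2 * M / R * ‖t‖ + 2 * M / R * ‖-t‖ := add_le_add (key t ht) (key (-t) (by simpa using ht))
    _ = _ := by rw [norm_neg]; ring

/-! ### The functions `kC`, `kD` and their size on large circles -/

/-- The even entire function `p cosh πz + z sinh πz`. -/
noncomputable def kC (p : ℝ) (z : ℂ) : ℂ := p * cosh (Real.pi * z) + z * sinh (Real.pi * z)
/-- The odd entire function `p sinh πz + z cosh πz`; its zeros are `0` and `± i λ_n`. -/
noncomputable def kD (p : ℝ) (z : ℂ) : ℂ := p * sinh (Real.pi * z) + z * cosh (Real.pi * z)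

lemma differentiable_kC (p : ℝ) : Differentiable ℂ (kC p) := by
  unfold kC; fun_prop
lemma differentiable_kD (p : ℝ) : Differentiable ℂ (kD p) := by
  unfold kD; fun_prop

lemma kC_neg (p : ℝ) (z : ℂ) : kC p (-z) = kC p z := by simp [kC]
lemma kD_neg (p : ℝ) (z : ℂ) : kD p (-z) = -kD p z := by simp [kD]; ring

lemma deriv_kD (p : ℝ) (z : ℂ) :
    deriv (kD p) z = (Real.pi * p + 1) * cosh (Real.pi * z) + Real.pi * z * sinh (Real.pi * z) := by
  have h0 : HasDerivAt (fun z : ℂ => (Real.pi : ℂ) * z) Real.pi z := by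
    simpa using (hasDerivAt_id z).const_mul (Real.pi : ℂ)
  have := (h0.csinh.const_mul (p : ℂ)).add ((hasDerivAt_id z).mul h0.ccosh)
  have h : HasDerivAt (kD p) _ z := this
  rw [h.deriv]
  simp only [id]
  ring

/-- The function `(p - z) / (p + z) * e^{-2πz}`, in terms of which
`kC p / kD p = (1 + kU p) / (1 - kU p)` on the closed right half-plane. -/
noncomputable def kU (p : ℝ) (z : ℂ) : ℂ := (p - z) / (p + z) * exp (-(2 * Real.pi * z))

lemma add_ne_zero_of_re {p : ℝ} (hp : 0 < p) {z : ℂ} (hz : 0 ≤ z.re) : (p : ℂ) + z ≠ 0 := by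
  intro h
  have := congrArg Complex.re h
  simp at this
  linarith

lemma kC_eq {p : ℝ} (hp : 0 < p) {z : ℂ} (hz : 0 ≤ z.re) :
    kC p z = exp (Real.pi * z) * (p + z) / 2 * (1 + kU p z) := by
  have h := add_ne_zero_of_re hp hz
  have e : exp (-(2 * Real.pi * z)) = exp (-(Real.pi * z)) * exp (-(Real.pi * z)) := by
    rw [← exp_add]; ring_nf
  have e2 : exp (Real.pi * z) * exp (-(Real.pi * z)) = 1 := by rw [← exp_add]; simp
  rw [kC, kU, cosh, sinh, e]
  field_simp
  linear_combination (- (p - z) * exp (-(Real.pi * z))) * e2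

lemma kD_eq {p : ℝ} (hp : 0 < p) {z : ℂ} (hz : 0 ≤ z.re) :
    kD p z = exp (Real.pi * z) * (p + z) / 2 * (1 - kU p z) := by
  have h := add_ne_zero_of_re hp hz
  have e : exp (-(2 * Real.pi * z)) = exp (-(Real.pi * z)) * exp (-(Real.pi * z)) := by
    rw [← exp_add]; ring_nf
  have e2 : exp (Real.pi * z) * exp (-(Real.pi * z)) = 1 := by rw [← exp_add]; simp
  rw [kD, kU, cosh, sinh, e]
  field_simp
  linear_combination ((p - z) * exp (-(Real.pi * z))) * e2

/-- The point `z` in the right half-plane is closer to `p` than to `-p`. -/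
lemma norm_moebius_le {p : ℝ} (hp : 0 < p) {z : ℂ} (hz : 0 ≤ z.re) :
    ‖((p : ℂ) - z) / (p + z)‖ ≤ 1 := by
  have h := add_ne_zero_of_re hp hz
  rw [norm_div, div_le_one (norm_pos_iff.2 h), ← sq_le_sq₀ (norm_nonneg _) (norm_nonneg _),
    ← normSq_eq_norm_sq, ← normSq_eq_norm_sq, normSq_apply, normSq_apply]
  simp
  nlinarith

lemma norm_exp_neg_two_pi (z : ℂ) : ‖exp (-(2 * Real.pi * z))‖ = Real.exp (-(2 * Real.pi * z.re)) := by
  rw [norm_exp]; congr 1; simp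

lemma norm_kU_le {p : ℝ} (hp : 0 < p) {z : ℂ} (hz : 0 ≤ z.re) :
    ‖kU p z‖ ≤ Real.exp (-(2 * Real.pi * z.re)) := by
  rw [kU, norm_mul, norm_exp_neg_two_pi]
  exact mul_le_of_le_one_left (Real.exp_pos _).le (norm_moebius_le hp hz)

lemma kD_ne_zero_of_re_pos {p : ℝ} (hp : 0 < p) {z : ℂ} (hz : 0 < z.re) : kD p z ≠ 0 := by
  rw [kD_eq hp hz.le]
  have h := add_ne_zero_of_re hp hz.le
  have hu : ‖kU p z‖ < 1 := (norm_kU_le hp hz.le).trans_lt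
    (by rw [Real.exp_lt_one_iff]; have := Real.pi_pos; simp; positivity)
  have h3 : 1 - kU p z ≠ 0 := by
    intro h
    rw [← sub_eq_zero.1 h] at hu
    simp at hu
  exact mul_ne_zero (div_ne_zero (mul_ne_zero (exp_ne_zero _) h) two_ne_zero) h3

lemma re_eq_zero_of_kD {p : ℝ} (hp : 0 < p) {z : ℂ} (h : kD p z = 0) : z.re = 0 := by
  rcases lt_trichotomy z.re 0 with h1 | h1 | h1
  · refine absurd (?_ : kD p (-z) = 0) (kD_ne_zero_of_re_pos hp (by simpa using h1))
    rw [kD_neg, h, neg_zero]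
  · exact h1
  · exact absurd h (kD_ne_zero_of_re_pos hp h1)

/-- On a large circle `|z| = N` in the right half-plane `kU p` stays away from `1`: it is small if
`Re z ≥ 1`, and near the imaginary axis it is close to `-e^{-2π Re z}`, as `Im z` is close to `± N`. -/
lemma kU_far {p : ℝ} (hp : 0 < p) {N : ℕ} (hN : 4 * (Real.pi + p) ≤ N) {z : ℂ} (hz : 0 ≤ z.re)
    (hzN : ‖z‖ = N) : 1 / 2 ≤ ‖1 - kU p z‖ := by
  have hpi := Real.pi_gt_three
  have hN0 : (0 : ℝ) < N := by linarith
  rcases le_or_gt 1 z.re with h1 | h1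
  · have hu : ‖kU p z‖ ≤ 1 / 2 := by
      refine (norm_kU_le hp hz).trans ?_
      rw [Real.exp_neg]
      have := Real.add_one_le_exp (2 * Real.pi * z.re)
      rw [inv_le_comm₀ (Real.exp_pos _) (by norm_num)]
      nlinarith
    have := norm_sub_norm_le (1 : ℂ) (kU p z)
    rw [norm_one] at this
    linarith
  · have hsq : z.re ^ 2 + z.im ^ 2 = (N : ℝ) ^ 2 := by
      rw [← hzN, ← normSq_eq_norm_sq, normSq_apply]; ring
    have hexp : ‖exp (-(2 * Real.pi * z.im * I)) - 1‖ ≤ 2 * Real.pi / N := by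
      have aux : ∀ y : ℝ, 0 ≤ y → z.re ^ 2 + y ^ 2 = (N : ℝ) ^ 2 → 0 ≤ N - y ∧ N - y ≤ 1 / N := by
        intro y hy hs
        have : y ≤ N := by nlinarith
        refine ⟨by linarith, ?_⟩
        rw [le_div_iff₀ hN0]
        nlinarith
      rcases le_total 0 z.im with hy | hy
      · obtain ⟨a1, a2⟩ := aux _ hy hsq
        have : exp (-(2 * Real.pi * z.im * I)) = exp (I * ((2 * Real.pi * (N - z.im) : ℝ) : ℂ)) := by
          rw [exp_eq_exp_iff_exists_int]
          refine ⟨-(N : ℤ), ?_⟩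
          push_cast; ring
        rw [this]
        refine (Real.norm_exp_I_mul_ofReal_sub_one_le (x := 2 * Real.pi * (N - z.im))).trans ?_
        rw [Real.norm_of_nonneg (by positivity)]
        calc 2 * Real.pi * (N - z.im) ≤ 2 * Real.pi * (1 / N) := by gcongr
          _ = _ := by ring
      · obtain ⟨a1, a2⟩ := aux (-z.im) (by linarith) (by linarith [hsq, neg_sq z.im])
        have : exp (-(2 * Real.pi * z.im * I)) = exp (I * ((-(2 * Real.pi * (N - -z.im)) : ℝ) : ℂ)) := by
          rw [exp_eq_exp_iff_exists_int]
          refine ⟨(N : ℤ), ?_⟩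
          push_cast; ring
        rw [this]
        refine (Real.norm_exp_I_mul_ofReal_sub_one_le (x := -(2 * Real.pi * (N - -z.im)))).trans ?_
        rw [norm_neg, Real.norm_of_nonneg (by positivity)]
        calc 2 * Real.pi * (N - -z.im) ≤ 2 * Real.pi * (1 / N) := by gcongr
          _ = _ := by ring
    have hq : ‖(2 * p : ℂ) / (p + z)‖ ≤ 2 * p / N := by
      rw [norm_div]
      have : (N : ℝ) ≤ ‖(p : ℂ) + z‖ := by
        rw [← hzN, ← sq_le_sq₀ (norm_nonneg _) (norm_nonneg _),
          ← normSq_eq_norm_sq, ← normSq_eq_norm_sq, normSq_apply, normSq_apply]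
        simp
        nlinarith
      have e : ‖(2 * p : ℂ)‖ = 2 * p := by simp [abs_of_pos hp]
      rw [e]
      gcongr
    have h := add_ne_zero_of_re hp hz
    have hdec : kU p z + (Real.exp (-(2 * Real.pi * z.re)) : ℝ) =
        (Real.exp (-(2 * Real.pi * z.re)) : ℝ) * (-(exp (-(2 * Real.pi * z.im * I)) - 1) +
          exp (-(2 * Real.pi * z.im * I)) * (2 * p / (p + z))) := by
      have : exp (-(2 * Real.pi * z)) =
          (Real.exp (-(2 * Real.pi * z.re)) : ℝ) * exp (-(2 * Real.pi * z.im * I)) := by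
        rw [ofReal_exp, ← exp_add]
        congr 1
        conv_lhs => rw [← re_add_im z]
        push_cast; ring
      rw [kU, this]
      field_simp
      ring
    have hn1 : ‖exp (-(2 * Real.pi * z.im * I))‖ = 1 := by
      rw [norm_exp]; simp
    have hE : Real.exp (-(2 * Real.pi * z.re)) ≤ 1 := by
      rw [Real.exp_le_one_iff]; have : 0 ≤ 2 * Real.pi * z.re := by positivity
      linarith
    have hE0 := Real.exp_pos (-(2 * Real.pi * z.re))
    have hclose : ‖kU p z + (Real.exp (-(2 * Real.pi * z.re)) : ℝ)‖ ≤ 1 / 2 := by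
      rw [hdec, norm_mul, norm_real, Real.norm_of_nonneg hE0.le]
      refine (mul_le_of_le_one_left (norm_nonneg _) hE).trans ?_
      refine (norm_add_le _ _).trans ?_
      rw [norm_neg, norm_mul, hn1, one_mul]
      calc _ ≤ 2 * Real.pi / N + 2 * p / N := add_le_add hexp hq
        _ = (2 * (Real.pi + p)) / N := by ring
        _ ≤ 1 / 2 := by rw [div_le_iff₀ hN0]; linarith
    have hre := (abs_re_le_norm _).trans hclose
    have hre2 := (abs_re_le_norm (1 - kU p z))
    simp only [add_re, ofReal_re, sub_re, one_re] at hre hre2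
    have := (abs_le.1 hre).2
    have := le_abs_self (1 - (kU p z).re)
    linarith

lemma kC_div_kD_bound {p : ℝ} (hp : 0 < p) {N : ℕ} (hN : 4 * (Real.pi + p) ≤ N) {z : ℂ}
    (hzN : ‖z‖ = N) : kD p z ≠ 0 ∧ ‖kC p z / kD p z‖ ≤ 4 := by
  have main : ∀ z : ℂ, 0 ≤ z.re → ‖z‖ = N → kD p z ≠ 0 ∧ ‖kC p z / kD p z‖ ≤ 4 := by
    intro z hz hzN
    have hf := kU_far hp hN hz hzN
    have h := add_ne_zero_of_re hp hz
    have h2 := exp_ne_zero (Real.pi * z)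
    have h3 : 1 - kU p z ≠ 0 := by
      intro h; rw [h] at hf; norm_num at hf
    have hD : kD p z ≠ 0 := by
      rw [kD_eq hp hz]
      exact mul_ne_zero (div_ne_zero (mul_ne_zero h2 h) two_ne_zero) h3
    refine ⟨hD, ?_⟩
    rw [kD_eq hp hz, kC_eq hp hz, mul_div_mul_left _ _ (div_ne_zero (mul_ne_zero h2 h) two_ne_zero), norm_div,
      div_le_iff₀ (by linarith)]
    have hu := (norm_kU_le hp hz).trans (Real.exp_le_one_iff.2
      (by have := Real.pi_pos; have : 0 ≤ 2 * Real.pi * z.re := by positivity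
          linarith))
    have := norm_add_le (1 : ℂ) (kU p z)
    rw [norm_one] at this
    linarith
  rcases le_total 0 z.re with h | h
  · exact main z h hzN
  · have := main (-z) (by simpa using h) (by simpa using hzN)
    rwa [kC_neg, kD_neg, div_neg, norm_neg, neg_ne_zero] at this

/-! ### Zeros and residues -/

/-- A Koshliakov sequence indexed from `0`, that is, `l n = λ_{n+1}`, with the condition
`tan (π λ) = -λ / p` cleared of denominators. -/
def IsKoshliakov (p : ℝ) (l : ℕ → ℝ) : Prop :=
  ∀ n : ℕ, (n : ℝ) + 1 / 2 < l n ∧ l n < n + 1 ∧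
    p * Real.sin (Real.pi * l n) + l n * Real.cos (Real.pi * l n) = 0

lemma cos_pi_shift_neg {n : ℕ} {y : ℝ} (h1 : (n : ℝ) + 1 / 2 < y) (h2 : y < n + 1) :
    Real.cos (Real.pi * y - n * Real.pi) < 0 := by
  have := Real.pi_pos
  apply Real.cos_neg_of_pi_div_two_lt_of_lt <;> nlinarith

/-- Subtracting the two equations gives `p sin π(y - x) = -(y - x) cos πx cos πy`, whose two sides have
opposite signs when `x < y`. -/
lemma kosh_zero_unique {p : ℝ} (hp : 0 < p) {n : ℕ} {x y : ℝ} (hx1 : (n : ℝ) + 1 / 2 < x)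
    (hx2 : x < n + 1) (hy1 : (n : ℝ) + 1 / 2 < y) (hy2 : y < n + 1)
    (hx : p * Real.sin (Real.pi * x) + x * Real.cos (Real.pi * x) = 0)
    (hy : p * Real.sin (Real.pi * y) + y * Real.cos (Real.pi * y) = 0) : ¬ x < y := by
  intro hxy
  have cx := cos_pi_shift_neg hx1 hx2
  have cy := cos_pi_shift_neg hy1 hy2
  rw [Real.cos_sub_nat_mul_pi] at cx cy
  have hpos : 0 < Real.cos (Real.pi * x) * Real.cos (Real.pi * y) := by
    have := mul_pos_of_neg_of_neg cx cy
    have e : ((-1 : ℝ) ^ n) * ((-1 : ℝ) ^ n) = 1 := by rw [← mul_pow]; norm_num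
    calc 0 < _ := this
      _ = ((-1 : ℝ) ^ n) * ((-1 : ℝ) ^ n) * (Real.cos (Real.pi * x) * Real.cos (Real.pi * y)) := by
        ring
      _ = _ := by rw [e, one_mul]
  have hs : 0 < Real.sin (Real.pi * y - Real.pi * x) := by
    have := Real.pi_pos
    apply Real.sin_pos_of_pos_of_lt_pi <;> nlinarith
  rw [Real.sin_sub] at hs
  have e : p * (Real.sin (Real.pi * y) * Real.cos (Real.pi * x) -
      Real.cos (Real.pi * y) * Real.sin (Real.pi * x)) =
      -((y - x) * (Real.cos (Real.pi * x) * Real.cos (Real.pi * y))) := by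
    linear_combination Real.cos (Real.pi * x) * hy - Real.cos (Real.pi * y) * hx
  have := mul_pos hp hs
  have := mul_pos (sub_pos.2 hxy) hpos
  linarith

/-- Every positive zero of `p sin πy + y cos πy` belongs to the sequence. -/
lemma IsKoshliakov.eq_of_zero {p : ℝ} (hp : 0 < p) {l : ℕ → ℝ} (hl : IsKoshliakov p l) {y : ℝ}
    (hy : 0 < y) (h : p * Real.sin (Real.pi * y) + y * Real.cos (Real.pi * y) = 0) :
    ∃ n, y = l n := by
  set n := ⌊y⌋₊
  have hn1 : (n : ℝ) ≤ y := Nat.floor_le hy.le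
  have hn2 : y < n + 1 := Nat.lt_floor_add_one y
  have hpi := Real.pi_pos
  have hn3 : (n : ℝ) + 1 / 2 < y := by
    by_contra! hc
    have c : 0 ≤ Real.cos (Real.pi * y - n * Real.pi) := by
      apply Real.cos_nonneg_of_neg_pi_div_two_le_of_le <;> nlinarith
    have s : 0 ≤ Real.sin (Real.pi * y - n * Real.pi) := by
      apply Real.sin_nonneg_of_nonneg_of_le_pi <;> nlinarith
    have e := Real.sin_sq_add_cos_sq (Real.pi * y - n * Real.pi)
    have h' : p * Real.sin (Real.pi * y - n * Real.pi) +
        y * Real.cos (Real.pi * y - n * Real.pi) = 0 := by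
      rw [Real.sin_sub_nat_mul_pi, Real.cos_sub_nat_mul_pi]
      linear_combination (-1 : ℝ) ^ n * h
    have s0 : Real.sin (Real.pi * y - n * Real.pi) = 0 := by
      have := mul_nonneg hp.le s
      have := mul_nonneg hy.le c
      have : p * Real.sin (Real.pi * y - n * Real.pi) = 0 := by linarith
      exact (mul_eq_zero.1 this).resolve_left hp.ne'
    have c0 : Real.cos (Real.pi * y - n * Real.pi) = 0 := by
      rw [s0, mul_zero, zero_add] at h'
      exact (mul_eq_zero.1 h').resolve_left hy.ne'
    rw [s0, c0] at e
    norm_num at e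
  obtain ⟨a, b, c⟩ := hl n
  refine ⟨n, le_antisymm ?_ ?_⟩
  · exact not_lt.1 (kosh_zero_unique hp a b hn3 hn2 c h)
  · exact not_lt.1 (kosh_zero_unique hp hn3 hn2 a b h c)

lemma IsKoshliakov.pos {p : ℝ} {l : ℕ → ℝ} (hl : IsKoshliakov p l) (n : ℕ) : 0 < l n := by
  have := (hl n).1
  have : (0 : ℝ) ≤ n := n.cast_nonneg
  linarith

lemma IsKoshliakov.cos_ne {p : ℝ} {l : ℕ → ℝ} (hl : IsKoshliakov p l) (n : ℕ) :
    Real.cos (Real.pi * l n) ≠ 0 := by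
  have := cos_pi_shift_neg (hl n).1 (hl n).2.1
  rw [Real.cos_sub_nat_mul_pi] at this
  intro h
  rw [h, mul_zero] at this
  exact this.false

/-- The numbers `l n` stay uniformly away from the integer `n + 1`: for `d = n + 1 - l n` one has
`p sin πd = l n cos πd`, and `sin x ≤ x` and `cos x ≥ 1 - 2 x / π` bound `d` below. -/
lemma IsKoshliakov.exists_gap {p : ℝ} (hp : 0 < p) {l : ℕ → ℝ} (hl : IsKoshliakov p l) :
    ∃ c, 0 < c ∧ c ≤ 1 ∧ ∀ n : ℕ, c ≤ n + 1 - l n := by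
  refine ⟨min 1 (1 / (Real.pi * (2 * p + 1))), ?_, min_le_left _ _, fun n => ?_⟩
  · have := Real.pi_pos
    positivity
  refine (min_le_right _ _).trans ?_
  obtain ⟨h1, h2, h3⟩ := hl n
  have hpi := Real.pi_pos
  set d := (n : ℝ) + 1 - l n with hd
  have hd0 : 0 < d := by linarith
  have hd1 : d < 1 / 2 := by linarith
  have e : Real.pi * l n = ((n + 1 : ℕ) : ℝ) * Real.pi - Real.pi * d := by
    rw [hd]; push_cast; ring
  have h4 : p * Real.sin (Real.pi * d) = l n * Real.cos (Real.pi * d) := by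
    rw [e, Real.sin_nat_mul_pi_sub, Real.cos_nat_mul_pi_sub] at h3
    have e1 : ((-1 : ℝ) ^ (n + 1)) * ((-1 : ℝ) ^ (n + 1)) = 1 := by rw [← mul_pow]; norm_num
    linear_combination (-(-1 : ℝ) ^ (n + 1)) * h3 + (l n * Real.cos (Real.pi * d) - p * Real.sin (Real.pi * d)) * e1
  have hs : Real.sin (Real.pi * d) ≤ Real.pi * d := (Real.sin_le (by positivity))
  have hc : 1 - 2 / Real.pi * (Real.pi * d) ≤ Real.cos (Real.pi * d) :=
    Real.one_sub_mul_le_cos (by positivity) (by nlinarith)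
  have hc2 : 1 - 2 / Real.pi * (Real.pi * d) = 1 - 2 * d := by field_simp
  rw [hc2] at hc
  have hl2 : 1 / 2 < l n := by have : (0 : ℝ) ≤ n := n.cast_nonneg
                               linarith
  have : 1 / 2 * (1 - 2 * d) ≤ p * (Real.pi * d) := by
    calc 1 / 2 * (1 - 2 * d) ≤ l n * Real.cos (Real.pi * d) := by
          apply mul_le_mul hl2.le hc (by linarith) (by linarith)
      _ ≤ _ := by rw [← h4]; gcongr
  rw [div_le_iff₀ (by positivity)]
  nlinarith [Real.pi_gt_three]

/-- The weight of the theorem divided by `π`: for `t = λ_n` this is `w_n / π`, the residue of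
`kC p / kD p` at `± i λ_n`; for `t = 0` it is the residue at `0`. -/
noncomputable def kW (p t : ℝ) : ℝ := (p ^ 2 + t ^ 2) / (Real.pi * p ^ 2 + p + Real.pi * t ^ 2)

lemma kW_nonneg {p : ℝ} (hp : 0 < p) (t : ℝ) : 0 ≤ kW p t := by
  have := Real.pi_pos
  unfold kW; positivity

lemma kW_le {p : ℝ} (hp : 0 < p) (t : ℝ) : kW p t ≤ 1 / Real.pi := by
  have := Real.pi_pos
  unfold kW
  rw [div_le_div_iff₀ (by positivity) (by positivity)]
  nlinarith

lemma kW_le_one {p : ℝ} (hp : 0 < p) (t : ℝ) : kW p t ≤ 1 := by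
  refine (kW_le hp t).trans ?_
  rw [div_le_one Real.pi_pos]
  linarith [Real.pi_gt_three]

lemma kD_I_mul (p y : ℝ) : kD p (y * I) = (p * Real.sin (Real.pi * y) + y * Real.cos (Real.pi * y) : ℝ) * I := by
  simp only [kD, ← mul_assoc, cosh_mul_I, sinh_mul_I]
  push_cast; ring

lemma kC_I_mul (p y : ℝ) : kC p (y * I) = (p * Real.cos (Real.pi * y) - y * Real.sin (Real.pi * y) : ℝ) := by
  simp only [kC, ← mul_assoc, cosh_mul_I, sinh_mul_I]
  push_cast
  linear_combination (y * Complex.sin (Real.pi * y)) * I_sq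

lemma deriv_kD_I_mul (p y : ℝ) : deriv (kD p) (y * I) =
    ((Real.pi * p + 1) * Real.cos (Real.pi * y) - Real.pi * y * Real.sin (Real.pi * y) : ℝ) := by
  rw [deriv_kD]
  simp only [← mul_assoc, cosh_mul_I, sinh_mul_I]
  push_cast
  linear_combination (Real.pi * y * Complex.sin (Real.pi * y)) * I_sq

lemma residue_aux {p : ℝ} (hp : 0 < p) {y : ℝ}
    (h : p * Real.sin (Real.pi * y) + y * Real.cos (Real.pi * y) = 0)
    (hc : Real.cos (Real.pi * y) ≠ 0) :
    deriv (kD p) (y * I) ≠ 0 ∧ kC p (y * I) / deriv (kD p) (y * I) = (kW p y : ℝ) := by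
  have hpi := Real.pi_pos
  have hs : Real.sin (Real.pi * y) = -(y * Real.cos (Real.pi * y)) / p := by
    field_simp; linarith
  have e1 : (Real.pi * p + 1) * Real.cos (Real.pi * y) - Real.pi * y * Real.sin (Real.pi * y) =
      Real.cos (Real.pi * y) * (Real.pi * p ^ 2 + p + Real.pi * y ^ 2) / p := by
    rw [hs]; field_simp; ring
  have e2 : p * Real.cos (Real.pi * y) - y * Real.sin (Real.pi * y) =
      Real.cos (Real.pi * y) * (p ^ 2 + y ^ 2) / p := by
    rw [hs]; field_simp; ring
  have hpos : (Real.pi * p ^ 2 + p + Real.pi * y ^ 2) ≠ 0 := by positivity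
  rw [deriv_kD_I_mul, kC_I_mul, e1, e2]
  refine ⟨by rw [ofReal_ne_zero]; exact div_ne_zero (mul_ne_zero hc hpos) hp.ne', ?_⟩
  rw [← ofReal_div, kW]
  congr 1
  field_simp

/-! ### The partial fraction expansion -/

/-- The restriction of `kC p / kD p` to the real line; it is the analogue of `coth (π t)`, to which it
reduces as `p → ∞`, and equals `1 + 2 / (σ(t) e^{2πt} - 1)`. -/
noncomputable def kH (p t : ℝ) : ℝ :=
  (p * Real.cosh (Real.pi * t) + t * Real.sinh (Real.pi * t)) /
    (p * Real.sinh (Real.pi * t) + t * Real.cosh (Real.pi * t))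

lemma ofReal_kH (p t : ℝ) : ((kH p t : ℝ) : ℂ) = kC p t / kD p t := by
  simp [kH, kC, kD]

lemma IsKoshliakov.injective {p : ℝ} {l : ℕ → ℝ} (hl : IsKoshliakov p l) :
    Function.Injective l := by
  refine (strictMono_nat_of_lt_succ fun n => ?_).injective
  have h1 := (hl n).2.1
  have h2 := (hl (n + 1)).1
  push_cast at h2
  linarith

/-- The zeros `0, ± i l k` (`k < N`) of `kD p`, that is, all those of modulus at most `N`. -/
noncomputable def poles (l : ℕ → ℝ) (N : ℕ) : Finset ℂ :=
  insert 0 ((Finset.range N).image (fun k => ((l k : ℝ) : ℂ) * I) ∪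
    (Finset.range N).image (fun k => ((-l k : ℝ) : ℂ) * I))

lemma IsKoshliakov.mem_poles {p : ℝ} (hp : 0 < p) {l : ℕ → ℝ} (hl : IsKoshliakov p l) {N : ℕ}
    {z : ℂ} (hz : ‖z‖ ≤ N) (h : kD p z = 0) : z ∈ poles l N := by
  have hre := re_eq_zero_of_kD hp h
  have hzi : z = (z.im : ℝ) * I := by
    apply Complex.ext <;> simp [hre]
  set y := z.im
  have hy : |y| ≤ N := (abs_im_le_norm z).trans hz
  rw [hzi, kD_I_mul] at h
  have h0 : p * Real.sin (Real.pi * y) + y * Real.cos (Real.pi * y) = 0 := by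
    simpa [-ofReal_add, -ofReal_mul] using h
  have aux : ∀ n, l n ≤ N → n < N := by
    intro n hn
    have := (hl n).1
    have : (n : ℝ) < N := by linarith
    exact_mod_cast this
  simp only [poles, Finset.mem_insert, Finset.mem_union, Finset.mem_image, Finset.mem_range]
  rcases lt_trichotomy y 0 with hy0 | hy0 | hy0
  · obtain ⟨n, hn⟩ := hl.eq_of_zero hp (y := -y) (by linarith)
      (by rw [mul_neg, Real.sin_neg, Real.cos_neg]; linarith)
    rw [abs_of_neg hy0, hn] at hy
    refine Or.inr (Or.inr ⟨n, aux n hy, ?_⟩)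
    rw [hzi, ← hn, neg_neg]
  · left
    rw [hzi, hy0]; simp
  · obtain ⟨n, hn⟩ := hl.eq_of_zero hp hy0 h0
    rw [abs_of_pos hy0, hn] at hy
    refine Or.inr (Or.inl ⟨n, aux n hy, ?_⟩)
    rw [hzi, ← hn]

/-- The zeros of `kD p` are simple and the residue of `kC p / kD p` at `i y` is `kW p y`. -/
lemma IsKoshliakov.residue {p : ℝ} (hp : 0 < p) {l : ℕ → ℝ} (hl : IsKoshliakov p l) {y : ℝ}
    (hy : y = 0 ∨ ∃ n, y = l n ∨ y = -l n) :
    kD p (y * I) = 0 ∧ deriv (kD p) (y * I) ≠ 0 ∧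
      kC p (y * I) / deriv (kD p) (y * I) = (kW p y : ℝ) := by
  have h : (p * Real.sin (Real.pi * y) + y * Real.cos (Real.pi * y) = 0) ∧
      Real.cos (Real.pi * y) ≠ 0 := by
    rcases hy with rfl | ⟨n, rfl | rfl⟩
    · simp
    · exact ⟨(hl n).2.2, hl.cos_ne n⟩
    · rw [mul_neg, Real.sin_neg, Real.cos_neg]
      exact ⟨by linarith [(hl n).2.2], hl.cos_ne n⟩
  refine ⟨?_, residue_aux hp h.1 h.2⟩
  rw [kD_I_mul, h.1]; simp

lemma IsKoshliakov.simple_poles {p : ℝ} (hp : 0 < p) {l : ℕ → ℝ} (hl : IsKoshliakov p l) {N : ℕ}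
    {a : ℂ} (ha : a ∈ poles l N) : kD p a = 0 ∧ deriv (kD p) a ≠ 0 := by
  simp only [poles, Finset.mem_insert, Finset.mem_union, Finset.mem_image, Finset.mem_range] at ha
  rcases ha with rfl | ⟨n, -, rfl⟩ | ⟨n, -, rfl⟩
  · have := hl.residue hp (y := 0) (Or.inl rfl)
    simp only [ofReal_zero, zero_mul] at this
    exact ⟨this.1, this.2.1⟩
  · have := hl.residue hp (Or.inr ⟨n, Or.inl rfl⟩)
    exact ⟨this.1, this.2.1⟩
  · have := hl.residue hp (Or.inr ⟨n, Or.inr rfl⟩)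
    exact ⟨this.1, this.2.1⟩

lemma kW_neg (p t : ℝ) : kW p (-t) = kW p t := by simp [kW]

lemma IsKoshliakov.sum_poles {p : ℝ} (hp : 0 < p) {l : ℕ → ℝ} (hl : IsKoshliakov p l) (N : ℕ)
    (z : ℂ) : ∑ a ∈ poles l N, kC p a / deriv (kD p) a / (z - a) =
      (kW p 0 : ℝ) / z + ∑ k ∈ Finset.range N, ((kW p (l k) : ℝ) / (z - (l k : ℝ) * I) +
        (kW p (l k) : ℝ) / (z + (l k : ℝ) * I)) := by
  rw [poles, Finset.sum_insert, Finset.sum_union, Finset.sum_image, Finset.sum_image,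
    Finset.sum_add_distrib]
  · have h0 := (hl.residue hp (y := 0) (Or.inl rfl)).2.2
    simp only [ofReal_zero, zero_mul] at h0
    rw [h0, sub_zero]
    congr 2
    · refine Finset.sum_congr rfl fun k _ => ?_
      rw [(hl.residue hp (Or.inr ⟨k, Or.inl rfl⟩)).2.2]
    · refine Finset.sum_congr rfl fun k _ => ?_
      rw [(hl.residue hp (Or.inr ⟨k, Or.inr rfl⟩)).2.2, kW_neg]
      push_cast; ring
  · intro a _ b _ h
    have := mul_right_cancel₀ I_ne_zero h
    rw [ofReal_inj] at this
    exact hl.injective (neg_injective this)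
  · intro a _ b _ h
    have := mul_right_cancel₀ I_ne_zero h
    rw [ofReal_inj] at this
    exact hl.injective this
  · rw [Finset.disjoint_left]
    intro x hx hx'
    simp only [Finset.mem_image] at hx hx'
    obtain ⟨a, -, rfl⟩ := hx
    obtain ⟨b, -, h⟩ := hx'
    have := mul_right_cancel₀ I_ne_zero h
    rw [ofReal_inj] at this
    linarith [hl.pos a, hl.pos b]
  · simp only [Finset.mem_union, Finset.mem_image, not_or, not_exists, not_and]
    refine ⟨fun k _ => ?_, fun k _ => ?_⟩ <;> simp [(hl.pos k).ne']

lemma IsKoshliakov.norm_sum_poles_le {p : ℝ} (hp : 0 < p) {l : ℕ → ℝ} (hl : IsKoshliakov p l)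
    {c : ℝ} (hc0 : 0 < c) (hc1 : c ≤ 1) (hc : ∀ n : ℕ, c ≤ n + 1 - l n) {N : ℕ} (hN : 1 ≤ N) {z : ℂ}
    (hz : ‖z‖ = N) :
    ‖∑ a ∈ poles l N, kC p a / deriv (kD p) a / (z - a)‖ ≤
      1 + 2 / c * ∑ k ∈ Finset.range N, 1 / ((k : ℝ) + 1) := by
  have hN' : (1 : ℝ) ≤ N := by exact_mod_cast hN
  rw [hl.sum_poles hp]
  refine (norm_add_le _ _).trans (add_le_add ?_ ?_)
  · rw [norm_div, norm_real, Real.norm_of_nonneg (kW_nonneg hp _), hz]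
    exact div_le_one_of_le₀ ((kW_le_one hp _).trans hN') (by linarith)
  · refine (norm_sum_le _ _).trans ?_
    rw [Finset.mul_sum, ← Finset.sum_range_reflect (fun k : ℕ => 2 / c * (1 / ((k : ℝ) + 1)))]
    refine Finset.sum_le_sum fun k hk => ?_
    have hk := Finset.mem_range.1 hk
    have hcast : ((N - 1 - k : ℕ) : ℝ) + 1 = N - k := by
      have : ((N - 1 - k : ℕ) : ℝ) + 1 = ((N - 1 - k + 1 : ℕ) : ℝ) := by push_cast; ring
      rw [this, show N - 1 - k + 1 = N - k by omega, Nat.cast_sub hk.le]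
    have hk1 : (k : ℝ) + 1 ≤ N := by exact_mod_cast hk
    have hd : c * (N - k) ≤ N - l k := by nlinarith [hc k]
    have hpos : 0 < c * (N - k : ℝ) := mul_pos hc0 (by linarith)
    have hI : ‖((l k : ℝ) : ℂ) * I‖ = l k := by simp [abs_of_pos (hl.pos k)]
    have h1 : c * (N - k) ≤ ‖z - (l k : ℝ) * I‖ := by
      have := norm_sub_norm_le z ((l k : ℝ) * I)
      rw [hI, hz] at this; linarith
    have h2 : c * (N - k) ≤ ‖z + (l k : ℝ) * I‖ := by
      have := norm_sub_norm_le z (-((l k : ℝ) * I))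
      rw [norm_neg, hI, hz, sub_neg_eq_add] at this; linarith
    rw [hcast]
    refine (norm_add_le _ _).trans ?_
    rw [norm_div, norm_div, norm_real, Real.norm_of_nonneg (kW_nonneg hp _)]
    have hW := kW_le_one hp (l k)
    have hW0 := kW_nonneg hp (l k)
    calc _ ≤ 1 / (c * (N - k)) + 1 / (c * (N - k) : ℝ) := by gcongr
      _ = _ := by
        have : (N - k : ℝ) ≠ 0 := by linarith
        field_simp; norm_num

/-- The partial fraction expansion of `kH p`. On the circle `|z| = N` the quotient `kC p / kD p` is
bounded by `4` and the sum of the principal parts is `O(log N)`, which is `o(N)`. -/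
theorem IsKoshliakov.partial_fraction {p : ℝ} (hp : 0 < p) {l : ℕ → ℝ} (hl : IsKoshliakov p l)
    {t : ℝ} (ht : 0 < t) :
    Tendsto (fun N : ℕ => ∑ k ∈ Finset.range N, kW p (l k) * (2 * t / (t ^ 2 + l k ^ 2))) atTop
      (𝓝 (kH p t - kW p 0 / t)) := by
  obtain ⟨c, hc0, hc1, hc⟩ := hl.exists_gap hp
  have hDt : kD p t ≠ 0 := kD_ne_zero_of_re_pos hp (by simpa using ht)
  have hDt' : kD p (-t) ≠ 0 := by rw [kD_neg, neg_ne_zero]; exact hDt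
  set M : ℕ → ℝ := fun N => 5 + 2 / c * ∑ k ∈ Finset.range N, 1 / ((k : ℝ) + 1) with hM
  have hlim : Tendsto (fun N : ℕ => 2 * (M N / N) * t) atTop (𝓝 0) := by
    have h1 : Tendsto (fun N : ℕ => (N : ℝ)⁻¹ * ∑ k ∈ Finset.range N, 1 / ((k : ℝ) + 1)) atTop
        (𝓝 0) := (tendsto_one_div_add_atTop_nhds_zero_nat (𝕜 := ℝ)).cesaro
    have h2 : Tendsto (fun N : ℕ => (5 : ℝ) / N) atTop (𝓝 0) :=
      tendsto_const_div_atTop_nhds_zero_nat 5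
    have := (((h2.add (h1.const_mul (2 / c))).const_mul 2).mul_const t)
    simp only [mul_zero, add_zero, zero_mul] at this
    refine this.congr fun N => ?_
    simp only [hM]; ring
  rw [tendsto_iff_norm_sub_tendsto_zero]
  refine squeeze_zero' (Eventually.of_forall fun _ => norm_nonneg _) ?_ hlim
  filter_upwards [eventually_ge_atTop (⌈4 * (Real.pi + p)⌉₊), eventually_gt_atTop ⌈t⌉₊,
    eventually_ge_atTop 1] with N hN1 hN2 hN3
  have hN1 : 4 * (Real.pi + p) ≤ N := Nat.ceil_le.1 hN1
  have hN2 : t < N := (Nat.lt_of_ceil_lt hN2)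
  have hN0 : (0 : ℝ) < N := by linarith
  have key := partial_fraction_bound (differentiable_kC p) (differentiable_kD p) (poles l N)
    (M := M N) hN0 (fun a ha => hl.simple_poles hp ha) (fun z hz h => hl.mem_poles hp hz h)
    (fun z hz => (kC_div_kD_bound hp hN1 hz).1) (fun z hz => ?_) (t := t)
    (by simpa [abs_of_pos ht] using hN2) hDt hDt'
  · set S := ∑ k ∈ Finset.range N, kW p (l k) * (2 * t / (t ^ 2 + l k ^ 2)) with hS
    have hsum : ∀ z : ℂ, (∀ k, z - (l k : ℝ) * I ≠ 0) → (∀ k, z + (l k : ℝ) * I ≠ 0) →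
        ∑ a ∈ poles l N, kC p a / deriv (kD p) a / (z - a) =
        (kW p 0 : ℝ) / z + ∑ k ∈ Finset.range N, (kW p (l k) : ℂ) * (2 * z / (z ^ 2 + l k ^ 2)) := by
      intro z h1 h2
      rw [hl.sum_poles hp]
      congr 1
      refine Finset.sum_congr rfl fun k _ => ?_
      have e : z ^ 2 + (l k : ℂ) ^ 2 = (z - (l k : ℝ) * I) * (z + (l k : ℝ) * I) := by
        linear_combination ((l k : ℂ) ^ 2) * I_sq
      rw [e]
      have := h1 k
      have := h2 k
      field_simp
      ring
    have hre : ∀ z : ℂ, z.re ≠ 0 → (∀ k, z - (l k : ℝ) * I ≠ 0) ∧ (∀ k, z + (l k : ℝ) * I ≠ 0) := by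
      intro z hz
      constructor <;> intro k h <;> apply hz <;> simpa using congrArg Complex.re h
    have ht1 := hre (t : ℂ) (by simpa using ht.ne')
    have ht2 := hre (-(t : ℂ)) (by simpa using ht.ne')
    rw [hsum _ ht1.1 ht1.2, hsum _ ht2.1 ht2.2] at key
    have e : (kC p t / kD p t - ((kW p 0 : ℝ) / (t : ℂ) +
        ∑ k ∈ Finset.range N, (kW p (l k) : ℂ) * (2 * t / ((t : ℂ) ^ 2 + l k ^ 2)))) -
        (kC p (-t) / kD p (-t) - ((kW p 0 : ℝ) / (-t : ℂ) +
        ∑ k ∈ Finset.range N, (kW p (l k) : ℂ) * (2 * (-t) / ((-t : ℂ) ^ 2 + l k ^ 2)))) =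
        ((-2 * (S - (kH p t - kW p 0 / t)) : ℝ) : ℂ) := by
      rw [kC_neg, kD_neg]
      push_cast
      rw [ofReal_kH, hS]
      push_cast
      simp only [neg_sq, mul_neg, neg_div, Finset.sum_neg_distrib, div_neg]
      ring
    rw [e, norm_real, norm_mul, norm_real, Real.norm_of_nonneg ht.le] at key
    norm_num at key
    have e2 : 4 * M N / N * t = 2 * (2 * (M N / N) * t) := by ring
    rw [Real.norm_eq_abs]
    linarith
  · refine (norm_sub_le _ _).trans ?_
    have h1 := (kC_div_kD_bound hp hN1 hz).2
    have h2 := hl.norm_sum_poles_le hp hc0 hc1 hc hN3 hz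
    simp only [hM]
    linarith

/-! ### Consequences of the expansion on the real line -/

lemma IsKoshliakov.summable_inv_sq {p : ℝ} {l : ℕ → ℝ} (hl : IsKoshliakov p l) :
    Summable fun k => 1 / l k ^ 2 := by
  have h := (summable_nat_add_iff 1).2 (Real.summable_one_div_nat_pow (p := 2).2 (by norm_num))
  refine Summable.of_nonneg_of_le (fun k => by positivity) (fun k => ?_) (h.mul_left 4)
  have h1 := (hl k).1
  have h2 := hl.pos k
  push_cast
  rw [mul_one_div, div_le_div_iff₀ (by positivity) (by positivity)]
  have : (0 : ℝ) ≤ k := k.cast_nonneg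
  nlinarith

lemma kosh_denominator_pos {p : ℝ} (hp : 0 < p) {t : ℝ} (ht : 0 < t) :
    0 < p * Real.sinh (Real.pi * t) + t * Real.cosh (Real.pi * t) := by
  have h1 : 0 < Real.sinh (Real.pi * t) := Real.sinh_pos_iff.2 (mul_pos Real.pi_pos ht)
  have h2 := Real.cosh_pos (Real.pi * t)
  positivity

lemma hasDerivAt_kH {p : ℝ} (hp : 0 < p) {t : ℝ} (ht : 0 < t) :
    HasDerivAt (kH p) (-(Real.pi * p ^ 2 + p - Real.pi * t ^ 2) /
      (p * Real.sinh (Real.pi * t) + t * Real.cosh (Real.pi * t)) ^ 2) t := by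
  have h0 : HasDerivAt (fun z : ℝ => Real.pi * z) Real.pi t := by
    simpa using (hasDerivAt_id t).const_mul Real.pi
  have h1 := (h0.cosh.const_mul p).add ((hasDerivAt_id t).mul h0.sinh)
  have h2 := (h0.sinh.const_mul p).add ((hasDerivAt_id t).mul h0.cosh)
  have h := h1.div h2 (kosh_denominator_pos hp ht).ne'
  refine (h.congr_deriv ?_)
  simp only [id, Pi.add_apply, Pi.mul_apply]
  congr 1
  linear_combination (-(Real.pi * p ^ 2 + p - Real.pi * t ^ 2)) * Real.cosh_sq_sub_sinh_sq (Real.pi * t)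

lemma IsKoshliakov.summable_kW_div {p : ℝ} (hp : 0 < p) {l : ℕ → ℝ} (hl : IsKoshliakov p l)
    (t : ℝ) : Summable fun k => kW p (l k) / (t ^ 2 + l k ^ 2) := by
  refine Summable.of_nonneg_of_le (fun k => div_nonneg (kW_nonneg hp _) (by positivity)) (fun k => ?_)
    hl.summable_inv_sq
  have := hl.pos k
  have := kW_le_one hp (l k)
  gcongr
  nlinarith

lemma IsKoshliakov.kH_eq_tsum {p : ℝ} (hp : 0 < p) {l : ℕ → ℝ} (hl : IsKoshliakov p l)
    {t : ℝ} (ht : 0 < t) :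
    kH p t = kW p 0 / t + ∑' k, kW p (l k) * (2 * t / (t ^ 2 + l k ^ 2)) := by
  have hs : Summable fun k => kW p (l k) * (2 * t / (t ^ 2 + l k ^ 2)) :=
    ((hl.summable_kW_div hp t).mul_left (2 * t)).congr fun k => by ring
  have := tendsto_nhds_unique hs.hasSum.tendsto_sum_nat (hl.partial_fraction hp ht)
  rw [this]; ring

/-- The kernel `(y² - t²) / (t² + y²)²`, antisymmetric in `(t, y)`; twice it is the derivative in `t`
of `2 t / (t² + y²)`. -/
noncomputable def kA (t y : ℝ) : ℝ := (y ^ 2 - t ^ 2) / (t ^ 2 + y ^ 2) ^ 2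

lemma abs_kA_le (t : ℝ) {y : ℝ} (hy : 0 < y) : |kA t y| ≤ 1 / y ^ 2 := by
  have h : 0 < t ^ 2 + y ^ 2 := by positivity
  rw [kA, abs_div, abs_of_pos (pow_pos h 2), div_le_div_iff₀ (by positivity) (by positivity)]
  have : |y ^ 2 - t ^ 2| ≤ t ^ 2 + y ^ 2 := abs_le.2 ⟨by nlinarith, by nlinarith⟩
  nlinarith [sq_nonneg t, abs_nonneg (y ^ 2 - t ^ 2)]

lemma IsKoshliakov.summable_kA {p : ℝ} (hp : 0 < p) {l : ℕ → ℝ} (hl : IsKoshliakov p l) (t : ℝ) :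
    Summable fun k => kW p (l k) * kA t (l k) := by
  refine Summable.of_norm_bounded hl.summable_inv_sq fun k => ?_
  rw [norm_mul, Real.norm_of_nonneg (kW_nonneg hp _)]
  exact (mul_le_of_le_one_left (norm_nonneg _) (kW_le_one hp _)).trans (abs_kA_le t (hl.pos k))

/-- Termwise differentiation of the partial fraction expansion of `kH p`. -/
lemma IsKoshliakov.deriv_identity {p : ℝ} (hp : 0 < p) {l : ℕ → ℝ} (hl : IsKoshliakov p l)
    {t : ℝ} (ht : 0 < t) :
    (Real.pi * p ^ 2 + p - Real.pi * t ^ 2) /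
      (p * Real.sinh (Real.pi * t) + t * Real.cosh (Real.pi * t)) ^ 2 =
    kW p 0 / t ^ 2 - 2 * ∑' k, kW p (l k) * kA t (l k) := by
  have h1 : HasDerivAt (fun z => ∑' k, kW p (l k) * (2 * z / (z ^ 2 + l k ^ 2)))
      (∑' k, kW p (l k) * (2 * kA t (l k))) t := by
    refine hasDerivAt_tsum (u := fun k => 2 * (1 / l k ^ 2)) (y₀ := 0) (g' := fun k z =>
      kW p (l k) * (2 * kA z (l k))) (hl.summable_inv_sq.mul_left 2) (fun k z => ?_) (fun k z => ?_)
      (by simp) t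
    · refine HasDerivAt.const_mul _ ?_
      have hpos : z ^ 2 + l k ^ 2 ≠ 0 := by have := hl.pos k; positivity
      have := ((hasDerivAt_id z).const_mul 2).div (((hasDerivAt_id z).pow 2).add_const (l k ^ 2))
        hpos
      refine this.congr_deriv ?_
      simp only [kA, id, Pi.pow_apply]
      field_simp
      push_cast
      ring
    · rw [norm_mul, Real.norm_of_nonneg (kW_nonneg hp _), norm_mul]
      refine (mul_le_of_le_one_left (by positivity) (kW_le_one hp _)).trans ?_
      have := abs_kA_le z (hl.pos k)
      rw [Real.norm_eq_abs, Real.norm_eq_abs, abs_two]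
      linarith
  have h2 : HasDerivAt (fun z : ℝ => kW p 0 / z) (-kW p 0 / t ^ 2) t := by
    have := (hasDerivAt_inv ht.ne').const_mul (kW p 0)
    refine (this.congr_deriv ?_)
    ring
  have h3 := (h2.add h1).congr_of_eventuallyEq (f₁ := kH p) (by
    filter_upwards [lt_mem_nhds ht] with z hz
    exact hl.kH_eq_tsum hp hz)
  have h4 := h3.unique (hasDerivAt_kH hp ht)
  have e : ∑' k, kW p (l k) * (2 * kA t (l k)) = 2 * ∑' k, kW p (l k) * kA t (l k) := by
    rw [← tsum_mul_left]; exact tsum_congr fun k => by ring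
  rw [e, neg_div, neg_div] at h4
  linarith

lemma tendsto_cosh_sub_one : Tendsto (fun t : ℝ => (Real.cosh t - 1) / t ^ 2) (𝓝[≠] 0) (𝓝 (1 / 2)) := by
  have hs : Tendsto (fun t : ℝ => Real.sinh t / t) (𝓝[≠] 0) (𝓝 1) := by
    have := (Real.hasDerivAt_sinh 0).tendsto_slope
    rw [Real.cosh_zero] at this
    refine this.congr fun t => ?_
    simp [slope_def_field]
  refine HasDerivAt.lhopital_zero_nhdsNE (f' := Real.sinh) (g' := fun t => 2 * t)
    (Eventually.of_forall fun t => (Real.hasDerivAt_cosh t).sub_const 1)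
    (Eventually.of_forall fun t => by simpa using hasDerivAt_pow 2 t) ?_ ?_ ?_ ?_
  · filter_upwards [self_mem_nhdsWithin] with t ht
    simpa using ht
  · have : Continuous fun t : ℝ => Real.cosh t - 1 := by fun_prop
    simpa using (this.tendsto 0).mono_left nhdsWithin_le_nhds
  · have : Continuous fun t : ℝ => t ^ 2 := by fun_prop
    simpa using (this.tendsto 0).mono_left nhdsWithin_le_nhds
  · refine (hs.mul_const (1 / 2)).congr' ?_ |>.trans (by norm_num)
    filter_upwards [self_mem_nhdsWithin] with t ht
    field_simp

lemma tendsto_sinh_sub_self :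
    Tendsto (fun t : ℝ => (Real.sinh t - t) / t ^ 3) (𝓝[≠] 0) (𝓝 (1 / 6)) := by
  refine HasDerivAt.lhopital_zero_nhdsNE (f' := fun t => Real.cosh t - 1) (g' := fun t => 3 * t ^ 2)
    (Eventually.of_forall fun t => (Real.hasDerivAt_sinh t).sub (hasDerivAt_id t))
    (Eventually.of_forall fun t => by simpa using hasDerivAt_pow 3 t) ?_ ?_ ?_ ?_
  · filter_upwards [self_mem_nhdsWithin] with t ht
    have : t ≠ 0 := ht
    positivity
  · have : Continuous fun t : ℝ => Real.sinh t - t := by fun_prop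
    simpa using (this.tendsto 0).mono_left nhdsWithin_le_nhds
  · have : Continuous fun t : ℝ => t ^ 3 := by fun_prop
    simpa using (this.tendsto 0).mono_left nhdsWithin_le_nhds
  · refine (tendsto_cosh_sub_one.mul_const (1 / 3)).congr' ?_ |>.trans (by norm_num)
    filter_upwards [self_mem_nhdsWithin] with t ht
    field_simp

/-- The coefficient of `t` in the expansion of `kH p t` at `0`, computed from the closed form and from
the partial fractions. -/
lemma IsKoshliakov.tsum_kW_div_sq {p : ℝ} (hp : 0 < p) {l : ℕ → ℝ} (hl : IsKoshliakov p l) :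
    ∑' k, kW p (l k) / l k ^ 2 = Real.pi / 6 * ((Real.pi * p) ^ 2 + 3 * (Real.pi * p) + 3) /
      (Real.pi * p + 1) ^ 2 := by
  have hpi := Real.pi_pos
  have hcont : Continuous fun t : ℝ => ∑' k, kW p (l k) / (t ^ 2 + l k ^ 2) := by
    refine continuous_tsum (fun k => ?_) hl.summable_inv_sq fun k t => ?_
    · have : ∀ t : ℝ, t ^ 2 + l k ^ 2 ≠ 0 := fun t => by have := hl.pos k; positivity
      exact continuous_const.div (by fun_prop) this
    · have := hl.pos k
      have := kW_le_one hp (l k)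
      rw [Real.norm_of_nonneg (div_nonneg (kW_nonneg hp _) (by positivity))]
      gcongr
      nlinarith
  have hlim1 := (hcont.tendsto 0).mono_left (nhdsWithin_le_nhds (s := Set.Ioi 0))
  simp only [ne_eq, OfNat.ofNat_ne_zero, not_false_eq_true, zero_pow, zero_add] at hlim1
  have hmul : Tendsto (fun t : ℝ => Real.pi * t) (𝓝[>] 0) (𝓝[≠] 0) := by
    refine tendsto_nhdsWithin_iff.2 ⟨?_, ?_⟩
    · have : Continuous fun t : ℝ => Real.pi * t := by fun_prop
      simpa using (this.tendsto 0).mono_left nhdsWithin_le_nhds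
    · filter_upwards [self_mem_nhdsWithin] with t ht
      have ht : 0 < t := ht
      exact (mul_pos hpi ht).ne'
  have c2 := tendsto_cosh_sub_one.comp hmul
  have s3 := tendsto_sinh_sub_self.comp hmul
  have hs1 : Tendsto (fun t : ℝ => Real.sinh (Real.pi * t) / (Real.pi * t)) (𝓝[>] 0) (𝓝 1) := by
    have := (Real.hasDerivAt_sinh 0).tendsto_slope
    rw [Real.cosh_zero] at this
    refine (this.comp hmul).congr fun t => ?_
    simp [slope_def_field]
  have hc0 : Tendsto (fun t : ℝ => Real.cosh (Real.pi * t)) (𝓝[>] 0) (𝓝 1) := by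
    have : Continuous fun t : ℝ => Real.cosh (Real.pi * t) := by fun_prop
    simpa using (this.tendsto 0).mono_left nhdsWithin_le_nhds
  -- `∑ kW p (l k) / (t² + l k²) = (t C - kW p 0 · D) / (2 t² D)` with `C`, `D` the numerator and
  -- denominator of `kH p t`; dividing by `t³` leaves the following quotient of limits.
  have hnum := (((c2.const_mul (p * Real.pi ^ 2)).add (hs1.const_mul Real.pi)).sub
    (s3.const_mul (kW p 0 * p * Real.pi ^ 3))).sub (c2.const_mul (kW p 0 * Real.pi ^ 2))
  have hden := ((hs1.const_mul (p * Real.pi)).add hc0).const_mul 2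
  have hlim2 := hnum.div hden (by positivity)
  have hW0 : kW p 0 = p / (Real.pi * p + 1) := by
    rw [kW]; field_simp; ring
  have heq := tendsto_nhds_unique hlim1 (hlim2.congr' ?_)
  · rw [heq, hW0]
    field_simp
    ring
  · filter_upwards [self_mem_nhdsWithin] with t ht
    have ht : 0 < t := ht
    have hD := kosh_denominator_pos hp ht
    have e := hl.kH_eq_tsum hp ht
    have e2 : ∑' k, kW p (l k) * (2 * t / (t ^ 2 + l k ^ 2)) =
        2 * t * ∑' k, kW p (l k) / (t ^ 2 + l k ^ 2) := by
      rw [← tsum_mul_left]; exact tsum_congr fun k => by ring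
    rw [e2] at e
    have e3 : ∑' k, kW p (l k) / (t ^ 2 + l k ^ 2) = (kH p t - kW p 0 / t) / (2 * t) := by
      rw [e]; field_simp; ring
    rw [e3, kH, hW0]
    simp only [Function.comp, Pi.div_apply]
    have hD' : 2 * (p * Real.pi * (Real.sinh (Real.pi * t) / (Real.pi * t)) +
        Real.cosh (Real.pi * t)) ≠ 0 := by
      have : 0 < Real.sinh (Real.pi * t) := Real.sinh_pos_iff.2 (mul_pos Real.pi_pos ht)
      have := Real.cosh_pos (Real.pi * t)
      positivity
    have hq : Real.pi * p + 1 ≠ 0 := by positivity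
    have hD'' : p * Real.sinh (Real.pi * t) + t * Real.cosh (Real.pi * t) ≠ 0 := hD.ne'
    rw [div_eq_iff hD']
    field_simp
    ring

/-! ### The conditionally convergent double series -/

/-- The function `y / (t ^ 2 + y ^ 2)` of `y`, whose derivative is `-kA t y`. -/
noncomputable def kF (t y : ℝ) : ℝ := y / (t ^ 2 + y ^ 2)

lemma hasDerivAt_kF (t : ℝ) {y : ℝ} (hy : 0 < y) : HasDerivAt (kF t) (-kA t y) y := by
  have hpos : t ^ 2 + y ^ 2 ≠ 0 := by positivity
  have := (hasDerivAt_id y).div (((hasDerivAt_id y).pow 2).const_add (t ^ 2)) hpos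
  refine this.congr_deriv ?_
  simp only [kA, id, Pi.pow_apply]
  field_simp
  push_cast
  ring

lemma hasDerivAt_kA (t : ℝ) {y : ℝ} (hy : 0 < y) :
    HasDerivAt (kA t) (2 * y * (3 * t ^ 2 - y ^ 2) / (t ^ 2 + y ^ 2) ^ 3) y := by
  have hpos : (t ^ 2 + y ^ 2) ^ 2 ≠ 0 := by positivity
  have := (((hasDerivAt_id y).pow 2).sub_const (t ^ 2)).div
    ((((hasDerivAt_id y).pow 2).const_add (t ^ 2)).pow 2) hpos
  refine this.congr_deriv ?_
  simp only [id, Pi.pow_apply]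
  field_simp
  push_cast
  ring

/-- On `[m, m + 1]` the derivative of `kA t` is at most `6 / m ^ 3`, uniformly in `t`. -/
lemma abs_kA_sub_le (t : ℝ) {m x y : ℝ} (hm : 0 < m) (hx1 : m ≤ x) (hx2 : x ≤ m + 1) (hy1 : m ≤ y)
    (hy2 : y ≤ m + 1) : |kA t x - kA t y| ≤ 6 / m ^ 3 := by
  have h := (convex_Icc m (m + 1)).norm_image_sub_le_of_norm_hasDerivWithin_le (f := kA t)
    (C := 6 / m ^ 3) (fun z hz => (hasDerivAt_kA t (hm.trans_le hz.1)).hasDerivWithinAt)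
    (fun z hz => ?_) (⟨hy1, hy2⟩ : y ∈ Set.Icc m (m + 1)) (⟨hx1, hx2⟩ : x ∈ Set.Icc m (m + 1))
  · refine h.trans (mul_le_of_le_one_right (by positivity) ?_)
    rw [Real.norm_eq_abs, abs_le]
    constructor <;> linarith
  · have hz := hz.1
    have hz0 : 0 < z := hm.trans_le hz
    have hs : 0 < t ^ 2 + z ^ 2 := by positivity
    have h1 : |3 * t ^ 2 - z ^ 2| ≤ 3 * (t ^ 2 + z ^ 2) := abs_le.2 ⟨by nlinarith, by nlinarith⟩
    rw [Real.norm_eq_abs, abs_div, abs_of_pos (pow_pos hs 3), abs_mul, abs_of_pos (by positivity : 0 < 2 * z)]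
    calc 2 * z * |3 * t ^ 2 - z ^ 2| / (t ^ 2 + z ^ 2) ^ 3
        ≤ 2 * z * (3 * (t ^ 2 + z ^ 2)) / (t ^ 2 + z ^ 2) ^ 3 := by gcongr
      _ = 6 * z / (t ^ 2 + z ^ 2) ^ 2 := by field_simp; norm_num
      _ ≤ 6 * z / (z ^ 2) ^ 2 := by gcongr; nlinarith
      _ = 6 / z ^ 3 := by field_simp
      _ ≤ 6 / m ^ 3 := by gcongr

/-- One-term comparison of the tail sum of `kA t` with the telescoping sum of `kF t`. -/
lemma kA_sub_increment_le (t : ℝ) {m y : ℝ} (hm : 0 < m) (hy1 : m ≤ y) (hy2 : y ≤ m + 1) :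
    |kA t y - (kF t m - kF t (m + 1))| ≤ 6 / m ^ 3 := by
  obtain ⟨x, hx, he⟩ := exists_hasDerivAt_eq_slope (kF t) (fun z => -kA t z) (lt_add_one m)
    (fun z hz => (hasDerivAt_kF t (hm.trans_le hz.1)).continuousAt.continuousWithinAt)
    (fun z hz => hasDerivAt_kF t (hm.trans hz.1))
  have : kF t m - kF t (m + 1) = kA t x := by
    rw [add_sub_cancel_left, div_one] at he; linarith
  rw [this]
  exact abs_kA_sub_le t hm hy1 hy2 hx.1.le hx.2.le

lemma abs_kW_sub_le {p : ℝ} (hp : 0 < p) {y : ℝ} (hy : 0 < y) :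
    |kW p y - 1 / Real.pi| ≤ p / y ^ 2 := by
  have hpi := Real.pi_gt_three
  rw [abs_sub_comm, abs_of_nonneg (sub_nonneg.2 (kW_le hp y))]
  have : 1 / Real.pi - kW p y = p / (Real.pi * (Real.pi * p ^ 2 + p + Real.pi * y ^ 2)) := by
    rw [kW]; field_simp; ring
  rw [this]
  gcongr
  have h0 : 0 ≤ Real.pi * (Real.pi * p ^ 2 + p) := by positivity
  have h1 : y ^ 2 ≤ Real.pi * Real.pi * y ^ 2 :=
    le_mul_of_one_le_left (sq_nonneg y) (by nlinarith)
  linarith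

lemma hasSum_kF (t : ℝ) {N : ℕ} (hN : 1 ≤ N) :
    HasSum (fun k : ℕ => kF t ((k + N : ℕ) : ℝ) - kF t (((k + N : ℕ) : ℝ) + 1)) (kF t N) := by
  have hlim : Tendsto (fun k : ℕ => kF t ((k + N : ℕ) : ℝ)) atTop (𝓝 0) := by
    have h0 : Tendsto (fun k : ℕ => 1 / ((k + N : ℕ) : ℝ)) atTop (𝓝 0) :=
      (tendsto_add_atTop_iff_nat (f := fun k : ℕ => 1 / (k : ℝ)) N).2
        tendsto_one_div_atTop_nhds_zero_nat
    refine squeeze_zero (fun k => by unfold kF; positivity) (fun k => ?_) h0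
    have hk : (0 : ℝ) < ((k + N : ℕ) : ℝ) := by exact_mod_cast (by omega : 0 < k + N)
    rw [kF, div_le_div_iff₀ (by positivity) hk]
    nlinarith [sq_nonneg t]
  have hsum : Summable fun k : ℕ => kF t ((k + N : ℕ) : ℝ) - kF t (((k + N : ℕ) : ℝ) + 1) := by
    have h2 := (summable_nat_add_iff N).2 (Real.summable_one_div_nat_pow (p := 2).2 (by norm_num))
    refine Summable.of_norm_bounded h2 fun k => ?_
    have hk : (0 : ℝ) < ((k + N : ℕ) : ℝ) := by exact_mod_cast (by omega : 0 < k + N)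
    set m := ((k + N : ℕ) : ℝ)
    obtain ⟨x, hx, he⟩ := exists_hasDerivAt_eq_slope (kF t) (fun z => -kA t z) (lt_add_one m)
      (fun z hz => (hasDerivAt_kF t (hk.trans_le hz.1)).continuousAt.continuousWithinAt)
      (fun z hz => hasDerivAt_kF t (hk.trans hz.1))
    have : kF t m - kF t (m + 1) = kA t x := by
      rw [add_sub_cancel_left, div_one] at he; linarith
    rw [this, Real.norm_eq_abs]
    refine (abs_kA_le t (hk.trans hx.1)).trans ?_
    have := hx.1
    gcongr
  have htel : Tendsto (fun n : ℕ => ∑ k ∈ Finset.range n,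
      (kF t ((k + N : ℕ) : ℝ) - kF t (((k + N : ℕ) : ℝ) + 1))) atTop (𝓝 (kF t N)) := by
    have e : ∀ n : ℕ, ∑ k ∈ Finset.range n,
        (kF t ((k + N : ℕ) : ℝ) - kF t (((k + N : ℕ) : ℝ) + 1)) =
        kF t N - kF t ((n + N : ℕ) : ℝ) := by
      intro n
      have := Finset.sum_range_sub' (fun k : ℕ => kF t ((k + N : ℕ) : ℝ)) n
      rw [zero_add] at this
      rw [← this]
      refine Finset.sum_congr rfl fun k _ => ?_
      congr 2
      push_cast; ring
    simp_rw [e]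
    simpa using hlim.const_sub (kF t N)
  rw [← tendsto_nhds_unique hsum.hasSum.tendsto_sum_nat htel]
  exact hsum.hasSum

/-- The tail of the weighted series of `kA t` beyond `N` is `kF t N / π` up to an error `o(1 / N)`
that does not depend on `t`: termwise the error is `O(1 / m ^ 3)`, and `1 / m ^ 3 ≤ 1 / (N m ^ 2)`
for `m ≥ N`. -/
lemma IsKoshliakov.tail_bound {p : ℝ} (hp : 0 < p) {l : ℕ → ℝ} (hl : IsKoshliakov p l) (t : ℝ)
    {N : ℕ} (hN : 1 ≤ N) :
    |∑' k, kW p (l (k + N)) * kA t (l (k + N)) - 1 / Real.pi * kF t N| ≤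
      (6 + p) / N * ∑' k : ℕ, 1 / ((k + N : ℕ) : ℝ) ^ 2 := by
  have hF := (hasSum_kF t hN).mul_left (1 / Real.pi)
  have hS := (summable_nat_add_iff N).2 (hl.summable_kA hp t)
  have h2 := (summable_nat_add_iff N).2 (Real.summable_one_div_nat_pow (p := 2).2 (by norm_num))
  rw [← hF.tsum_eq, ← hS.tsum_sub hF.summable, ← Real.norm_eq_abs]
  refine tsum_of_norm_bounded (h2.hasSum.mul_left _) fun k => ?_
  have hk : (1 : ℝ) ≤ ((k + N : ℕ) : ℝ) := by exact_mod_cast (by omega : 1 ≤ k + N)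
  have hkN : (N : ℝ) ≤ ((k + N : ℕ) : ℝ) := by exact_mod_cast (by omega : N ≤ k + N)
  obtain ⟨a, b, -⟩ := hl (k + N)
  have hN' : (1 : ℝ) ≤ N := by exact_mod_cast hN
  set m := ((k + N : ℕ) : ℝ)
  set y := l (k + N)
  have hm : 0 < m := by linarith
  have hy : 0 < y := hl.pos _
  have hmy : m ≤ y := by linarith
  have e : kW p y * kA t y - 1 / Real.pi * (kF t m - kF t (m + 1)) =
      (kW p y - 1 / Real.pi) * kA t y + 1 / Real.pi * (kA t y - (kF t m - kF t (m + 1))) := by ring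
  have hpi : 1 / Real.pi ≤ 1 := by
    rw [div_le_one Real.pi_pos]; linarith [Real.pi_gt_three]
  have b1 : |(kW p y - 1 / Real.pi) * kA t y| ≤ p / m ^ 3 := by
    rw [abs_mul]
    calc _ ≤ p / y ^ 2 * (1 / y ^ 2) := by
          gcongr
          · exact abs_kW_sub_le hp hy
          · exact abs_kA_le t hy
      _ ≤ p / m ^ 2 * (1 / m ^ 2) := by gcongr
      _ = p / m ^ 3 * (1 / m) := by field_simp
      _ ≤ p / m ^ 3 := mul_le_of_le_one_right (by positivity) (by rw [div_le_one hm]; exact hk)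
  have b2 : |1 / Real.pi * (kA t y - (kF t m - kF t (m + 1)))| ≤ 6 / m ^ 3 := by
    rw [abs_mul, abs_of_pos (by have := Real.pi_pos; positivity : 0 < 1 / Real.pi)]
    exact (mul_le_of_le_one_left (abs_nonneg _) hpi).trans
      (kA_sub_increment_le t hm hmy (by linarith))
  rw [e, Real.norm_eq_abs]
  refine (abs_add_le _ _).trans ((add_le_add b1 b2).trans ?_)
  calc p / m ^ 3 + 6 / m ^ 3 = (6 + p) / m * (1 / m ^ 2) := by field_simp; ring
    _ ≤ (6 + p) / N * (1 / m ^ 2) := by gcongr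

/-- Both `kF (l n) N` and the increment of `arctan` over `[n / N, (n + 1) / N]` lie between the values
of the decreasing function `x ↦ kF x N` at `n + 1` and at `n`. -/
lemma IsKoshliakov.riemann_term {p : ℝ} {l : ℕ → ℝ} (hl : IsKoshliakov p l) {N : ℕ} (hN : 1 ≤ N)
    (n : ℕ) : |kF (l n) N - (Real.arctan ((n + 1 : ℕ) / N) - Real.arctan (n / N))| ≤
      kF n N - kF ((n + 1 : ℕ) : ℝ) N := by
  have hN0 : (0 : ℝ) < N := by exact_mod_cast hN
  have anti : ∀ x y : ℝ, 0 ≤ x → x ≤ y → kF y N ≤ kF x N := by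
    intro x y hx hxy
    unfold kF
    gcongr
  have hn0 : (0 : ℝ) ≤ n := n.cast_nonneg
  have hlt : (n : ℝ) / N < ((n + 1 : ℕ) : ℝ) / N := by
    gcongr; push_cast; linarith
  obtain ⟨x, hx, he⟩ := exists_hasDerivAt_eq_slope Real.arctan (fun z => 1 / (1 + z ^ 2)) hlt
    Real.continuous_arctan.continuousOn (fun z _ => Real.hasDerivAt_arctan z)
  have hd : ((n + 1 : ℕ) : ℝ) / N - n / N = 1 / N := by push_cast; ring
  have e : Real.arctan ((n + 1 : ℕ) / N) - Real.arctan (n / N) = kF (N * x) N := by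
    rw [hd] at he
    have h1 : 0 < 1 + x ^ 2 := by positivity
    rw [kF]
    field_simp at he ⊢
    linarith
  rw [e]
  have x1 : (n : ℝ) ≤ N * x := by have := hx.1.le; rw [div_le_iff₀ hN0] at this; linarith
  have x2 : N * x ≤ ((n + 1 : ℕ) : ℝ) := by have := hx.2.le; rw [le_div_iff₀ hN0] at this; linarith
  obtain ⟨a, b, -⟩ := hl n
  have a1 := anti _ _ hn0 x1
  have a2 := anti _ _ (hn0.trans x1) x2
  have a3 := anti n (l n) hn0 (by linarith)
  have a4 := anti (l n) ((n + 1 : ℕ) : ℝ) (hl.pos n).le (by push_cast; exact b.le)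
  rw [abs_le]
  constructor <;> linarith

lemma IsKoshliakov.riemann_sum {p : ℝ} {l : ℕ → ℝ} (hl : IsKoshliakov p l) :
    Tendsto (fun N : ℕ => ∑ n ∈ Finset.range N, kF (l n) N) atTop (𝓝 (Real.pi / 4)) := by
  rw [tendsto_iff_norm_sub_tendsto_zero]
  refine squeeze_zero' (Eventually.of_forall fun _ => norm_nonneg _) ?_
    tendsto_one_div_atTop_nhds_zero_nat
  filter_upwards [eventually_ge_atTop 1] with N hN
  have hN0 : (0 : ℝ) < N := by exact_mod_cast hN
  have h1 : ∑ n ∈ Finset.range N, (Real.arctan ((n + 1 : ℕ) / N) - Real.arctan (n / N)) =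
      Real.pi / 4 := by
    rw [Finset.sum_range_sub (fun n : ℕ => Real.arctan (n / N))]
    simp [hN0.ne']
  have h2 := Finset.sum_range_sub' (fun n : ℕ => kF n N) N
  rw [← h1, ← Finset.sum_sub_distrib]
  refine (norm_sum_le _ _).trans ((Finset.sum_le_sum fun n _ => hl.riemann_term hN n).trans ?_)
  rw [h2]
  have h3 : 0 ≤ kF N N := by unfold kF; positivity
  have h4 : kF ((0 : ℕ) : ℝ) N = 1 / N := by rw [kF]; simp; field_simp
  linarith

lemma IsKoshliakov.kW_tendsto {p : ℝ} (hp : 0 < p) {l : ℕ → ℝ} (hl : IsKoshliakov p l) :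
    Tendsto (fun n => |kW p (l n) - 1 / Real.pi|) atTop (𝓝 0) := by
  refine squeeze_zero (fun _ => abs_nonneg _) (fun n => abs_kW_sub_le hp (hl.pos n)) ?_
  simpa [div_eq_mul_inv] using hl.summable_inv_sq.tendsto_atTop_zero.const_mul p

/-- The double series of the antisymmetric kernel does not vanish, because it converges only
conditionally. Its square partial sums are zero, so only the tails `k ≥ N > n` contribute, and they
tend to `π⁻² ∫₀¹ dx / (1 + x²)`. -/
lemma IsKoshliakov.double_sum {p : ℝ} (hp : 0 < p) {l : ℕ → ℝ} (hl : IsKoshliakov p l) :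
    Tendsto (fun N : ℕ => ∑ n ∈ Finset.range N, kW p (l n) * ∑' k, kW p (l k) * kA (l n) (l k))
      atTop (𝓝 (1 / (4 * Real.pi))) := by
  have hpi := Real.pi_pos
  -- Since `kW p (l n) → 1 / π`, the weights may be replaced by their limit in the Cesàro sense.
  have hR : Tendsto (fun N : ℕ => ∑ n ∈ Finset.range N, kW p (l n) * (1 / Real.pi * kF (l n) N))
      atTop (𝓝 (1 / (4 * Real.pi))) := by
    have h1 := hl.riemann_sum.const_mul (1 / Real.pi * (1 / Real.pi))
    have h2 : Tendsto (fun N : ℕ => ∑ n ∈ Finset.range N,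
        (kW p (l n) - 1 / Real.pi) * (1 / Real.pi * kF (l n) N)) atTop (𝓝 0) := by
      refine squeeze_zero_norm' ?_ (hl.kW_tendsto hp).cesaro
      filter_upwards [eventually_ge_atTop 1] with N hN
      have hN0 : (0 : ℝ) < N := by exact_mod_cast hN
      refine (norm_sum_le _ _).trans ?_
      rw [Finset.mul_sum]
      refine Finset.sum_le_sum fun n _ => ?_
      rw [norm_mul, Real.norm_eq_abs, mul_comm]
      gcongr
      have hF0 : 0 ≤ kF (l n) N := by unfold kF; positivity
      have hF : kF (l n) N ≤ (N : ℝ)⁻¹ := by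
        rw [kF, inv_eq_one_div, div_le_div_iff₀ (by positivity) hN0]
        nlinarith [sq_nonneg (l n)]
      rw [Real.norm_of_nonneg (by positivity)]
      refine (mul_le_of_le_one_left hF0 ?_).trans hF
      rw [div_le_one hpi]; linarith [Real.pi_gt_three]
    have h3 := h1.add h2
    have e : 1 / Real.pi * (1 / Real.pi) * (Real.pi / 4) + 0 = 1 / (4 * Real.pi) := by
      field_simp; ring
    rw [e] at h3
    refine h3.congr fun N => ?_
    rw [Finset.mul_sum, ← Finset.sum_add_distrib]
    exact Finset.sum_congr rfl fun n _ => by ring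
  -- The inner series may be replaced by its tail, hence by `kF (l n) N / π`.
  have hdiff : Tendsto (fun N : ℕ =>
      ∑ n ∈ Finset.range N, kW p (l n) * ∑' k, kW p (l k) * kA (l n) (l k) -
      ∑ n ∈ Finset.range N, kW p (l n) * (1 / Real.pi * kF (l n) N)) atTop (𝓝 0) := by
    have htail := (tendsto_sum_nat_add fun k : ℕ => 1 / (k : ℝ) ^ 2).const_mul (6 + p)
    rw [mul_zero] at htail
    refine squeeze_zero_norm' ?_ htail
    filter_upwards [eventually_ge_atTop 1] with N hN
    have hN0 : (0 : ℝ) < N := by exact_mod_cast hN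
    have hsq : ∑ n ∈ Finset.range N, kW p (l n) *
        ∑ k ∈ Finset.range N, kW p (l k) * kA (l n) (l k) = 0 := by
      have hanti : ∑ n ∈ Finset.range N, kW p (l n) *
          ∑ k ∈ Finset.range N, kW p (l k) * kA (l n) (l k) =
          -∑ n ∈ Finset.range N, kW p (l n) *
          ∑ k ∈ Finset.range N, kW p (l k) * kA (l n) (l k) := by
        simp_rw [Finset.mul_sum]
        conv_lhs => rw [Finset.sum_comm]
        simp_rw [← Finset.sum_neg_distrib]
        refine Finset.sum_congr rfl fun n _ => Finset.sum_congr rfl fun k _ => ?_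
        rw [kA, kA, add_comm (l k ^ 2)]
        ring
      linarith
    have hsplit : ∑ n ∈ Finset.range N, kW p (l n) * ∑' k, kW p (l k) * kA (l n) (l k) =
        ∑ n ∈ Finset.range N, kW p (l n) *
          ∑' k, kW p (l (k + N)) * kA (l n) (l (k + N)) := by
      rw [← zero_add (∑ n ∈ Finset.range N, kW p (l n) *
          ∑' k, kW p (l (k + N)) * kA (l n) (l (k + N))), ← hsq, ← Finset.sum_add_distrib]
      refine Finset.sum_congr rfl fun n _ => ?_
      rw [← mul_add, (hl.summable_kA hp (l n)).sum_add_tsum_nat_add N]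
    rw [hsplit, ← Finset.sum_sub_distrib]
    refine (norm_sum_le _ _).trans ?_
    have hb : ∀ n ∈ Finset.range N, ‖kW p (l n) * ∑' k, kW p (l (k + N)) * kA (l n) (l (k + N)) -
        kW p (l n) * (1 / Real.pi * kF (l n) N)‖ ≤
        (6 + p) / N * ∑' k : ℕ, 1 / ((k + N : ℕ) : ℝ) ^ 2 := by
      intro n _
      rw [← mul_sub, norm_mul, Real.norm_of_nonneg (kW_nonneg hp _)]
      exact (mul_le_of_le_one_left (norm_nonneg _) (kW_le_one hp _)).trans (hl.tail_bound hp _ hN)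
    refine (Finset.sum_le_sum hb).trans (le_of_eq ?_)
    rw [Finset.sum_const, Finset.card_range, nsmul_eq_mul]
    field_simp
  have := hdiff.add hR
  simpa using this

/-! ### The summands and the conclusion -/

/-- Since `σ(t) e^{2πt} - 1 = 2 e^{πt} (p sinh πt + t cosh πt) / (p - t)`, the summand of the theorem
is `-(π / 4) kW p t` times the derivative of `kH p` at `t`. -/
lemma kosh_term_eq {p : ℝ} (hp : 0 < p) {t : ℝ} (ht : 0 < t) (hne : t ≠ p) :
    (p ^ 2 + t ^ 2) / (p * (p + 1 / Real.pi) + t ^ 2) *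
        (Real.exp (2 * Real.pi * t) /
          ((p + t) / (p - t) * Real.exp (2 * Real.pi * t) - 1) ^ 2) *
        (Real.pi * ((p + t) / (p - t)) + p / (p - t) ^ 2) =
      Real.pi / 4 * (kW p t * ((Real.pi * p ^ 2 + p - Real.pi * t ^ 2) /
      (p * Real.sinh (Real.pi * t) + t * Real.cosh (Real.pi * t)) ^ 2)) := by
  have hpi := Real.pi_pos
  have hD := kosh_denominator_pos hp ht
  have hpt : p - t ≠ 0 := sub_ne_zero.2 hne.symm
  set D := p * Real.sinh (Real.pi * t) + t * Real.cosh (Real.pi * t) with hDdef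
  have hE := Real.exp_pos (Real.pi * t)
  have e1 : Real.exp (2 * Real.pi * t) = Real.exp (Real.pi * t) ^ 2 := by
    rw [sq, ← Real.exp_add]; ring_nf
  have e2 : (p + t) / (p - t) * Real.exp (2 * Real.pi * t) - 1 =
      2 * Real.exp (Real.pi * t) * D / (p - t) := by
    rw [hDdef, Real.sinh_eq, Real.cosh_eq, Real.exp_neg, e1]
    field_simp
    ring
  have e3 : (p ^ 2 + t ^ 2) / (p * (p + 1 / Real.pi) + t ^ 2) = Real.pi * kW p t := by
    rw [kW]; field_simp
  have e4 : Real.pi * ((p + t) / (p - t)) + p / (p - t) ^ 2 =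
      (Real.pi * p ^ 2 + p - Real.pi * t ^ 2) / (p - t) ^ 2 := by
    field_simp; ring
  rw [e2, e3, e4, e1]
  field_simp
  ring

lemma IsKoshliakov.summable_terms {p : ℝ} (hp : 0 < p) {l : ℕ → ℝ} (hl : IsKoshliakov p l) :
    Summable fun n => kW p (l n) * ((Real.pi * p ^ 2 + p - Real.pi * l n ^ 2) /
      (p * Real.sinh (Real.pi * l n) + l n * Real.cosh (Real.pi * l n)) ^ 2) := by
  have hpi := Real.pi_gt_three
  refine Summable.of_norm_bounded
    (hl.summable_inv_sq.mul_left (4 * (Real.pi * p ^ 2 + p) + Real.pi)) fun n => ?_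
  set t := l n
  have ht : 0 < t := hl.pos n
  have ht2 : 1 / 2 < t := by
    have := (hl n).1
    have : (0 : ℝ) ≤ n := n.cast_nonneg
    linarith
  have hs : Real.pi * t ≤ Real.sinh (Real.pi * t) := Real.self_le_sinh_iff.2 (by positivity)
  have hc : Real.sinh (Real.pi * t) < Real.cosh (Real.pi * t) := Real.sinh_lt_cosh _
  have hD : t ^ 2 ≤ p * Real.sinh (Real.pi * t) + t * Real.cosh (Real.pi * t) := by
    have : 0 ≤ Real.sinh (Real.pi * t) := by nlinarith
    have : t ≤ Real.cosh (Real.pi * t) := by nlinarith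
    nlinarith [mul_nonneg hp.le ‹0 ≤ Real.sinh (Real.pi * t)›]
  have hnum : |Real.pi * p ^ 2 + p - Real.pi * t ^ 2| ≤
      (4 * (Real.pi * p ^ 2 + p) + Real.pi) * t ^ 2 := by
    have h0 : 0 < Real.pi * p ^ 2 + p := by positivity
    have h1 : 1 ≤ 4 * t ^ 2 := by nlinarith
    rw [abs_le]
    constructor <;> nlinarith
  rw [norm_mul, Real.norm_of_nonneg (kW_nonneg hp _)]
  refine (mul_le_of_le_one_left (norm_nonneg _) (kW_le_one hp _)).trans ?_
  rw [Real.norm_eq_abs, abs_div,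
    abs_of_nonneg (sq_nonneg (p * Real.sinh (Real.pi * t) + t * Real.cosh (Real.pi * t)))]
  calc _ ≤ (4 * (Real.pi * p ^ 2 + p) + Real.pi) * t ^ 2 / (t ^ 2) ^ 2 := by gcongr
    _ = _ := by field_simp

theorem schlomilch_formula_koshliakov
    (p : ℝ) (hp : 0 < p) (lam : ℕ → ℝ)
    (hlam : ∀ n : ℕ, 1 ≤ n → (n : ℝ) - 1 / 2 < lam n ∧ lam n < n ∧
      Real.tan (Real.pi * lam n) = -(lam n) / p)
    (hne : ∀ n : ℕ, 1 ≤ n → lam n ≠ p) :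
    (∑' n : ℕ, (p ^ 2 + lam (n + 1) ^ 2) / (p * (p + 1 / Real.pi) + lam (n + 1) ^ 2) *
        (Real.exp (2 * Real.pi * lam (n + 1)) /
          ((p + lam (n + 1)) / (p - lam (n + 1)) * Real.exp (2 * Real.pi * lam (n + 1)) - 1) ^ 2) *
        (Real.pi * ((p + lam (n + 1)) / (p - lam (n + 1))) + p / (p - lam (n + 1)) ^ 2)) =
      Real.pi / 24 *
        (1 + 3 / (Real.pi * p) * (1 + 1 / (Real.pi * p))) / (1 + 1 / (Real.pi * p)) ^ 3
      - 1 / 8 := by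
  have hpi := Real.pi_pos
  set l : ℕ → ℝ := fun n => lam (n + 1) with hldef
  have hl : IsKoshliakov p l := by
    intro n
    obtain ⟨h1, h2, h3⟩ := hlam (n + 1) (by omega)
    push_cast at h1 h2
    have h1' : (n : ℝ) + 1 / 2 < l n := by simp only [hldef]; linarith
    refine ⟨h1', h2, ?_⟩
    have hc : Real.cos (Real.pi * l n) ≠ 0 := by
      have := cos_pi_shift_neg h1' h2
      rw [Real.cos_sub_nat_mul_pi] at this
      intro h
      rw [h, mul_zero] at this
      exact this.false
    change Real.tan (Real.pi * l n) = -(l n) / p at h3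
    rw [Real.tan_eq_sin_div_cos, div_eq_div_iff hc hp.ne'] at h3
    linarith
  have hterm : ∀ n, _ = _ := fun n =>
    kosh_term_eq hp (hl.pos n) (hne (n + 1) (by omega) : l n ≠ p)
  rw [tsum_congr hterm, tsum_mul_left]
  have hlim1 := (hl.summable_terms hp).hasSum.tendsto_sum_nat
  have hs2 : Summable fun k => kW p (l k) / l k ^ 2 := by simpa using hl.summable_kW_div hp 0
  have hlim2 := (hs2.hasSum.tendsto_sum_nat.const_mul (kW p 0)).sub ((hl.double_sum hp).const_mul 2)
  rw [tendsto_nhds_unique hlim1 (hlim2.congr fun N => ?_), hl.tsum_kW_div_sq hp]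
  · have hW0 : kW p 0 = p / (Real.pi * p + 1) := by
      rw [kW]; field_simp; ring
    rw [hW0]
    field_simp
    ring
  · rw [Finset.mul_sum, Finset.mul_sum, ← Finset.sum_sub_distrib]
    refine Finset.sum_congr rfl fun n _ => ?_
    rw [hl.deriv_identity hp (hl.pos n)]
    ring
end
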